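/- For every k ∈ ℕ and every p ∈ [p_k, 1/2), the critical value q_c(p) of anisotropic bond percolation on the slab S^k is strictly positive. -/

import Mathlib

/-!
At `q = 0` the slab splits into `k + 1` disjoint square lattices, which are subcritical for
`p < 1/2`. In the form `φ_p(S) < 1` for some finite `S ∋ 0`, where `φ_p(S)` is the expected number
of open boundary edges of `S` joined to `0` inside `S`, subcriticality is a strict inequality
between polynomials in the weights, so it survives for the cylinder above `S` in the slab for small
`q > 0`. Iterating the Simon–Lieb inequality, the probability of reaching distance `n` then decays
exponentially, whence `θ(p, q) = 0`.

That some `S` satisfies `φ_{p₀}(S) < 1` when `p₀ < 1/2` is proved by contradiction. Otherwise the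
differential inequality of Duminil-Copin and Tassion makes the one-arm probability bounded below at
some `p₁ ∈ (p₀, 1/2)`, so a large box is joined to far away with probability close to one, and by
the square-root trick to each given side of a larger rectangle. For `p ≤ 1/2` this rectangle is, by
duality, not crossed with probability at least `1/2`, so two distinct clusters leave the large box
in opposite directions with probability at least `1/4`. Opening all edges of the box merges them:
with order `n²` disjoint boxes in the box of radius `n`, Russo's formula shows that the expected
number of clusters touching its boundary decreases in `p` at a rate of order `n²` on `[p₁, 1/2]`,
although it is at most of order `n`.
-/

open MeasureTheory Set
open scoped ENNReal

namespace AnisoSlab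

/-! ### A concrete construction of countable products of Bernoulli measures

The product Bernoulli measure on `ι → Bool` (each coordinate `i` open with
probability `P i`, independently) is realized as the pushforward of Lebesgue
measure on `[0,1)`: the binary digits of a uniform sample are i.i.d. fair
coins; regrouping them along a pairing function yields countably many
independent uniform samples, and comparing the `i`-th sample with `P i`
yields the desired independent Bernoulli coordinates. -/

/-- The `n`-th binary digit of `x` (digits after the binary point). -/
noncomputable def binDigit (n : ℕ) (x : ℝ) : Bool :=
  decide (⌊x * 2 ^ (n + 1)⌋ % 2 = 1)

/-- Countably many independent uniform-`[0,1]` samples extracted from a single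
uniform sample `x` on `[0,1)`, by regrouping its binary digits. -/
noncomputable def unifSample (i : ℕ) (x : ℝ) : ℝ :=
  ∑' n : ℕ, if binDigit (Nat.pair i n) x then ((2 : ℝ) ^ (n + 1))⁻¹ else 0

/-- The product Bernoulli measure on `ι → Bool`, coordinate `i` being `true`
with probability `P i`, independently over `i`. -/
noncomputable def bernoulliProduct {ι : Type*} [Encodable ι] (P : ι → ℝ) :
    Measure (ι → Bool) :=
  Measure.map (fun x i => decide (unifSample (Encodable.encode i) x < P i))
    (volume.restrict (Set.Ico (0 : ℝ) 1))

/-! ### The slab `S^k` and anisotropic bond percolation on it -/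

/-- Ambient vertices: `ℤ³`; the slab `S^k` uses those with third coordinate in `{0, …, k}`. -/
abbrev Vtx : Type := ℤ × ℤ × ℤ

/-- The three unit coordinate vectors. -/
def dvec : Fin 3 → Vtx
  | 0 => (1, 0, 0)
  | 1 => (0, 1, 0)
  | 2 => (0, 0, 1)

/-- A bond is indexed by its lower endpoint `v` and a direction `i`; it joins
`v` to `v + dvec i`. Directions `0, 1` give radial (horizontal) bonds, and
direction `2` gives axial (vertical) bonds. -/
abbrev EdgeIdx : Type := Vtx × Fin 3

/-- A percolation configuration: each bond is open (`true`) or closed (`false`). -/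
abbrev Config : Type := EdgeIdx → Bool

/-- `v` is a vertex of the slab `S^k`. -/
def InSlab (k : ℕ) (v : Vtx) : Prop := 0 ≤ v.2.2 ∧ v.2.2 ≤ k

/-- `(v, i)` is a bond of the slab `S^k` (both endpoints lie in the slab). -/
def IsEdge (k : ℕ) (e : EdgeIdx) : Prop := InSlab k e.1 ∧ InSlab k (e.1 + dvec e.2)

/-- The measure `P_{p,q}` on configurations of `S^k`: each radial (horizontal)
bond is open with probability `p` and each axial (vertical) bond is open with
probability `q`, independently. -/
noncomputable def slabMeasure (k : ℕ) (p q : ℝ) : Measure Config :=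
  bernoulliProduct (fun e => if e.2 = 2 then q else p)

/-- `x` and `y` are joined by an open bond of `S^k` in the configuration `ω`. -/
def OpenAdj (k : ℕ) (ω : Config) (x y : Vtx) : Prop :=
  ∃ i : Fin 3,
    (y = x + dvec i ∧ IsEdge k (x, i) ∧ ω (x, i) = true) ∨
    (x = y + dvec i ∧ IsEdge k (y, i) ∧ ω (y, i) = true)

/-- The open cluster of the vertex `x` in the configuration `ω`. -/
def cluster (k : ℕ) (ω : Config) (x : Vtx) : Set Vtx :=
  {y | Relation.ReflTransGen (OpenAdj k ω) x y}

/-- The percolation function `θ(p,q) = P_{p,q}(0 ↔ ∞)`. -/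
noncomputable def theta (k : ℕ) (p q : ℝ) : ℝ≥0∞ :=
  slabMeasure k p q {ω | (cluster k ω 0).Infinite}

/-- `p_k = 1 - (1/2)^{1/(k+1)}`, the horizontal critical value at `q = 1`. -/
noncomputable def pCrit (k : ℕ) : ℝ := 1 - (1 / 2 : ℝ) ^ ((1 : ℝ) / (k + 1))

/-- The critical curve `q_c(p) = sup {q ∈ [0,1] : θ(p,q) = 0}`. -/
noncomputable def qc (k : ℕ) (p : ℝ) : ℝ :=
  sSup {q : ℝ | q ∈ Set.Icc (0 : ℝ) 1 ∧ theta k p q = 0}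

/-- The critical curve `p_c(q) = sup {p ∈ [0,1] : θ(p,q) = 0}`. -/
noncomputable def pc (k : ℕ) (q : ℝ) : ℝ :=
  sSup {p : ℝ | p ∈ Set.Icc (0 : ℝ) 1 ∧ theta k p q = 0}

/-! ### Bernoulli random subsets of a finite set -/

section RandomSubset

variable {α β γ : Type*} [DecidableEq α] [DecidableEq β]

/-- Expectation over the random subset of `F` which contains each `e ∈ F` independently with
probability `P e`, as a linear functional. -/
noncomputable def expect (P : α → ℝ) (F : Finset α) : (Finset α → ℝ) →ₗ[ℝ] ℝ :=
  ∑ A ∈ F.powerset, ((∏ e ∈ A, P e) * ∏ e ∈ F \ A, (1 - P e)) • LinearMap.proj A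

/-- Probability of the event `E` for the random subset of `F` which contains each `e ∈ F`
independently with probability `P e`. -/
noncomputable def prob (P : α → ℝ) (F : Finset α) (E : Set (Finset α)) : ℝ :=
  expect P F (E.indicator 1)

lemma expect_apply (P : α → ℝ) (F : Finset α) (f : Finset α → ℝ) :
    expect P F f = ∑ A ∈ F.powerset, ((∏ e ∈ A, P e) * ∏ e ∈ F \ A, (1 - P e)) * f A := by
  simp [expect]

@[simp]
lemma expect_empty (P : α → ℝ) (f : Finset α → ℝ) : expect P ∅ f = f ∅ := by
  simp [expect_apply]

lemma expect_insert (P : α → ℝ) {a : α} {F : Finset α} (ha : a ∉ F) (f : Finset α → ℝ) :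
    expect P (insert a F) f =
      P a * expect P F (fun A => f (insert a A)) + (1 - P a) * expect P F f := by
  simp only [expect_apply]
  rw [Finset.sum_powerset_insert ha, Finset.mul_sum, Finset.mul_sum, add_comm]
  congr 1 <;> refine Finset.sum_congr rfl fun A hA => ?_
  · have haA : a ∉ A := fun h => ha (Finset.mem_powerset.1 hA h)
    rw [Finset.prod_insert haA, Finset.insert_sdiff_insert, Finset.sdiff_insert_of_notMem ha]
    ring
  · have haA : a ∉ A := fun h => ha (Finset.mem_powerset.1 hA h)
    rw [Finset.insert_sdiff_of_notMem _ haA, Finset.prod_insert (by simp [ha])]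
    ring

lemma expect_congr (P : α → ℝ) {F : Finset α} {f g : Finset α → ℝ} (h : ∀ A ⊆ F, f A = g A) :
    expect P F f = expect P F g := by
  simp only [expect_apply]
  exact Finset.sum_congr rfl fun A hA => by rw [h A (Finset.mem_powerset.1 hA)]

lemma expect_congr_weight {P Q : α → ℝ} {F : Finset α} (h : ∀ e ∈ F, P e = Q e) :
    expect P F = expect Q F := by
  refine Finset.sum_congr rfl fun A hA => ?_
  have prod_open : ∏ e ∈ A, P e = ∏ e ∈ A, Q e :=
    Finset.prod_congr rfl fun e he => h e (Finset.mem_powerset.1 hA he)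
  have prod_closed : ∏ e ∈ F \ A, (1 - P e) = ∏ e ∈ F \ A, (1 - Q e) :=
    Finset.prod_congr rfl fun e he => by rw [h e (Finset.mem_sdiff.1 he).1]
  rw [prod_open, prod_closed]

@[simp]
lemma expect_const (P : α → ℝ) (F : Finset α) (c : ℝ) : expect P F (fun _ => c) = c := by
  induction F using Finset.induction_on with
  | empty => simp
  | insert a F ha ih => rw [expect_insert P ha, ih]; ring

lemma expect_nonneg {P : α → ℝ} (hP : ∀ e, P e ∈ Icc (0 : ℝ) 1) {F : Finset α}
    {f : Finset α → ℝ} (hf : ∀ A ⊆ F, 0 ≤ f A) : 0 ≤ expect P F f := by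
  rw [expect_apply]
  refine Finset.sum_nonneg fun A hA => mul_nonneg (mul_nonneg ?_ ?_)
    (hf A (Finset.mem_powerset.1 hA))
  · exact Finset.prod_nonneg fun e _ => (hP e).1
  · exact Finset.prod_nonneg fun e _ => sub_nonneg.2 (hP e).2

lemma expect_mono {P : α → ℝ} (hP : ∀ e, P e ∈ Icc (0 : ℝ) 1) {F : Finset α}
    {f g : Finset α → ℝ} (h : ∀ A ⊆ F, f A ≤ g A) : expect P F f ≤ expect P F g := by
  rw [← sub_nonneg, ← map_sub]
  exact expect_nonneg hP fun A hA => sub_nonneg.2 (h A hA)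

lemma continuous_expect {X : Type*} [TopologicalSpace X] {P : X → α → ℝ}
    (hP : ∀ e, Continuous fun x => P x e) (F : Finset α) (f : Finset α → ℝ) :
    Continuous fun x => expect (P x) F f := by
  simp only [expect_apply]
  fun_prop

lemma expect_map (P : β → ℝ) (σ : α ↪ β) (F : Finset α) (f : Finset β → ℝ) :
    expect P (F.map σ) f = expect (P ∘ σ) F (fun A => f (A.map σ)) := by
  induction F using Finset.induction_on generalizing f with
  | empty => simp
  | insert a F ha ih =>
    rw [Finset.map_insert, expect_insert _ (by simpa using ha), expect_insert _ ha, ih, ih]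
    simp only [Finset.map_insert, Function.comp_apply]

lemma expect_compl (P : α → ℝ) (F : Finset α) (f : Finset α → ℝ) :
    expect P F (fun A => f (F \ A)) = expect (1 - P) F f := by
  induction F using Finset.induction_on generalizing f with
  | empty => simp
  | insert a F ha ih =>
    have open_a : expect P F (fun A => f (insert a F \ insert a A)) =
        expect P F (fun A => f (F \ A)) := by
      simp only [Finset.insert_sdiff_insert, Finset.sdiff_insert_of_notMem ha]
    have closed_a : expect P F (fun A => f (insert a F \ A)) =
        expect P F (fun A => f (insert a (F \ A))) :=
      expect_congr P fun A hA => by rw [Finset.insert_sdiff_of_notMem _ fun h => ha (hA h)]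
    rw [expect_insert _ ha, expect_insert _ ha, open_a, closed_a, ← ih, ← ih]
    simp only [Pi.sub_apply, Pi.one_apply]
    ring

lemma expect_eq_of_subset {P : α → ℝ} {F F' : Finset α} (hF : F ⊆ F') {f : Finset α → ℝ}
    (h : ∀ e ∈ F', e ∉ F → P e = 0 ∨ ∀ A, f (insert e A) = f A) :
    expect P F' f = expect P F f := by
  have union_eq : ∀ G : Finset α, (∀ e ∈ G, e ∉ F ∧ (P e = 0 ∨ ∀ A, f (insert e A) = f A)) →
      expect P (G ∪ F) f = expect P F f := by
    intro G
    induction G using Finset.induction_on with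
    | empty => simp
    | insert a G ha ih =>
      intro hG
      obtain ⟨haF, ha'⟩ := hG a (Finset.mem_insert_self a G)
      rw [Finset.insert_union, expect_insert P (by simp [ha, haF]),
        ih fun e he => hG e (Finset.mem_insert_of_mem he)]
      rcases ha' with ha' | ha'
      · rw [ha']; ring
      · simp only [ha', ih fun e he => hG e (Finset.mem_insert_of_mem he)]; ring
  rw [← Finset.sdiff_union_of_subset hF]
  refine union_eq _ fun e he => ?_
  rw [Finset.mem_sdiff] at he
  exact ⟨he.2, h e he.1 he.2⟩

/-! #### Independence -/

/-- The value of `f` at a set `A` is determined by `A ∩ s`. -/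
def DependsOnlyOn (f : Finset α → γ) (s : Set α) : Prop :=
  ∀ ⦃A B : Finset α⦄, (∀ e ∈ s, e ∈ A ↔ e ∈ B) → f A = f B

omit [DecidableEq α] in
lemma dependsOnlyOn_mem_iff {E : Set (Finset α)} {s : Set α} :
    DependsOnlyOn (· ∈ E) s ↔
      ∀ ⦃A B : Finset α⦄, (∀ e ∈ s, e ∈ A ↔ e ∈ B) → A ∈ E → B ∈ E :=
  ⟨fun h _ _ hAB => (h hAB).mp, fun h _ _ hAB =>
    propext ⟨h hAB, h fun e he => (hAB e he).symm⟩⟩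

omit [DecidableEq α] in
lemma DependsOnlyOn.indicator {E : Set (Finset α)} {s : Set α} (h : DependsOnlyOn (· ∈ E) s) :
    DependsOnlyOn (E.indicator (1 : Finset α → ℝ)) s := fun A B hAB => by
  classical
  simp only [Set.indicator_apply, Pi.one_apply, h hAB]

omit [DecidableEq α] in
lemma DependsOnlyOn.inter {E E' : Set (Finset α)} {s t : Set α} (h : DependsOnlyOn (· ∈ E) s)
    (h' : DependsOnlyOn (· ∈ E') t) : DependsOnlyOn (· ∈ E ∩ E') (s ∪ t) := fun _ _ hAB =>
  congrArg₂ And (h fun e he => hAB e (Or.inl he)) (h' fun e he => hAB e (Or.inr he))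

lemma DependsOnlyOn.apply_insert {f : Finset α → γ} {s : Set α} (hf : DependsOnlyOn f s) {a : α}
    (ha : a ∉ s) (A : Finset α) : f (insert a A) = f A :=
  hf fun e he => by simp [show e ≠ a from fun h => ha (h ▸ he)]

lemma DependsOnlyOn.comp_insert {f : Finset α → γ} {s : Set α} (hf : DependsOnlyOn f s) (a : α) :
    DependsOnlyOn (fun A => f (insert a A)) s :=
  fun _ _ h => hf fun e he => by simp [h e he]

lemma DependsOnlyOn.expect_eq (P : α → ℝ) {F F' : Finset α} (hF : F ⊆ F') {f : Finset α → ℝ}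
    {s : Set α} (hf : DependsOnlyOn f s) (hs : ∀ e ∈ F', e ∈ s → e ∈ F) :
    expect P F' f = expect P F f :=
  expect_eq_of_subset hF fun e he heF => Or.inr (hf.apply_insert fun hes => heF (hs e he hes))

lemma expect_mul_of_disjoint (P : α → ℝ) (F : Finset α) {s t : Set α} (hst : Disjoint s t)
    {f g : Finset α → ℝ} (hf : DependsOnlyOn f s) (hg : DependsOnlyOn g t) :
    expect P F (f * g) = expect P F f * expect P F g := by
  induction F using Finset.induction_on generalizing f g with
  | empty => simp
  | insert a F ha ih =>
    have ih_insert := ih (hf.comp_insert a) (hg.comp_insert a)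
    have split_mul : (fun A => (f * g) (insert a A)) =
      (fun A => f (insert a A)) * fun A => g (insert a A) := rfl
    rw [expect_insert P ha, expect_insert P ha f, expect_insert P ha g, ih hf hg, split_mul,
      ih_insert]
    by_cases hs : a ∈ s
    · simp only [hg.apply_insert (disjoint_left.1 hst hs)]; ring
    · simp only [hf.apply_insert hs]; ring

/-! #### Monotonicity, correlation and Russo's formula -/

lemma expect_mono_weight {P Q : α → ℝ} (hP : ∀ e, P e ∈ Icc (0 : ℝ) 1)
    (hQ : ∀ e, Q e ∈ Icc (0 : ℝ) 1) (hPQ : P ≤ Q) (F : Finset α) {f : Finset α → ℝ}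
    (hf : Monotone f) : expect P F f ≤ expect Q F f := by
  induction F using Finset.induction_on generalizing f with
  | empty => simp
  | insert a F ha ih =>
    have hf_insert : Monotone (fun A => f (insert a A)) :=
      fun A B h => hf (Finset.insert_subset_insert a h)
    have closed_le_open : expect P F f ≤ expect P F (fun A => f (insert a A)) :=
      expect_mono hP fun A _ => hf (Finset.subset_insert a A)
    rw [expect_insert P ha, expect_insert Q ha]
    calc P a * expect P F (fun A => f (insert a A)) + (1 - P a) * expect P F f
        ≤ Q a * expect P F (fun A => f (insert a A)) + (1 - Q a) * expect P F f := by
          nlinarith [mul_le_mul_of_nonneg_left closed_le_open (sub_nonneg.2 (hPQ a))]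
      _ ≤ _ := add_le_add (mul_le_mul_of_nonneg_left (ih hf_insert) (hQ a).1)
          (mul_le_mul_of_nonneg_left (ih hf) (sub_nonneg.2 (hQ a).2))

/-- The Harris–FKG inequality, by induction on the coordinates: conditioning on one coordinate
reduces it to Chebyshev's inequality for a two-point space. -/
lemma expect_mul_expect_le_expect_mul {P : α → ℝ} (hP : ∀ e, P e ∈ Icc (0 : ℝ) 1)
    (F : Finset α) {f g : Finset α → ℝ} (hf : Antitone f) (hg : Antitone g) :
    expect P F f * expect P F g ≤ expect P F (f * g) := by
  induction F using Finset.induction_on generalizing f g with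
  | empty => simp
  | insert a F ha ih =>
    have antitone_insert {h : Finset α → ℝ} (hh : Antitone h) :
        Antitone fun A => h (insert a A) := fun A B hAB => hh (Finset.insert_subset_insert a hAB)
    have open_le_closed {h : Finset α → ℝ} (hh : Antitone h) :
        expect P F (fun A => h (insert a A)) ≤ expect P F h :=
      expect_mono hP fun A _ => hh (Finset.subset_insert a A)
    have chebyshev : 0 ≤ P a * (1 - P a) *
        ((expect P F f - expect P F fun A => f (insert a A)) *
          (expect P F g - expect P F fun A => g (insert a A))) :=
      mul_nonneg (mul_nonneg (hP a).1 (sub_nonneg.2 (hP a).2))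
        (mul_nonneg (sub_nonneg.2 (open_le_closed hf)) (sub_nonneg.2 (open_le_closed hg)))
    have ih_open := mul_le_mul_of_nonneg_left (ih (antitone_insert hf) (antitone_insert hg))
      (hP a).1
    have ih_closed := mul_le_mul_of_nonneg_left (ih hf hg) (sub_nonneg.2 (hP a).2)
    have split_mul : (fun A => (f * g) (insert a A)) =
      (fun A => f (insert a A)) * fun A => g (insert a A) := rfl
    rw [expect_insert P ha f, expect_insert P ha g, expect_insert P ha, split_mul]
    nlinarith

/-- The discrete derivative of `f` in the coordinate `e`; for the indicator of an increasing event
it is the indicator of `e` being pivotal. -/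
def discreteDeriv (e : α) (f : Finset α → ℝ) (A : Finset α) : ℝ := f (insert e A) - f (A.erase e)

lemma hasDerivAt_expect (F : Finset α) (f : Finset α → ℝ) (p : ℝ) :
    HasDerivAt (fun p => expect (fun _ => p) F f)
      (∑ e ∈ F, expect (fun _ => p) F (discreteDeriv e f)) p := by
  induction F using Finset.induction_on generalizing f with
  | empty => simpa using hasDerivAt_const p (f ∅)
  | insert a F ha ih =>
    simp only [expect_insert _ ha f]
    refine (((hasDerivAt_id' p).mul (ih fun A => f (insert a A))).add
      (((hasDerivAt_id' p).const_sub 1).mul (ih f))).congr_deriv ?_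
    have deriv_a : expect (fun _ => p) (insert a F) (discreteDeriv a f) =
        expect (fun _ => p) F (fun A => f (insert a A)) - expect (fun _ => p) F f := by
      have hclosed : expect (fun _ => p) F (discreteDeriv a f) =
          expect (fun _ => p) F ((fun A => f (insert a A)) - f) :=
        expect_congr _ fun A hA => by
          simp [discreteDeriv, Finset.erase_eq_of_notMem fun h => ha (hA h)]
      have hopen : expect (fun _ => p) F (fun A => discreteDeriv a f (insert a A)) =
          expect (fun _ => p) F ((fun A => f (insert a A)) - f) :=
        expect_congr _ fun A hA => by
          simp [discreteDeriv, Finset.erase_insert fun h => ha (hA h)]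
      rw [expect_insert _ ha, hopen, hclosed, map_sub]
      ring
    have deriv_insert : ∀ e ∈ F, expect (fun _ => p) (insert a F) (discreteDeriv e f) =
        p * expect (fun _ => p) F (discreteDeriv e fun A => f (insert a A)) +
          (1 - p) * expect (fun _ => p) F (discreteDeriv e f) := fun e he => by
      have hne : a ≠ e := fun h => ha (h ▸ he)
      rw [expect_insert _ ha]
      simp only [discreteDeriv, Finset.insert_comm e a, Finset.erase_insert_of_ne hne]
      rfl
    rw [Finset.sum_insert ha, deriv_a, Finset.sum_congr rfl deriv_insert, Finset.sum_add_distrib,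
      ← Finset.mul_sum, ← Finset.mul_sum]
    ring

lemma prob_nonneg {P : α → ℝ} (hP : ∀ e, P e ∈ Icc (0 : ℝ) 1) (F : Finset α)
    (E : Set (Finset α)) : 0 ≤ prob P F E :=
  expect_nonneg hP fun _ _ => Set.indicator_apply_nonneg fun _ => zero_le_one

lemma prob_mono {P : α → ℝ} (hP : ∀ e, P e ∈ Icc (0 : ℝ) 1) {F : Finset α}
    {E E' : Set (Finset α)} (h : ∀ A ⊆ F, A ∈ E → A ∈ E') : prob P F E ≤ prob P F E' := by
  classical
  refine expect_mono hP fun A hA => ?_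
  by_cases hE : A ∈ E
  · simp [hE, h A hA hE]
  · rw [Set.indicator_of_notMem hE]
    exact Set.indicator_apply_nonneg fun _ => zero_le_one

lemma prob_congr {P : α → ℝ} {F : Finset α} {E E' : Set (Finset α)}
    (h : ∀ A ⊆ F, A ∈ E ↔ A ∈ E') : prob P F E = prob P F E' := by
  classical
  exact expect_congr P fun A hA => by simp only [Set.indicator_apply, h A hA]

lemma prob_compl (P : α → ℝ) (F : Finset α) (E : Set (Finset α)) :
    prob P F Eᶜ = 1 - prob P F E := by
  rw [prob, prob, Set.indicator_compl, map_sub, show (1 : Finset α → ℝ) = fun _ => 1 from rfl,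
    expect_const]

lemma prob_le_one {P : α → ℝ} (hP : ∀ e, P e ∈ Icc (0 : ℝ) 1) (F : Finset α)
    (E : Set (Finset α)) : prob P F E ≤ 1 := by
  linarith [prob_compl P F E, prob_nonneg hP F Eᶜ]

lemma prob_le_sum {ι : Type*} {P : α → ℝ} (hP : ∀ e, P e ∈ Icc (0 : ℝ) 1) {F : Finset α}
    {E : Set (Finset α)} {s : Finset ι} {E' : ι → Set (Finset α)}
    (h : ∀ A ⊆ F, A ∈ E → ∃ i ∈ s, A ∈ E' i) : prob P F E ≤ ∑ i ∈ s, prob P F (E' i) := by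
  classical
  simp only [prob]
  rw [← map_sum]
  refine expect_mono hP fun A hA => ?_
  have indicator_nonneg : ∀ i ∈ s, 0 ≤ (E' i).indicator (1 : Finset α → ℝ) A :=
    fun i _ => Set.indicator_apply_nonneg fun _ => zero_le_one
  rw [Finset.sum_apply]
  by_cases hE : A ∈ E
  · obtain ⟨i, hi, hAi⟩ := h A hA hE
    calc E.indicator (1 : Finset α → ℝ) A = (E' i).indicator 1 A := by simp [hE, hAi]
      _ ≤ _ := Finset.single_le_sum indicator_nonneg hi
  · simpa [hE] using Finset.sum_nonneg indicator_nonneg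

lemma sum_prob_le {P : α → ℝ} (hP : ∀ e, P e ∈ Icc (0 : ℝ) 1) {F : Finset α}
    {E : Set (Finset α)} {s : Finset γ} {E' : γ → Set (Finset α)}
    (hdisj : (s : Set γ).PairwiseDisjoint E') (hE : ∀ c ∈ s, E' c ⊆ E) :
    ∑ c ∈ s, prob P F (E' c) ≤ prob P F E := by
  classical
  simp only [prob]
  rw [← map_sum]
  refine expect_mono hP fun A _ => ?_
  rw [Finset.sum_apply]
  by_cases hA : ∃ c ∈ s, A ∈ E' c
  · obtain ⟨c, hc, hAc⟩ := hA
    have other_eq_zero : ∀ b ∈ s, b ≠ c → (E' b).indicator (1 : Finset α → ℝ) A = 0 :=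
      fun b hb hbc => Set.indicator_of_notMem
        (fun hAb => disjoint_left.1 (hdisj hb hc hbc) hAb hAc) _
    rw [Finset.sum_eq_single_of_mem c hc other_eq_zero]
    simp [hAc, hE c hc hAc]
  · push Not at hA
    rw [Finset.sum_eq_zero fun c hc => Set.indicator_of_notMem (hA c hc) _]
    exact Set.indicator_apply_nonneg fun _ => zero_le_one

lemma prob_inter_of_disjoint (P : α → ℝ) (F : Finset α) {s t : Set α} (hst : Disjoint s t)
    {E E' : Set (Finset α)} (hE : DependsOnlyOn (· ∈ E) s) (hE' : DependsOnlyOn (· ∈ E') t) :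
    prob P F (E ∩ E') = prob P F E * prob P F E' := by
  rw [prob, Set.inter_indicator_one]
  exact expect_mul_of_disjoint P F hst hE.indicator hE'.indicator

omit [DecidableEq α] in
lemma monotone_indicator_one {E : Set (Finset α)} (hE : IsUpperSet E) :
    Monotone (E.indicator (1 : Finset α → ℝ)) := fun A B hAB => by
  by_cases hA : A ∈ E
  · simp [hA, hE hAB hA]
  · rw [Set.indicator_of_notMem hA]
    exact Set.indicator_apply_nonneg fun _ => zero_le_one

lemma prob_mono_weight {P Q : α → ℝ} (hP : ∀ e, P e ∈ Icc (0 : ℝ) 1)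
    (hQ : ∀ e, Q e ∈ Icc (0 : ℝ) 1) (hPQ : P ≤ Q) (F : Finset α) {E : Set (Finset α)}
    (hE : IsUpperSet E) : prob P F E ≤ prob Q F E :=
  expect_mono_weight hP hQ hPQ F (monotone_indicator_one hE)

lemma discreteDeriv_indicator_nonneg {E : Set (Finset α)} (hE : IsUpperSet E) (e : α)
    (A : Finset α) : 0 ≤ discreteDeriv e (E.indicator 1) A :=
  sub_nonneg.2 (monotone_indicator_one hE
    ((Finset.erase_subset e A).trans (Finset.subset_insert e A)))

lemma prob_mul_prob_le_prob_inter {P : α → ℝ} (hP : ∀ e, P e ∈ Icc (0 : ℝ) 1) (F : Finset α)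
    {E E' : Set (Finset α)} (hE : IsLowerSet E) (hE' : IsLowerSet E') :
    prob P F E * prob P F E' ≤ prob P F (E ∩ E') := by
  have antitone_indicator {E : Set (Finset α)} (hE : IsLowerSet E) :
      Antitone (E.indicator (1 : Finset α → ℝ)) := fun A B hAB => by
    have := monotone_indicator_one hE.compl hAB
    simp only [Set.indicator_compl, Pi.sub_apply] at this
    exact sub_le_sub_iff_left _ |>.1 this
  rw [prob, prob, prob, Set.inter_indicator_one]
  exact expect_mul_expect_le_expect_mul hP F (antitone_indicator hE) (antitone_indicator hE')

lemma prob_mem_le {P : α → ℝ} (hP : ∀ e, P e ∈ Icc (0 : ℝ) 1) (F : Finset α) (a : α) :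
    prob P F {A | a ∈ A} ≤ P a := by
  classical
  by_cases ha : a ∈ F
  · have hdep : DependsOnlyOn (· ∈ {A : Finset α | a ∈ A}) {a} := fun _ _ h => propext (h a rfl)
    rw [prob, hdep.indicator.expect_eq P (Finset.singleton_subset_iff.2 ha) (by simp),
      ← insert_empty_eq, expect_insert P (Finset.notMem_empty a)]
    simp
  · have never : prob P F {A | a ∈ A} = prob P F ∅ :=
      prob_congr fun A hA => iff_of_false (fun h => ha (hA h)) (Set.notMem_empty A)
    rw [never, prob, Set.indicator_empty, expect_const]
    exact (hP a).1

lemma prob_inter_le_add_sub {P : α → ℝ} (hP : ∀ e, P e ∈ Icc (0 : ℝ) 1) {F : Finset α}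
    {E E' D D' : Set (Finset α)} (hE : ∀ A ⊆ F, A ∈ E → A ∈ E') (hD : ∀ A ⊆ F, A ∈ D → A ∈ D') :
    prob P F (E' ∩ D') ≤
      prob P F (E ∩ D) + (prob P F E' - prob P F E) + (prob P F D' - prob P F D) := by
  simp only [prob, ← map_sub, ← map_add]
  refine expect_mono hP fun A hA => ?_
  have := hE A hA
  have := hD A hA
  by_cases h₁ : A ∈ E <;> by_cases h₂ : A ∈ D <;> by_cases h₁' : A ∈ E' <;>
    by_cases h₂' : A ∈ D' <;> simp_all

/-! #### Finite modifications -/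

lemma mul_expect_insert_le {P : α → ℝ} (hP : ∀ e, P e ∈ Icc (0 : ℝ) 1) {F : Finset α} {a : α}
    (ha : a ∈ F) {f : Finset α → ℝ} (hf : ∀ A, 0 ≤ f A) :
    P a * expect P F (fun A => f (insert a A)) ≤ expect P F f := by
  rw [← Finset.insert_erase ha, expect_insert P (Finset.notMem_erase a F),
    expect_insert P (Finset.notMem_erase a F)]
  simp only [Finset.insert_idem]
  have := expect_nonneg hP (F := F.erase a) fun A _ => hf A
  linarith [mul_nonneg (sub_nonneg.2 (hP a).2) this]

lemma pow_card_mul_expect_union_le {p : ℝ} (hp : p ∈ Icc (0 : ℝ) 1) {F D : Finset α}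
    (hD : D ⊆ F) {f : Finset α → ℝ} (hf : ∀ A, 0 ≤ f A) :
    p ^ D.card * expect (fun _ => p) F (fun A => f (A ∪ D)) ≤ expect (fun _ => p) F f := by
  induction D using Finset.induction_on generalizing f with
  | empty => simp
  | insert a D ha ih =>
    rw [Finset.card_insert_of_notMem ha, pow_succ', mul_assoc]
    simp only [Finset.union_insert]
    calc p * (p ^ D.card * expect (fun _ => p) F fun A => f (insert a (A ∪ D)))
        ≤ p * expect (fun _ => p) F fun A => f (insert a A) :=
          mul_le_mul_of_nonneg_left (ih ((Finset.subset_insert a D).trans hD)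
            fun A => hf (insert a A)) hp.1
      _ ≤ expect (fun _ => p) F f :=
          mul_expect_insert_le (fun _ => hp) (hD (Finset.mem_insert_self a D)) hf

lemma discreteDeriv_nonpos {f : Finset α → ℝ} (hf : Antitone f) (e : α) (A : Finset α) :
    discreteDeriv e f A ≤ 0 :=
  sub_nonpos.2 (hf ((A.erase_subset e).trans (A.subset_insert e)))

/-- Adding the elements of `D` one at a time, each loss is a discrete derivative at a modified
configuration, and the modification costs at most a factor `p ^ D.card`. -/
lemma sum_expect_discreteDeriv_le {p : ℝ} (hp : p ∈ Icc (0 : ℝ) 1) {F D : Finset α} (hD : D ⊆ F)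
    {f : Finset α → ℝ} (hf : Antitone f) :
    ∑ e ∈ D, expect (fun _ => p) F (discreteDeriv e f) ≤
      -(p ^ D.card * expect (fun _ => p) F (fun A => f A - f (A ∪ D))) := by
  induction D using Finset.induction_on with
  | empty => simp
  | insert a D ha ih =>
    have hD' := (Finset.subset_insert a D).trans hD
    set lossD := expect (fun _ => p) F (fun A => f A - f (A ∪ D))
    set lossa := expect (fun _ => p) F (fun A => -discreteDeriv a f (A ∪ D))
    have loss_le : expect (fun _ => p) F (fun A => f A - f (A ∪ insert a D)) ≤ lossD + lossa := by
      rw [← map_add]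
      refine expect_mono (fun _ => hp) fun A _ => ?_
      simp only [Finset.union_insert, Pi.add_apply, discreteDeriv]
      linarith [hf (Finset.erase_subset a (A ∪ D))]
    have lossD_nonneg : 0 ≤ lossD := expect_nonneg (fun _ => hp) fun A _ =>
      sub_nonneg.2 (hf Finset.subset_union_left)
    have lossa_nonneg : 0 ≤ lossa := expect_nonneg (fun _ => hp) fun A _ =>
      neg_nonneg.2 (discreteDeriv_nonpos hf a _)
    have lossa_le : p ^ D.card * lossa ≤ -expect (fun _ => p) F (discreteDeriv a f) := by
      rw [← map_neg]
      exact pow_card_mul_expect_union_le hp hD' fun A => neg_nonneg.2 (discreteDeriv_nonpos hf a A)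
    rw [Finset.sum_insert ha, Finset.card_insert_of_notMem ha, le_neg]
    calc p ^ (D.card + 1) * _ ≤ p ^ (D.card + 1) * (lossD + lossa) :=
          mul_le_mul_of_nonneg_left loss_le (pow_nonneg hp.1 _)
      _ ≤ p ^ D.card * (lossD + lossa) := mul_le_mul_of_nonneg_right
          (pow_le_pow_of_le_one hp.1 hp.2 (Nat.le_succ _)) (add_nonneg lossD_nonneg lossa_nonneg)
      _ ≤ _ := by linarith [ih hD', mul_add (p ^ D.card) lossD lossa]

lemma sum_expect_discreteDeriv_le_of_pairwiseDisjoint {ι : Type*} {p : ℝ} (hp : p ∈ Icc (0 : ℝ) 1)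
    {F : Finset α} {s : Finset ι} {D : ι → Finset α} (hD : ∀ i ∈ s, D i ⊆ F)
    (hdisj : (s : Set ι).PairwiseDisjoint D) {f : Finset α → ℝ} (hf : Antitone f) :
    ∑ e ∈ F, expect (fun _ => p) F (discreteDeriv e f) ≤
      ∑ i ∈ s, -(p ^ (D i).card * expect (fun _ => p) F (fun A => f A - f (A ∪ D i))) := by
  calc ∑ e ∈ F, expect (fun _ => p) F (discreteDeriv e f)
      ≤ ∑ e ∈ s.biUnion D, expect (fun _ => p) F (discreteDeriv e f) := by
        refine le_of_neg_le_neg ?_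
        simp only [← Finset.sum_neg_distrib, ← map_neg]
        exact Finset.sum_le_sum_of_subset_of_nonneg (Finset.biUnion_subset.2 hD) fun e _ _ =>
          expect_nonneg (fun _ => hp) fun A _ => neg_nonneg.2 (discreteDeriv_nonpos hf e A)
    _ = ∑ i ∈ s, ∑ e ∈ D i, expect (fun _ => p) F (discreteDeriv e f) := Finset.sum_biUnion hdisj
    _ ≤ _ := Finset.sum_le_sum fun i hi => sum_expect_discreteDeriv_le hp (hD i hi) hf

end RandomSubset

/-! ### Connectivity in finite edge configurations -/

section Connectivity

variable {V V' : Type*} {ω ω' : Finset (Sym2 V)} {S T : Set V} {x y z : V}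

/-- `x` and `y` are joined by a path of edges of `ω`. -/
def Conn (ω : Finset (Sym2 V)) : V → V → Prop :=
  Relation.ReflTransGen fun a b => s(a, b) ∈ ω

/-- `x` is joined to some point of `T` by a path of edges of `ω`. -/
def ConnTo (ω : Finset (Sym2 V)) (x : V) (T : Set V) : Prop := ∃ t ∈ T, Conn ω x t

open Classical in
/-- The edges of `ω` with both endpoints in `S`. -/
noncomputable def restrict (ω : Finset (Sym2 V)) (S : Set V) : Finset (Sym2 V) :=
  ω.filter fun e => ∀ v ∈ e, v ∈ S

lemma mem_restrict {e : Sym2 V} : e ∈ restrict ω S ↔ e ∈ ω ∧ ∀ v ∈ e, v ∈ S := by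
  simp [restrict]

lemma mk_mem_restrict : s(x, y) ∈ restrict ω S ↔ s(x, y) ∈ ω ∧ x ∈ S ∧ y ∈ S := by
  simp [restrict]

lemma restrict_subset (ω : Finset (Sym2 V)) (S : Set V) : restrict ω S ⊆ ω :=
  fun _ h => (mem_restrict.1 h).1

lemma restrict_congr (h : ∀ e : Sym2 V, (∀ v ∈ e, v ∈ S) → (e ∈ ω ↔ e ∈ ω')) :
    restrict ω S = restrict ω' S := by
  ext e
  rw [mem_restrict, mem_restrict, and_congr_left (h e)]

lemma Conn.refl (ω : Finset (Sym2 V)) (x : V) : Conn ω x x := Relation.ReflTransGen.refl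

lemma Conn.trans (h : Conn ω x y) (h' : Conn ω y z) : Conn ω x z :=
  Relation.ReflTransGen.trans h h'

lemma Conn.single (h : s(x, y) ∈ ω) : Conn ω x y := Relation.ReflTransGen.single h

lemma Conn.symm (h : Conn ω x y) : Conn ω y x := by
  induction h with
  | refl => exact Conn.refl _ _
  | tail _ hbc ih => exact (Conn.single (Sym2.eq_swap ▸ hbc)).trans ih

lemma Conn.mono (h : ω ⊆ ω') (hxy : Conn ω x y) : Conn ω' x y :=
  Relation.ReflTransGen.mono (fun _ _ hab => h hab) _ _ hxy

lemma Conn.mem_of_closed (h : Conn ω x y) (hS : ∀ a ∈ S, ∀ b, s(a, b) ∈ ω → b ∈ S) (hx : x ∈ S) :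
    y ∈ S := by
  induction h with
  | refl => exact hx
  | tail _ hbc ih => exact hS _ ih _ hbc

lemma Conn.restrict_of_closed (h : Conn ω x y) (hS : ∀ a ∈ S, ∀ b, s(a, b) ∈ ω → b ∈ S)
    (hx : x ∈ S) : Conn (restrict ω S) x y := by
  refine (h.mem_of_closed (S := {y | y ∈ S ∧ Conn (restrict ω S) x y}) ?_ ⟨hx, Conn.refl _ _⟩).2
  exact fun a ⟨ha, hxa⟩ b hab =>
    ⟨hS a ha b hab, hxa.trans (Conn.single (mk_mem_restrict.2 ⟨hab, ha, hS a ha b hab⟩))⟩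

lemma Conn.mem_of_restrict (h : Conn (restrict ω S) x y) (hx : x ∈ S) : y ∈ S :=
  h.mem_of_closed (fun _ _ _ hab => (mk_mem_restrict.1 hab).2.2) hx

lemma Conn.connTo (h : Conn ω x y) (hy : ConnTo ω y T) : ConnTo ω x T :=
  let ⟨t, ht, hyt⟩ := hy; ⟨t, ht, h.trans hyt⟩

lemma connTo_of_mem (ω : Finset (Sym2 V)) (hx : x ∈ T) : ConnTo ω x T := ⟨x, hx, Conn.refl _ _⟩

lemma ConnTo.mono (h : ω ⊆ ω') (hx : ConnTo ω x T) : ConnTo ω' x T :=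
  let ⟨t, ht, hxt⟩ := hx; ⟨t, ht, hxt.mono h⟩

lemma isUpperSet_connTo (x : V) (T : Set V) : IsUpperSet {ω : Finset (Sym2 V) | ConnTo ω x T} :=
  fun _ _ h => ConnTo.mono h

lemma isUpperSet_conn (x y : V) : IsUpperSet {ω : Finset (Sym2 V) | Conn ω x y} :=
  fun _ _ h => Conn.mono h

lemma Conn.exists_last_exit (h : Conn ω x y) (hx : x ∈ S) (hy : y ∉ S) :
    ∃ a ∈ S, ∃ b, b ∉ S ∧ s(a, b) ∈ ω ∧ Conn (restrict ω Sᶜ) b y := by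
  have avoids_or_exits : ∀ z, Conn ω z y → (z ∉ S ∧ Conn (restrict ω Sᶜ) z y) ∨
      ∃ a ∈ S, ∃ b, b ∉ S ∧ s(a, b) ∈ ω ∧ Conn (restrict ω Sᶜ) b y := fun z hz => by
    induction hz using Relation.ReflTransGen.head_induction_on with
    | refl => exact Or.inl ⟨hy, Conn.refl _ _⟩
    | @head a b hab _ ih =>
      rcases ih with ⟨hb, hby⟩ | ih
      · by_cases ha : a ∈ S
        · exact Or.inr ⟨a, ha, b, hb, hab, hby⟩
        · exact Or.inl ⟨ha, (Conn.single (mk_mem_restrict.2 ⟨hab, ha, hb⟩)).trans hby⟩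
      · exact Or.inr ih
  exact (avoids_or_exits x h).resolve_left fun h => h.1 hx

lemma Conn.exists_first_exit (h : Conn ω x y) (hx : x ∈ S) (hy : y ∉ S) :
    ∃ a ∈ S, ∃ b, b ∉ S ∧ s(a, b) ∈ ω ∧ Conn (restrict ω S) x a := by
  obtain ⟨b, hb, a, ha, hba, hax⟩ := h.symm.exists_last_exit (S := Sᶜ) hy (not_not.2 hx)
  rw [compl_compl] at hax
  exact ⟨a, not_not.1 ha, b, hb, Sym2.eq_swap ▸ hba, hax.symm⟩

lemma dependsOnlyOn_restrict {γ : Type*} (S : Set V) (f : Finset (Sym2 V) → γ) :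
    DependsOnlyOn (fun ω => f (restrict ω S)) {e : Sym2 V | ∀ v ∈ e, v ∈ S} :=
  fun _ _ h => congrArg f (restrict_congr h)

lemma mk_mem_map {ψ : V ↪ V'} : s(ψ x, ψ y) ∈ ω.map ψ.sym2Map ↔ s(x, y) ∈ ω := by
  rw [← Finset.mem_map' ψ.sym2Map, Function.Embedding.sym2Map_apply, Sym2.map_mk]

lemma conn_map_iff {ψ : V ↪ V'} : Conn (ω.map ψ.sym2Map) (ψ x) (ψ y) ↔ Conn ω x y := by
  refine ⟨fun h => ?_, fun h => ?_⟩
  swap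
  · induction h with
    | refl => exact Conn.refl _ _
    | tail _ hbc ih => exact ih.trans (Conn.single (mk_mem_map.2 hbc))
  have range_closed : ∀ a ∈ ψ '' {a | Conn ω x a}, ∀ b, s(a, b) ∈ ω.map ψ.sym2Map →
      b ∈ ψ '' {a | Conn ω x a} := by
    rintro _ ⟨a, ha, rfl⟩ b hab
    obtain ⟨e, -, he⟩ := Finset.mem_map.1 hab
    have hb : b ∈ Sym2.map ψ e := by
      rw [← Function.Embedding.sym2Map_apply, he]; exact Sym2.mem_mk_right _ _
    obtain ⟨c, -, rfl⟩ := Sym2.mem_map.1 hb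
    exact ⟨c, ha.trans (Conn.single (mk_mem_map.1 hab)), rfl⟩
  obtain ⟨a, ha, hay⟩ := h.mem_of_closed range_closed ⟨x, Conn.refl _ _, rfl⟩
  exact ψ.injective hay ▸ ha

open Classical in
/-- The cluster of `o` in the configuration `ω` restricted to `S`. -/
noncomputable def clusterIn (S : Finset V) (o : V) (ω : Finset (Sym2 V)) : Finset V :=
  S.filter fun x => Conn (restrict ω S) o x

lemma mem_clusterIn {S : Finset V} {o : V} :
    x ∈ clusterIn S o ω ↔ x ∈ S ∧ Conn (restrict ω S) o x := by simp [clusterIn]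

lemma clusterIn_subset (S : Finset V) (o : V) (ω : Finset (Sym2 V)) : clusterIn S o ω ⊆ S :=
  fun _ h => (mem_clusterIn.1 h).1

lemma clusterIn_eq_iff {S : Finset V} {o : V} (ho : o ∈ S) {C : Finset V} :
    clusterIn S o ω = C ↔ (C ⊆ S ∧ o ∈ C) ∧ (∀ x ∈ C, Conn (restrict ω C) o x) ∧
      ∀ x ∈ C, ∀ y ∈ S, s(x, y) ∈ ω → y ∈ C := by
  constructor
  · rintro rfl
    refine ⟨⟨clusterIn_subset S o ω, mem_clusterIn.2 ⟨ho, Conn.refl _ _⟩⟩, fun x hx => ?_,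
      fun x hx y hy hxy => ?_⟩
    · have conn_in_cluster : ∀ y, Conn (restrict ω S) o y →
          Conn (restrict ω (clusterIn S o ω)) o y := fun y hy => by
        induction hy with
        | refl => exact Conn.refl _ _
        | @tail b c hob hbc ih =>
          obtain ⟨hω, hb, hc⟩ := mk_mem_restrict.1 hbc
          exact ih.trans (Conn.single (mk_mem_restrict.2 ⟨hω, mem_clusterIn.2 ⟨hb, hob⟩,
            mem_clusterIn.2 ⟨hc, hob.trans (Conn.single hbc)⟩⟩))
      exact conn_in_cluster x (mem_clusterIn.1 hx).2
    · obtain ⟨hxS, hox⟩ := mem_clusterIn.1 hx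
      exact mem_clusterIn.2 ⟨hy, hox.trans (Conn.single (mk_mem_restrict.2 ⟨hxy, hxS, hy⟩))⟩
  · rintro ⟨⟨hCS, hoC⟩, hconn, hclosed⟩
    ext x
    refine ⟨fun hx => ?_, fun hx => mem_clusterIn.2 ⟨hCS hx, (hconn x hx).mono fun e he => ?_⟩⟩
    · refine (mem_clusterIn.1 hx).2.mem_of_closed (S := C) (fun a ha b hab => ?_) hoC
      obtain ⟨hω, -, hb⟩ := mk_mem_restrict.1 hab
      exact hclosed a ha b hb hω
    · obtain ⟨hω, he⟩ := mem_restrict.1 he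
      exact mem_restrict.2 ⟨hω, fun v hv => hCS (he v hv)⟩

lemma dependsOnlyOn_clusterIn_eq {S : Finset V} {o : V} (ho : o ∈ S) (C : Finset V) :
    DependsOnlyOn (· ∈ {ω | clusterIn S o ω = C})
      {e : Sym2 V | (∀ v ∈ e, v ∈ S) ∧ ∃ v ∈ e, v ∈ C} := by
  refine dependsOnlyOn_mem_iff.2 fun A B hAB hA => ?_
  obtain ⟨⟨hCS, hoC⟩, hconn, hclosed⟩ := (clusterIn_eq_iff ho).1 hA
  refine (clusterIn_eq_iff ho).2 ⟨⟨hCS, hoC⟩, ?_, fun x hx y hy hxy => hclosed x hx y hy ?_⟩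
  · have same_restrict : restrict A (C : Set V) = restrict B C := restrict_congr fun e he =>
      hAB e ⟨fun v hv => hCS (he v hv), e.out.1, Sym2.out_fst_mem e, he _ (Sym2.out_fst_mem e)⟩
    rwa [← same_restrict]
  · refine (hAB _ ⟨fun v hv => ?_, x, Sym2.mem_mk_left x y, hx⟩).2 hxy
    rcases Sym2.mem_iff.1 hv with rfl | rfl
    exacts [hCS hx, hy]

open Classical in
/-- The vertices of `W` which are not joined to `T`. -/
noncomputable def notConnTo (W : Finset V) (T : Set V) (ω : Finset (Sym2 V)) : Finset V :=
  W.filter fun x => ¬ ConnTo ω x T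

lemma mem_notConnTo {W : Finset V} : x ∈ notConnTo W T ω ↔ x ∈ W ∧ ¬ ConnTo ω x T := by
  simp [notConnTo]

lemma notConnTo_subset (W : Finset V) (T : Set V) (ω : Finset (Sym2 V)) : notConnTo W T ω ⊆ W :=
  fun _ h => (mem_notConnTo.1 h).1

lemma dependsOnlyOn_notConnTo_eq (W : Finset V) (T : Set V) (S : Finset V) :
    DependsOnlyOn (· ∈ {ω | notConnTo W T ω = S}) {e : Sym2 V | ∃ v ∈ e, v ∉ S} := by
  refine dependsOnlyOn_mem_iff.2 fun A B hAB hA => ?_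
  have notMem_of_connTo : ∀ b, ConnTo A b T → b ∉ S := fun b hb hbS =>
    (mem_notConnTo.1 (hA ▸ hbS : b ∈ notConnTo W T A)).2 hb
  have connTo_of_left : ∀ z, ConnTo A z T → ConnTo B z T := by
    rintro z ⟨t, ht, hz⟩
    induction hz using Relation.ReflTransGen.head_induction_on with
    | refl => exact connTo_of_mem B ht
    | @head a b hab hbt ih =>
      have hb : b ∉ S := notMem_of_connTo b ⟨t, ht, hbt⟩
      exact (Conn.single ((hAB _ ⟨b, Sym2.mem_mk_right a b, hb⟩).1 hab)).connTo ih
  have connTo_of_right : ∀ z, ConnTo B z T → ConnTo A z T := by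
    rintro z ⟨t, ht, hz⟩
    induction hz using Relation.ReflTransGen.head_induction_on with
    | refl => exact connTo_of_mem A ht
    | @head a b hab _ ih =>
      have hb : b ∉ S := notMem_of_connTo b ih
      exact (Conn.single ((hAB _ ⟨b, Sym2.mem_mk_right a b, hb⟩).2 hab)).connTo ih
  rw [mem_ofPred_eq, ← (hA : notConnTo W T A = S)]
  ext x
  rw [mem_notConnTo, mem_notConnTo]
  exact and_congr_right fun _ => not_congr ⟨connTo_of_right x, connTo_of_left x⟩

end Connectivity

/-! ### Finite subgraphs and the Duminil-Copin–Tassion functional -/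

section Graphs

variable {V V' : Type*} {G : SimpleGraph V} {G' : SimpleGraph V'} {S W : Finset V}
  {ω : Finset (Sym2 V)} {x y o : V}

open Classical in
/-- The edges of `G` with both endpoints in `S`. -/
noncomputable def edgesIn (G : SimpleGraph V) (S : Finset V) : Finset (Sym2 V) :=
  S.sym2.filter fun e => e ∈ G.edgeSet

lemma mem_edgesIn {e : Sym2 V} : e ∈ edgesIn G S ↔ (∀ v ∈ e, v ∈ S) ∧ e ∈ G.edgeSet := by
  simp [edgesIn]

lemma mk_mem_edgesIn : s(x, y) ∈ edgesIn G S ↔ (x ∈ S ∧ y ∈ S) ∧ G.Adj x y := by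
  simp [edgesIn]

lemma edgesIn_mono (G : SimpleGraph V) (h : S ⊆ W) : edgesIn G S ⊆ edgesIn G W :=
  fun _ he => mem_edgesIn.2 ⟨fun v hv => h ((mem_edgesIn.1 he).1 v hv), (mem_edgesIn.1 he).2⟩

lemma restrict_eq_self (h : ω ⊆ edgesIn G S) : restrict ω S = ω :=
  (restrict_subset ω S).antisymm fun _ he => mem_restrict.2 ⟨he, (mem_edgesIn.1 (h he)).1⟩

lemma Conn.mem_of_subset_edgesIn (h : Conn ω x y) (hω : ω ⊆ edgesIn G S) (hx : x ∈ S) : y ∈ S :=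
  Conn.mem_of_restrict (ω := ω) (S := S) (by rwa [restrict_eq_self hω]) hx

lemma edgesIn_map (ψ : G ↪g G') (S : Finset V) :
    edgesIn G' (S.map ψ.toEmbedding) = (edgesIn G S).map ψ.toEmbedding.sym2Map := by
  ext e
  constructor
  · refine Sym2.inductionOn e fun a b => ?_
    rw [mk_mem_edgesIn]
    rintro ⟨⟨ha, hb⟩, hab⟩
    obtain ⟨x, hx, rfl⟩ := Finset.mem_map.1 ha
    obtain ⟨y, hy, rfl⟩ := Finset.mem_map.1 hb
    exact mk_mem_map.2 (mk_mem_edgesIn.2 ⟨⟨hx, hy⟩, ψ.map_adj_iff.1 hab⟩)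
  · intro he
    obtain ⟨e', he', rfl⟩ := Finset.mem_map.1 he
    induction e' using Sym2.inductionOn with
    | hf x y =>
      obtain ⟨⟨hx, hy⟩, hxy⟩ := mk_mem_edgesIn.1 he'
      exact mk_mem_edgesIn.2
        ⟨⟨Finset.mem_map_of_mem _ hx, Finset.mem_map_of_mem _ hy⟩, ψ.map_adj_iff.2 hxy⟩

variable [DecidableEq V] [DecidableEq V']

lemma prob_restrict (G : SimpleGraph V) (P : Sym2 V → ℝ) (h : S ⊆ W) (E : Set (Finset (Sym2 V))) :
    prob P (edgesIn G W) {ω | restrict ω S ∈ E} = prob P (edgesIn G S) E := by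
  have hdep : DependsOnlyOn (· ∈ {ω | restrict ω S ∈ E}) {e : Sym2 V | ∀ v ∈ e, v ∈ (S : Set V)} :=
    dependsOnlyOn_restrict (S : Set V) (· ∈ E)
  rw [prob, hdep.indicator.expect_eq P (edgesIn_mono G h) fun e he hes =>
    mem_edgesIn.2 ⟨hes, (mem_edgesIn.1 he).2⟩]
  exact prob_congr fun ω hω => by rw [mem_ofPred_eq, restrict_eq_self hω]

lemma prob_inter_restrict_of_disjoint (P : Sym2 V → ℝ) (F : Finset (Sym2 V)) {S T : Set V}
    (hST : Disjoint S T) (E E' : Set (Finset (Sym2 V))) :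
    prob P F ({ω | restrict ω S ∈ E} ∩ {ω | restrict ω T ∈ E'}) =
      prob P F {ω | restrict ω S ∈ E} * prob P F {ω | restrict ω T ∈ E'} :=
  prob_inter_of_disjoint P F (disjoint_left.2 fun e (hS : ∀ v ∈ e, v ∈ S) (hT : ∀ v ∈ e, v ∈ T) =>
      disjoint_left.1 hST (hS _ (Sym2.out_fst_mem e)) (hT _ (Sym2.out_fst_mem e)))
    (dependsOnlyOn_restrict S (· ∈ E)) (dependsOnlyOn_restrict T (· ∈ E'))

lemma prob_edgesIn_map (ψ : G ↪g G') (P : Sym2 V' → ℝ) (S : Finset V)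
    (E : Set (Finset (Sym2 V'))) :
    prob P (edgesIn G' (S.map ψ.toEmbedding)) E =
      prob (P ∘ ψ.toEmbedding.sym2Map) (edgesIn G S)
        {ω | ω.map ψ.toEmbedding.sym2Map ∈ E} := by
  rw [edgesIn_map, prob, expect_map]
  rfl

lemma prob_conn_eq_of_adj_mem_range (ψ : G ↪g G') (hψ : ∀ x y, G'.Adj (ψ x) y → y ∈ range ψ)
    {W : Finset V'} (hSW : ∀ x, ψ x ∈ W ↔ x ∈ S) (P : Sym2 V' → ℝ) (ho : o ∈ S) (x : V) :
    prob P (edgesIn G' W) {ω | Conn ω (ψ o) (ψ x)} =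
      prob (P ∘ ψ.toEmbedding.sym2Map) (edgesIn G S) {ω | Conn ω o x} := by
  have map_subset : S.map ψ.toEmbedding ⊆ W := fun v hv => by
    obtain ⟨x, hx, rfl⟩ := Finset.mem_map.1 hv
    exact (hSW x).2 hx
  have map_closed : ∀ ω ⊆ edgesIn G' W, ∀ a ∈ S.map ψ.toEmbedding, ∀ b, s(a, b) ∈ ω →
      b ∈ S.map ψ.toEmbedding := by
    intro ω hω a ha b hab
    obtain ⟨x, -, rfl⟩ := Finset.mem_map.1 ha
    obtain ⟨⟨-, hb⟩, hadj⟩ := mk_mem_edgesIn.1 (hω hab)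
    obtain ⟨y, rfl⟩ := hψ x b hadj
    exact Finset.mem_map_of_mem _ ((hSW y).1 hb)
  calc _ = prob P (edgesIn G' W)
        {ω | restrict ω (S.map ψ.toEmbedding) ∈ {ω | Conn ω (ψ o) (ψ x)}} :=
        prob_congr fun ω hω =>
          ⟨fun h => Conn.restrict_of_closed h (map_closed ω hω) (Finset.mem_map_of_mem _ ho),
            Conn.mono (restrict_subset _ _)⟩
    _ = _ := by
        rw [prob_restrict G' P map_subset, prob_edgesIn_map]
        exact prob_congr fun ω _ => conn_map_iff

variable [G.LocallyFinite] [G'.LocallyFinite]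

open Classical in
/-- The edge boundary of `S`, each boundary edge being represented by the ordered pair of its inner
and outer endpoints. -/
noncomputable def boundary (G : SimpleGraph V) [G.LocallyFinite] (S : Finset V) : Finset (V × V) :=
  (S ×ˢ S.biUnion fun x => G.neighborFinset x).filter fun z => z.2 ∉ S ∧ G.Adj z.1 z.2

lemma mem_boundary {z : V × V} : z ∈ boundary G S ↔ z.1 ∈ S ∧ z.2 ∉ S ∧ G.Adj z.1 z.2 := by
  simp only [boundary, Finset.mem_filter, Finset.mem_product, Finset.mem_biUnion,
    SimpleGraph.mem_neighborFinset]
  exact ⟨fun ⟨⟨hz, _⟩, h⟩ => ⟨hz, h⟩, fun ⟨hz, h⟩ => ⟨⟨hz, z.1, hz, h.2⟩, h⟩⟩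

/-- The functional `φ_P(S)` of Duminil-Copin and Tassion: the expected number of open boundary edges
of `S` whose inner endpoint is joined to `o` inside `S`. -/
noncomputable def phi (G : SimpleGraph V) [G.LocallyFinite] (P : Sym2 V → ℝ) (S : Finset V)
    (o : V) : ℝ :=
  ∑ z ∈ boundary G S, P s(z.1, z.2) * prob P (edgesIn G S) {ω | Conn ω o z.1}

lemma phi_mono {P Q : Sym2 V → ℝ} (hP : ∀ e, P e ∈ Icc (0 : ℝ) 1) (hQ : ∀ e, Q e ∈ Icc (0 : ℝ) 1)
    (hPQ : P ≤ Q) (S : Finset V) (o : V) : phi G P S o ≤ phi G Q S o := by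
  exact Finset.sum_le_sum fun z _ => mul_le_mul (hPQ _)
    (prob_mono_weight hP hQ hPQ _ (isUpperSet_conn o z.1)) (prob_nonneg hP _ _) (hQ _).1

lemma phi_nonneg {P : Sym2 V → ℝ} (hP : ∀ e, P e ∈ Icc (0 : ℝ) 1) (S : Finset V) (o : V) :
    0 ≤ phi G P S o :=
  Finset.sum_nonneg fun _ _ => mul_nonneg (hP _).1 (prob_nonneg hP _ _)

lemma continuous_phi {X : Type*} [TopologicalSpace X] {P : X → Sym2 V → ℝ}
    (hP : ∀ e, Continuous fun x => P x e) (S : Finset V) (o : V) :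
    Continuous fun x => phi G (P x) S o :=
  continuous_finsetSum _ fun _ _ => (hP _).mul (continuous_expect hP _ _)

lemma phi_congr_weight {P Q : Sym2 V → ℝ} (hPQ : ∀ e ∈ G.edgeSet, P e = Q e) (S : Finset V)
    (o : V) : phi G P S o = phi G Q S o := by
  have prob_eq (E : Set (Finset (Sym2 V))) : prob P (edgesIn G S) E = prob Q (edgesIn G S) E := by
    rw [prob, prob, expect_congr_weight fun e he => hPQ e (mem_edgesIn.1 he).2]
  simp only [phi, prob_eq]
  exact Finset.sum_congr rfl fun z hz => by rw [hPQ _ (mem_boundary.1 hz).2.2]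

lemma phi_eq_of_le {H : SimpleGraph V} [H.LocallyFinite] (hHG : H ≤ G) {P : Sym2 V → ℝ}
    (hP : ∀ x y, G.Adj x y → ¬ H.Adj x y → P s(x, y) = 0) (S : Finset V) (o : V) :
    phi G P S o = phi H P S o := by
  have edgesIn_le : edgesIn H S ⊆ edgesIn G S := fun e he =>
    have he := mem_edgesIn.1 he
    mem_edgesIn.2 ⟨he.1, SimpleGraph.edgeSet_mono hHG he.2⟩
  have boundary_le : boundary H S ⊆ boundary G S := fun z hz =>
    have hz := mem_boundary.1 hz
    mem_boundary.2 ⟨hz.1, hz.2.1, hHG hz.2.2⟩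
  have prob_eq (E : Set (Finset (Sym2 V))) : prob P (edgesIn G S) E = prob P (edgesIn H S) E := by
    refine expect_eq_of_subset edgesIn_le fun e he heH => Or.inl ?_
    induction e using Sym2.inductionOn with
    | hf x y =>
      obtain ⟨hxy, hG⟩ := mk_mem_edgesIn.1 he
      exact hP x y hG fun hH => heH (mk_mem_edgesIn.2 ⟨hxy, hH⟩)
  simp only [phi, prob_eq]
  refine (Finset.sum_subset boundary_le fun z hz hzH => ?_).symm
  obtain ⟨h₁, h₂, hG⟩ := mem_boundary.1 hz
  rw [hP _ _ hG fun hH => hzH (mem_boundary.2 ⟨h₁, h₂, hH⟩), zero_mul]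

lemma phi_eq_of_adj_mem_range (ψ : G ↪g G') (hψ : ∀ x y, G'.Adj (ψ x) y → y ∈ range ψ)
    {W : Finset V'} (hSW : ∀ x, ψ x ∈ W ↔ x ∈ S) (P : Sym2 V' → ℝ) (ho : o ∈ S) :
    phi G' P W (ψ o) = phi G (P ∘ ψ.toEmbedding.sym2Map) S o := by
  have mk_mem_boundary (x y : V) : (ψ x, ψ y) ∈ boundary G' W ↔ (x, y) ∈ boundary G S := by
    simp only [mem_boundary, hSW, ψ.map_adj_iff]
  have map_boundary :
      (boundary G S).map (ψ.toEmbedding.prodMap ψ.toEmbedding) ⊆ boundary G' W := fun z hz => by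
    obtain ⟨⟨x, y⟩, hxy, rfl⟩ := Finset.mem_map.1 hz
    exact (mk_mem_boundary x y).2 hxy
  rw [phi, phi, ← Finset.sum_subset map_boundary, Finset.sum_map]
  · exact Finset.sum_congr rfl fun z _ => congrArg₂ (· * ·) rfl
      (prob_conn_eq_of_adj_mem_range ψ hψ hSW P ho z.1)
  intro z hz hz_map
  have not_conn : ∀ ω ⊆ edgesIn G' W, ¬ Conn ω (ψ o) z.1 := by
    intro ω hω hoz
    obtain ⟨x, hx⟩ := hoz.mem_of_closed (S := range ψ)
      (fun _ ⟨a, ha⟩ b hab => hψ a b (ha ▸ (mk_mem_edgesIn.1 (hω hab)).2)) (mem_range_self o)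
    obtain ⟨y, hy⟩ := hψ x z.2 (hx ▸ (mem_boundary.1 hz).2.2)
    have hxy : (ψ x, ψ y) = z := Prod.ext hx hy
    exact hz_map (Finset.mem_map.2 ⟨(x, y), (mk_mem_boundary x y).1 (hxy ▸ hz), hxy⟩)
  have prob_zero : prob P (edgesIn G' W) {ω | Conn ω (ψ o) z.1} = 0 :=
    (prob_congr (E' := ∅) fun ω hω => iff_of_false (not_conn ω hω) id).trans <| by
      rw [prob, indicator_empty]; exact map_zero _
  rw [prob_zero, mul_zero]

/-! #### The Simon–Lieb inequality -/

lemma exists_boundary_of_connTo {T : Set V} (hT : Disjoint T S) (ho : o ∈ S)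
    (hω : ω ⊆ edgesIn G W) (h : ConnTo ω o T) :
    ∃ z ∈ boundary G S, z.1 ∈ clusterIn S o ω ∧ s(z.1, z.2) ∈ ω ∧
      ConnTo (restrict ω (clusterIn S o ω : Set V)ᶜ) z.2 T := by
  obtain ⟨t, ht, hot⟩ := h
  obtain ⟨x, hx, y, hy, hxy, hyt⟩ := hot.exists_last_exit (S := clusterIn S o ω)
    (mem_clusterIn.2 ⟨ho, Conn.refl _ _⟩)
    fun h => disjoint_left.1 hT ht (clusterIn_subset S o ω h)
  obtain ⟨hxS, hox⟩ := mem_clusterIn.1 hx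
  refine ⟨(x, y), mem_boundary.2 ⟨hxS, fun hyS => hy ?_, (mk_mem_edgesIn.1 (hω hxy)).2⟩, hx, hxy,
    t, ht, hyt⟩
  exact mem_clusterIn.2 ⟨hyS, hox.trans (Conn.single (mk_mem_restrict.2 ⟨hxy, hxS, hyS⟩))⟩

/-- The three events depend on disjoint sets of edges: those of `S` touching `C`, the edge `z`, and
those outside `C`. -/
lemma prob_clusterIn_eq_inter_le {P : Sym2 V → ℝ} (hP : ∀ e, P e ∈ Icc (0 : ℝ) 1)
    (F : Finset (Sym2 V)) (ho : o ∈ S) {C : Finset V} {z : V × V} (hzC : z.1 ∈ C) (hzS : z.2 ∉ S)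
    (T : Set V) :
    prob P F ({ω | clusterIn S o ω = C} ∩
        ({ω | s(z.1, z.2) ∈ ω} ∩ {ω | ConnTo (restrict ω (C : Set V)ᶜ) z.2 T})) ≤
      prob P F {ω | clusterIn S o ω = C} *
        (P s(z.1, z.2) * prob P F {ω | ConnTo ω z.2 T}) := by
  have edge_dep : DependsOnlyOn (· ∈ {ω : Finset (Sym2 V) | s(z.1, z.2) ∈ ω}) {s(z.1, z.2)} :=
    fun _ _ h => propext (h _ rfl)
  have conn_dep : DependsOnlyOn (· ∈ {ω | ConnTo (restrict ω (C : Set V)ᶜ) z.2 T})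
      {e : Sym2 V | ∀ v ∈ e, v ∈ (C : Set V)ᶜ} :=
    dependsOnlyOn_restrict (C : Set V)ᶜ fun ω => ConnTo ω z.2 T
  have cluster_disjoint : Disjoint {e : Sym2 V | (∀ v ∈ e, v ∈ S) ∧ ∃ v ∈ e, v ∈ C}
      ({s(z.1, z.2)} ∪ {e : Sym2 V | ∀ v ∈ e, v ∈ (C : Set V)ᶜ}) := by
    rw [disjoint_left]
    rintro e ⟨he, v, hve, hvC⟩ (rfl | he')
    · exact hzS (he z.2 (Sym2.mem_mk_right _ _))
    · exact he' v hve hvC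
  have edge_disjoint : Disjoint {s(z.1, z.2)} {e : Sym2 V | ∀ v ∈ e, v ∈ (C : Set V)ᶜ} :=
    disjoint_singleton_left.2 fun h => h z.1 (Sym2.mem_mk_left _ _) hzC
  rw [prob_inter_of_disjoint P F cluster_disjoint (dependsOnlyOn_clusterIn_eq ho C)
      (edge_dep.inter conn_dep),
    prob_inter_of_disjoint P F edge_disjoint edge_dep conn_dep]
  refine mul_le_mul_of_nonneg_left (mul_le_mul (prob_mem_le hP F _) ?_ (prob_nonneg hP _ _)
    (hP _).1) (prob_nonneg hP _ _)
  exact prob_mono hP fun ω _ h => h.mono (restrict_subset _ _)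

/-- The Simon–Lieb inequality, by summing over the cluster `C` of `o` in `S` and the last edge `z`
from `C` used by a path to `T`. -/
lemma prob_connTo_le_sum_boundary {P : Sym2 V → ℝ} (hP : ∀ e, P e ∈ Icc (0 : ℝ) 1) (hSW : S ⊆ W)
    (ho : o ∈ S) {T : Set V} (hT : Disjoint T S) :
    prob P (edgesIn G W) {ω | ConnTo ω o T} ≤
      ∑ z ∈ boundary G S, P s(z.1, z.2) * prob P (edgesIn G S) {ω | Conn ω o z.1} *
        prob P (edgesIn G W) {ω | ConnTo ω z.2 T} := by
  have union_bound : prob P (edgesIn G W) {ω | ConnTo ω o T} ≤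
      ∑ i ∈ (boundary G S).sigma fun z => S.powerset.filter (z.1 ∈ ·),
        prob P (edgesIn G W) ({ω | clusterIn S o ω = i.2} ∩ ({ω | s(i.1.1, i.1.2) ∈ ω} ∩
          {ω | ConnTo (restrict ω (i.2 : Set V)ᶜ) i.1.2 T})) := by
    refine prob_le_sum hP fun ω hω h => ?_
    obtain ⟨z, hz, hzC, hzω, hzT⟩ := exists_boundary_of_connTo hT ho hω h
    exact ⟨⟨z, clusterIn S o ω⟩, Finset.mem_sigma.2 ⟨hz, Finset.mem_filter.2
      ⟨Finset.mem_powerset.2 (clusterIn_subset S o ω), hzC⟩⟩, rfl, hzω, hzT⟩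
  have sum_clusters_le : ∀ z, ∑ C ∈ S.powerset.filter (z ∈ ·),
      prob P (edgesIn G W) {ω | clusterIn S o ω = C} ≤ prob P (edgesIn G S) {ω | Conn ω o z} := by
    intro z
    rw [← prob_restrict G P hSW]
    refine sum_prob_le hP (fun C _ C' _ hCC' => disjoint_left.2 fun ω h h' =>
      hCC' (h.symm.trans h')) fun C hC ω h => ?_
    exact (mem_clusterIn.1 ((h : clusterIn S o ω = C) ▸ (Finset.mem_filter.1 hC).2)).2
  refine union_bound.trans ?_
  rw [Finset.sum_sigma]
  refine Finset.sum_le_sum fun z hz => ?_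
  calc _ ≤ ∑ C ∈ S.powerset.filter (z.1 ∈ ·), prob P (edgesIn G W) {ω | clusterIn S o ω = C} *
        (P s(z.1, z.2) * prob P (edgesIn G W) {ω | ConnTo ω z.2 T}) :=
        Finset.sum_le_sum fun C hC => prob_clusterIn_eq_inter_le hP _ ho
          (Finset.mem_filter.1 hC).2 (mem_boundary.1 hz).2.1 T
    _ ≤ prob P (edgesIn G S) {ω | Conn ω o z.1} *
        (P s(z.1, z.2) * prob P (edgesIn G W) {ω | ConnTo ω z.2 T}) := by
        rw [← Finset.sum_mul]
        exact mul_le_mul_of_nonneg_right (sum_clusters_le z.1)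
          (mul_nonneg (hP _).1 (prob_nonneg hP _ _))
    _ = _ := by ring

lemma prob_connTo_le_pow {P : Sym2 V → ℝ} (hP : ∀ e, P e ∈ Icc (0 : ℝ) 1) {T : Set V} {c : ℝ}
    (hc : 0 ≤ c) {D : ℕ → Set V}
    (hD : ∀ m, ∀ o ∈ D (m + 1), ∃ S ⊆ W, o ∈ S ∧ Disjoint T S ∧ phi G P S o ≤ c ∧
      ∀ z ∈ boundary G S, z.2 ∈ D m) (m : ℕ) (ho : o ∈ D m) :
    prob P (edgesIn G W) {ω | ConnTo ω o T} ≤ c ^ m := by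
  induction m generalizing o with
  | zero => exact (prob_le_one hP _ _).trans_eq (pow_zero c).symm
  | succ m ih =>
    obtain ⟨S, hSW, hoS, hT, hφ, hS⟩ := hD m o ho
    calc _ ≤ ∑ z ∈ boundary G S, P s(z.1, z.2) * prob P (edgesIn G S) {ω | Conn ω o z.1} *
          prob P (edgesIn G W) {ω | ConnTo ω z.2 T} := prob_connTo_le_sum_boundary hP hSW hoS hT
      _ ≤ phi G P S o * c ^ m := by
          rw [phi, Finset.sum_mul]
          exact Finset.sum_le_sum fun z hz => mul_le_mul_of_nonneg_left (ih (hS z hz))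
            (mul_nonneg (hP _).1 (prob_nonneg hP _ _))
      _ ≤ c ^ (m + 1) := by
          rw [pow_succ']
          exact mul_le_mul_of_nonneg_right hφ (pow_nonneg hc m)

/-! #### The Duminil-Copin–Tassion differential inequality -/

lemma discreteDeriv_connTo_eq_one {T : Set V} {z : V × V}
    (hoz : Conn ω o z.1) (hz : ConnTo ω z.2 T) (ho : ¬ ConnTo ω o T) :
    discreteDeriv s(z.1, z.2) ({ω | ConnTo ω o T}.indicator 1) ω = 1 := by
  have h_insert : ConnTo (insert s(z.1, z.2) ω) o T :=
    ((hoz.mono (Finset.subset_insert _ _)).trans (Conn.single (Finset.mem_insert_self _ _))).connTo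
      (hz.mono (Finset.subset_insert _ _))
  have h_erase : ¬ ConnTo (ω.erase s(z.1, z.2)) o T :=
    fun h => ho (h.mono (Finset.erase_subset _ _))
  simp [discreteDeriv, h_insert, h_erase]

lemma injOn_boundary (S : Finset V) :
    Set.InjOn (fun z : V × V => s(z.1, z.2)) (boundary G S) := by
  intro z hz z' hz' h
  rcases Sym2.eq_iff.1 h with ⟨h₁, h₂⟩ | ⟨h₁, -⟩
  · exact Prod.ext h₁ h₂
  · exact absurd (h₁ ▸ (mem_boundary.1 hz).1) (mem_boundary.1 hz').2.1

/-- Given that `S` is the set of vertices not joined to the complement of `W`, each boundary edge of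
`S` whose inner endpoint is joined to `o` in `S` is pivotal. -/
lemma sum_boundary_indicator_le_sum_discreteDeriv {W' : Finset V}
    (hW : ∀ x ∈ W, ∀ y, G.Adj x y → y ∈ W') (hWW' : W ⊆ W') {P : Sym2 V → ℝ}
    (hP : ∀ e, P e ∈ Icc (0 : ℝ) 1) (ho : o ∈ notConnTo W (W : Set V)ᶜ ω) :
    ∑ z ∈ boundary G (notConnTo W (W : Set V)ᶜ ω), P s(z.1, z.2) *
        {ω' | Conn (restrict ω' (notConnTo W (W : Set V)ᶜ ω)) o z.1}.indicator 1 ω ≤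
      ∑ e ∈ edgesIn G W', P e * discreteDeriv e ({ω | ConnTo ω o (W : Set V)ᶜ}.indicator 1) ω := by
  have deriv_nonneg : ∀ e, 0 ≤ P e *
      discreteDeriv e ({ω | ConnTo ω o (W : Set V)ᶜ}.indicator 1) ω := fun e =>
    mul_nonneg (hP e).1 (discreteDeriv_indicator_nonneg (isUpperSet_connTo _ _) e ω)
  have boundary_subset : (boundary G (notConnTo W (W : Set V)ᶜ ω)).image
      (fun z => s(z.1, z.2)) ⊆ edgesIn G W' := Finset.image_subset_iff.2 fun z hz => by
    obtain ⟨hz₁, -, hadj⟩ := mem_boundary.1 hz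
    have hzW := (mem_notConnTo.1 hz₁).1
    exact mk_mem_edgesIn.2 ⟨⟨hWW' hzW, hW _ hzW _ hadj⟩, hadj⟩
  refine le_trans ?_ (Finset.sum_le_sum_of_subset_of_nonneg boundary_subset
    fun e _ _ => deriv_nonneg e)
  rw [Finset.sum_image (injOn_boundary _)]
  refine Finset.sum_le_sum fun z hz => ?_
  by_cases hoz : Conn (restrict ω (notConnTo W (W : Set V)ᶜ ω)) o z.1
  · have hz₂ : ConnTo ω z.2 (W : Set V)ᶜ := by
      by_contra hcon
      exact (mem_boundary.1 hz).2.1 (mem_notConnTo.2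
        ⟨not_not.1 fun h => hcon (connTo_of_mem ω h), hcon⟩)
    rw [discreteDeriv_connTo_eq_one (hoz.mono (restrict_subset _ _)) hz₂ (mem_notConnTo.1 ho).2]
    simp [hoz]
  · simpa [hoz] using deriv_nonneg s(z.1, z.2)

lemma sum_notConnTo_indicator_le_sum_discreteDeriv {W' : Finset V}
    (hW : ∀ x ∈ W, ∀ y, G.Adj x y → y ∈ W') (hWW' : W ⊆ W') {P : Sym2 V → ℝ}
    (hP : ∀ e, P e ∈ Icc (0 : ℝ) 1) (o : V) (ω : Finset (Sym2 V)) :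
    (∑ S ∈ W.powerset.filter (o ∈ ·), ∑ z ∈ boundary G S, P s(z.1, z.2) •
      ({ω | notConnTo W (W : Set V)ᶜ ω = S} ∩ {ω | Conn (restrict ω S) o z.1}).indicator
        (1 : Finset (Sym2 V) → ℝ)) ω ≤
      (∑ e ∈ edgesIn G W', P e •
        discreteDeriv e ({ω | ConnTo ω o (W : Set V)ᶜ}.indicator 1)) ω := by
  classical
  simp only [Finset.sum_apply, Pi.smul_apply, smul_eq_mul]
  by_cases hoU : o ∈ notConnTo W (W : Set V)ᶜ ω
  · have h_mem : notConnTo W (W : Set V)ᶜ ω ∈ W.powerset.filter (o ∈ ·) := Finset.mem_filter.2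
      ⟨Finset.mem_powerset.2 (notConnTo_subset W _ ω), hoU⟩
    rw [Finset.sum_eq_single_of_mem _ h_mem
      fun S _ hS => Finset.sum_eq_zero fun z _ => by simp [hS.symm]]
    refine le_of_eq_of_le (Finset.sum_congr rfl fun z _ => ?_)
      (sum_boundary_indicator_le_sum_discreteDeriv hW hWW' hP hoU)
    simp [Set.indicator_apply]
  · rw [Finset.sum_eq_zero fun S hS => Finset.sum_eq_zero fun z _ => by
      have hSU : notConnTo W (W : Set V)ᶜ ω ≠ S := fun h => hoU (h ▸ (Finset.mem_filter.1 hS).2)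
      simp [hSU]]
    exact Finset.sum_nonneg fun e _ => mul_nonneg (hP e).1
      (discreteDeriv_indicator_nonneg (isUpperSet_connTo _ _) e ω)

lemma prob_notConnTo_eq_mul_phi (P : Sym2 V → ℝ) (hSW : S ⊆ W) (W₀ : Finset V) (T : Set V)
    (o : V) :
    prob P (edgesIn G W) {ω | notConnTo W₀ T ω = S} * phi G P S o =
      ∑ z ∈ boundary G S, P s(z.1, z.2) * prob P (edgesIn G W)
        ({ω | notConnTo W₀ T ω = S} ∩ {ω | Conn (restrict ω S) o z.1}) := by
  have hdisj : Disjoint {e : Sym2 V | ∃ v ∈ e, v ∉ S} {e : Sym2 V | ∀ v ∈ e, v ∈ (S : Set V)} :=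
    disjoint_left.2 fun e ⟨v, hve, hvS⟩ he => hvS (he v hve)
  rw [phi, Finset.mul_sum]
  refine Finset.sum_congr rfl fun z _ => ?_
  have conn_dep : DependsOnlyOn (· ∈ {ω | Conn (restrict ω S) o z.1})
      {e : Sym2 V | ∀ v ∈ e, v ∈ (S : Set V)} :=
    dependsOnlyOn_restrict (S : Set V) fun ω => Conn ω o z.1
  rw [prob_inter_of_disjoint P _ hdisj (dependsOnlyOn_notConnTo_eq W₀ T S) conn_dep,
    ← prob_restrict G P hSW]
  exact mul_left_comm _ _ _

/-- The differential inequality of Duminil-Copin and Tassion, by summing over the possible sets `S`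
of vertices not joined to the complement of `W`. -/
lemma mul_one_sub_prob_connTo_le_sum_discreteDeriv {W' : Finset V}
    (hW : ∀ x ∈ W, ∀ y, G.Adj x y → y ∈ W') (hWW' : W ⊆ W') {P : Sym2 V → ℝ}
    (hP : ∀ e, P e ∈ Icc (0 : ℝ) 1) (ho : o ∈ W) {c : ℝ} (hc : 0 ≤ c)
    (hφ : ∀ S ⊆ W, o ∈ S → c ≤ phi G P S o) :
    c * (1 - prob P (edgesIn G W') {ω | ConnTo ω o (W : Set V)ᶜ}) ≤
      ∑ e ∈ edgesIn G W', P e *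
        expect P (edgesIn G W') (discreteDeriv e ({ω | ConnTo ω o (W : Set V)ᶜ}.indicator 1)) := by
  set F := edgesIn G W'
  set E : Set (Finset (Sym2 V)) := {ω | ConnTo ω o (W : Set V)ᶜ}
  set U : Finset V → Set (Finset (Sym2 V)) := fun S => {ω | notConnTo W (W : Set V)ᶜ ω = S}
  set 𝒮 := W.powerset.filter (o ∈ ·)
  have mem_𝒮 : ∀ S, S ∈ 𝒮 ↔ S ⊆ W ∧ o ∈ S := fun S => by simp [𝒮]
  have union_bound : prob P F Eᶜ ≤ ∑ S ∈ 𝒮, prob P F (U S) := prob_le_sum hP fun ω _ hω =>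
    ⟨_, (mem_𝒮 _).2 ⟨notConnTo_subset W _ ω, mem_notConnTo.2 ⟨ho, hω⟩⟩, rfl⟩
  calc c * (1 - prob P F E) ≤ c * ∑ S ∈ 𝒮, prob P F (U S) :=
        mul_le_mul_of_nonneg_left (prob_compl P F E ▸ union_bound) hc
    _ ≤ ∑ S ∈ 𝒮, prob P F (U S) * phi G P S o := by
        rw [Finset.mul_sum]
        refine Finset.sum_le_sum fun S hS => ?_
        rw [mul_comm]
        exact mul_le_mul_of_nonneg_left (hφ S ((mem_𝒮 S).1 hS).1 ((mem_𝒮 S).1 hS).2)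
          (prob_nonneg hP _ _)
    _ = ∑ S ∈ 𝒮, ∑ z ∈ boundary G S, P s(z.1, z.2) *
          prob P F (U S ∩ {ω | Conn (restrict ω S) o z.1}) := Finset.sum_congr rfl fun S hS =>
        prob_notConnTo_eq_mul_phi P (((mem_𝒮 S).1 hS).1.trans hWW') W _ o
    _ ≤ _ := by
        have expect_pointwise := expect_mono (F := F) hP fun ω _ =>
          sum_notConnTo_indicator_le_sum_discreteDeriv hW hWW' hP o ω
        simp only [map_sum, map_smul, smul_eq_mul] at expect_pointwise
        exact expect_pointwise

lemma one_sub_exp_le_prob_connTo {W' : Finset V} (hW : ∀ x ∈ W, ∀ y, G.Adj x y → y ∈ W')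
    (hWW' : W ⊆ W') (ho : o ∈ W) {p₀ p₁ : ℝ} (h₀ : 0 ≤ p₀) (h₀₁ : p₀ ≤ p₁) (h₁ : p₁ ≤ 1)
    (hφ : ∀ S, o ∈ S → 1 ≤ phi G (fun _ => p₀) S o) :
    1 - Real.exp (p₀ - p₁) ≤
      prob (fun _ => p₁) (edgesIn G W') {ω | ConnTo ω o (W : Set V)ᶜ} := by
  set E : Set (Finset (Sym2 V)) := {ω | ConnTo ω o (W : Set V)ᶜ}
  set f : ℝ → ℝ := fun p => prob (fun _ => p) (edgesIn G W') E
  set f' : ℝ → ℝ := fun p =>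
    ∑ e ∈ edgesIn G W', expect (fun _ => p) (edgesIn G W') (discreteDeriv e (E.indicator 1))
  have one_sub_le : ∀ p ∈ Icc p₀ p₁, 1 - f p ≤ f' p := fun p hp => by
    have hpI : ∀ _ : Sym2 V, p ∈ Icc (0 : ℝ) 1 := fun _ => ⟨h₀.trans hp.1, hp.2.trans h₁⟩
    have hp₀I : ∀ _ : Sym2 V, p₀ ∈ Icc (0 : ℝ) 1 := fun _ => ⟨h₀, h₀₁.trans h₁⟩
    calc 1 - f p = 1 * (1 - f p) := (one_mul _).symm
      _ ≤ _ := mul_one_sub_prob_connTo_le_sum_discreteDeriv hW hWW' hpI ho zero_le_one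
          fun S _ hoS => (hφ S hoS).trans (phi_mono hp₀I hpI (fun _ => hp.1) S o)
      _ ≤ f' p := Finset.sum_le_sum fun e _ => mul_le_of_le_one_left
          (expect_nonneg hpI fun A _ => discreteDeriv_indicator_nonneg (isUpperSet_connTo o _) e A)
          (hpI e).2
  have hasDerivAt_mul_exp : ∀ p, HasDerivAt (fun p => (1 - f p) * Real.exp p)
      (-f' p * Real.exp p + (1 - f p) * Real.exp p) p := fun p =>
    ((hasDerivAt_expect _ _ p).const_sub 1).mul (Real.hasDerivAt_exp p)
  have antitoneOn : AntitoneOn (fun p => (1 - f p) * Real.exp p) (Icc p₀ p₁) := by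
    refine antitoneOn_of_deriv_nonpos (convex_Icc _ _)
      (fun p _ => (hasDerivAt_mul_exp p).continuousAt.continuousWithinAt)
      (fun p _ => (hasDerivAt_mul_exp p).differentiableAt.differentiableWithinAt) fun p hp => ?_
    rw [(hasDerivAt_mul_exp p).deriv, ← add_mul]
    exact mul_nonpos_of_nonpos_of_nonneg
      (by linarith [one_sub_le p (interior_subset hp)]) (Real.exp_pos p).le
  have f_nonneg : 0 ≤ f p₀ := prob_nonneg (fun _ => ⟨h₀, h₀₁.trans h₁⟩) _ _
  have one_sub_le_exp : 1 - f p₁ ≤ Real.exp (p₀ - p₁) := by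
    rw [Real.exp_sub, le_div_iff₀ (Real.exp_pos _)]
    calc (1 - f p₁) * Real.exp p₁ ≤ (1 - f p₀) * Real.exp p₀ :=
          antitoneOn (left_mem_Icc.2 h₀₁) (right_mem_Icc.2 h₀₁) h₀₁
      _ ≤ Real.exp p₀ := mul_le_of_le_one_left (Real.exp_pos _).le (by linarith)
  change 1 - _ ≤ f p₁
  linarith

end Graphs

/-! ### Separation of finite sets -/

section Separation

variable {V V' : Type*} {G : SimpleGraph V} {G' : SimpleGraph V'} {S S' W A A' : Finset V}
  {ω : Finset (Sym2 V)} {x : V}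

lemma ConnTo.restrict_of_adj_mem (hω : ω ⊆ edgesIn G W) (hSS' : S ⊆ S')
    (hS : ∀ x ∈ S, ∀ y, G.Adj x y → y ∈ S') (h : ConnTo ω x (S : Set V)ᶜ) :
    ConnTo (restrict ω S') x (S : Set V)ᶜ := by
  obtain ⟨t, ht, hxt⟩ := h
  by_cases hx : x ∈ (S : Set V)
  · obtain ⟨a, ha, b, hb, hab, hxa⟩ := hxt.exists_first_exit hx ht
    refine ⟨b, hb, (hxa.mono fun e he => ?_).trans (Conn.single (mk_mem_restrict.2
      ⟨hab, hSS' ha, hS a ha b (mk_mem_edgesIn.1 (hω hab)).2⟩))⟩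
    exact mem_restrict.2 ⟨(mem_restrict.1 he).1, fun v hv => hSS' ((mem_restrict.1 he).2 v hv)⟩
  · exact connTo_of_mem _ hx

/-- The event that no vertex of `A` is joined to `T`. -/
def separated (A : Finset V) (T : Set V) : Set (Finset (Sym2 V)) :=
  {ω | ∀ a ∈ A, ¬ ConnTo ω a T}

lemma isLowerSet_separated (A : Finset V) (T : Set V) : IsLowerSet (separated A T) :=
  fun _ _ h hω a ha hT => hω a ha (hT.mono h)

lemma separated_anti_left (h : A ⊆ A') (T : Set V) : separated A' T ⊆ separated A T :=
  fun _ hω a ha => hω a (h ha)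

lemma separated_union_right (A : Finset V) (T T' : Set V) :
    separated A (T ∪ T') = separated A T ∩ separated A T' := by
  ext ω
  simp only [separated, ConnTo, mem_union, or_and_right, exists_or, not_or, forall_and,
    mem_inter_iff, mem_ofPred_eq]

lemma map_mem_separated_iff {ψ : V ↪ V'} {T : Set V} :
    ω.map ψ.sym2Map ∈ separated (A.map ψ) (ψ '' T) ↔ ω ∈ separated A T := by
  simp [separated, ConnTo, conn_map_iff]

variable [DecidableEq V]

lemma prob_separated_anti_left {P : Sym2 V → ℝ} (hP : ∀ e, P e ∈ Icc (0 : ℝ) 1)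
    (F : Finset (Sym2 V)) (h : A ⊆ A') (T : Set V) :
    prob P F (separated A' T) ≤ prob P F (separated A T) :=
  prob_mono hP fun _ _ hω => separated_anti_left h T hω

lemma prob_separated_anti_weight {P Q : Sym2 V → ℝ} (hP : ∀ e, P e ∈ Icc (0 : ℝ) 1)
    (hQ : ∀ e, Q e ∈ Icc (0 : ℝ) 1) (hPQ : P ≤ Q) (F : Finset (Sym2 V)) (A : Finset V)
    (T : Set V) : prob Q F (separated A T) ≤ prob P F (separated A T) := by
  have h := prob_mono_weight hP hQ hPQ F (isLowerSet_separated A T).compl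
  rw [prob_compl, prob_compl] at h
  linarith

lemma prob_separated_map [DecidableEq V'] (ψ : G ↪g G') (P : Sym2 V' → ℝ) (S A : Finset V)
    (T : Set V) :
    prob P (edgesIn G' (S.map ψ.toEmbedding)) (separated (A.map ψ.toEmbedding) (ψ '' T)) =
      prob (P ∘ ψ.toEmbedding.sym2Map) (edgesIn G S) (separated A T) := by
  rw [prob_edgesIn_map]
  exact prob_congr fun ω _ => map_mem_separated_iff

/-- The square-root trick for a target and its image under a symmetry. -/
lemma sq_prob_separated_le (ψ : G ↪g G) {p : ℝ} (hp : p ∈ Icc (0 : ℝ) 1)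
    (hS : S.map ψ.toEmbedding = S) (hA : A.map ψ.toEmbedding = A) (T : Set V) :
    prob (fun _ => p) (edgesIn G S) (separated A T) ^ 2 ≤
      prob (fun _ => p) (edgesIn G S) (separated A (T ∪ ψ '' T)) := by
  have prob_image : prob (fun _ => p) (edgesIn G S) (separated A (ψ '' T)) =
      prob (fun _ => p) (edgesIn G S) (separated A T) := by
    have h := prob_separated_map ψ (fun _ => p) S A T
    rwa [hS, hA] at h
  calc _ = prob (fun _ => p) (edgesIn G S) (separated A T) *
        prob (fun _ => p) (edgesIn G S) (separated A (ψ '' T)) := by rw [prob_image, sq]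
    _ ≤ _ := prob_mul_prob_le_prob_inter (fun _ => hp) _ (isLowerSet_separated A T)
        (isLowerSet_separated A (ψ '' T))
    _ = _ := by rw [separated_union_right]

end Separation

/-! ### Percolation on the square lattice -/

section SquareLattice

variable {x y : ℤ × ℤ} {n : ℤ}

/-- The square lattice `ℤ²`, with nearest-neighbour edges. -/
def squareLattice : SimpleGraph (ℤ × ℤ) where
  Adj x y := (x.1 = y.1 ∧ (y.2 = x.2 + 1 ∨ x.2 = y.2 + 1)) ∨
    (x.2 = y.2 ∧ (y.1 = x.1 + 1 ∨ x.1 = y.1 + 1))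
  symm := ⟨by intro x y h; omega⟩
  loopless := ⟨by intro x h; omega⟩

lemma squareLattice_adj : squareLattice.Adj x y ↔
    (x.1 = y.1 ∧ (y.2 = x.2 + 1 ∨ x.2 = y.2 + 1)) ∨
      (x.2 = y.2 ∧ (y.1 = x.1 + 1 ∨ x.1 = y.1 + 1)) := Iff.rfl

/-- The rectangle `[a, b] × [c, d]` of the square lattice. -/
noncomputable def rect (a b c d : ℤ) : Finset (ℤ × ℤ) := Finset.Icc a b ×ˢ Finset.Icc c d

lemma mem_rect {a b c d : ℤ} : x ∈ rect a b c d ↔ (a ≤ x.1 ∧ x.1 ≤ b) ∧ c ≤ x.2 ∧ x.2 ≤ d := by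
  simp [rect]

/-- The square box of radius `n` centred at `x`. -/
noncomputable def box (x : ℤ × ℤ) (n : ℤ) : Finset (ℤ × ℤ) :=
  rect (x.1 - n) (x.1 + n) (x.2 - n) (x.2 + n)

lemma mem_box : y ∈ box x n ↔
    (x.1 - n ≤ y.1 ∧ y.1 ≤ x.1 + n) ∧ x.2 - n ≤ y.2 ∧ y.2 ≤ x.2 + n := mem_rect

lemma mem_box_zero : y ∈ box 0 n ↔ (-n ≤ y.1 ∧ y.1 ≤ n) ∧ -n ≤ y.2 ∧ y.2 ≤ n := by
  simp [mem_box]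

lemma box_subset_box {m : ℤ} (h₁ : |x.1 - y.1| + m ≤ n) (h₂ : |x.2 - y.2| + m ≤ n) :
    box x m ⊆ box y n := fun z hz => by
  have := mem_box.1 hz
  have := abs_le.1 (le_sub_iff_add_le.2 h₁)
  have := abs_le.1 (le_sub_iff_add_le.2 h₂)
  rw [mem_box]
  omega

lemma exists_subset_box (A : Finset (ℤ × ℤ)) : ∃ N, 0 ≤ N ∧ A ⊆ box 0 N := by
  have nonneg : ∀ a ∈ A, 0 ≤ |a.1| + |a.2| := fun a _ => by positivity
  refine ⟨∑ a ∈ A, (|a.1| + |a.2|), Finset.sum_nonneg nonneg, fun a ha => ?_⟩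
  have := Finset.single_le_sum nonneg ha
  have := abs_nonneg a.1
  have := abs_nonneg a.2
  exact mem_box_zero.2 ⟨abs_le.1 (by lia), abs_le.1 (by lia)⟩

lemma mem_box_of_adj (hy : y ∈ box x (n - 1)) {z : ℤ × ℤ} (h : squareLattice.Adj y z) :
    z ∈ box x n := by
  rw [squareLattice_adj] at h
  rw [mem_box] at hy ⊢
  omega

lemma box_sub_one_subset (x : ℤ × ℤ) (n : ℤ) : box x (n - 1) ⊆ box x n :=
  box_subset_box (by simp) (by simp)

noncomputable instance : squareLattice.LocallyFinite := fun x =>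
  ((box x 1).finite_toSet.subset fun _ hy =>
    mem_box_of_adj (n := 1) (by simp [mem_box]) hy).fintype

/-- Translation of the square lattice. -/
def translation (x : ℤ × ℤ) : squareLattice ↪g squareLattice where
  toEmbedding := addLeftEmbedding x
  map_rel_iff' := by
    simp only [addLeftEmbedding_apply, squareLattice_adj, Prod.fst_add, Prod.snd_add]
    omega

/-- Reflection of the square lattice in the vertical line of abscissa `c / 2`. -/
def reflection (c : ℤ) : squareLattice ↪g squareLattice where
  toFun x := (c - x.1, x.2)
  inj' x y h := by
    obtain ⟨h₁, h₂⟩ := Prod.mk.inj h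
    exact Prod.ext (sub_right_injective h₁) h₂
  map_rel_iff' {x y} := by
    change squareLattice.Adj (c - x.1, x.2) (c - y.1, y.2) ↔ _
    simp only [squareLattice_adj]
    omega

/-- Reflection of the square lattice in the diagonal. -/
def diagonalReflection : squareLattice ↪g squareLattice where
  toEmbedding := (Equiv.prodComm ℤ ℤ).toEmbedding
  map_rel_iff' := by
    simp only [Equiv.coe_toEmbedding, Equiv.prodComm_apply, squareLattice_adj, Prod.fst_swap,
      Prod.snd_swap]
    omega

lemma mem_map_translation {S : Finset (ℤ × ℤ)} :
    y ∈ S.map (translation x).toEmbedding ↔ y - x ∈ S := by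
  rw [Finset.mem_map]
  exact ⟨fun ⟨a, ha, h⟩ => by rwa [← h, translation, addLeftEmbedding_apply, add_sub_cancel_left],
    fun h => ⟨y - x, h, add_sub_cancel _ _⟩⟩

lemma map_translation_box (x y : ℤ × ℤ) (n : ℤ) :
    (box y n).map (translation x).toEmbedding = box (x + y) n := by
  ext z
  rw [mem_map_translation, mem_box, mem_box, Prod.fst_sub, Prod.snd_sub, Prod.fst_add,
    Prod.snd_add]
  omega

lemma image_translation_compl (x : ℤ × ℤ) (S : Finset (ℤ × ℤ)) :
    (translation x).toEmbedding '' (S : Set (ℤ × ℤ))ᶜ =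
      (S.map (translation x).toEmbedding : Set (ℤ × ℤ))ᶜ := by
  rw [Finset.coe_map]
  exact image_compl_eq (AddGroup.addLeft_bijective x)

lemma reflection_apply (c : ℤ) (x : ℤ × ℤ) : (reflection c).toEmbedding x = (c - x.1, x.2) := rfl

lemma map_reflection_rect (e a b c d : ℤ) :
    (rect a b c d).map (reflection e).toEmbedding = rect (e - b) (e - a) c d := by
  ext z
  simp only [Finset.mem_map, mem_rect]
  exact ⟨fun ⟨_, _, h⟩ => by subst h; rw [reflection_apply]; omega,
    fun h => ⟨(e - z.1, z.2), by omega, Prod.ext (sub_sub_cancel e z.1) rfl⟩⟩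

lemma map_diagonalReflection_rect (a b c d : ℤ) :
    (rect a b c d).map diagonalReflection.toEmbedding = rect c d a b := by
  ext z
  simp only [Finset.mem_map, mem_rect]
  exact ⟨fun ⟨_, h, hz⟩ => by subst hz; exact h.symm, fun h => ⟨z.swap, h.symm, z.swap_swap⟩⟩

/-- The probability of `E` for percolation of parameter `p` on the edges of the square lattice
inside `S`. -/
noncomputable abbrev planarProb (p : ℝ) (S : Finset (ℤ × ℤ))
    (E : Set (Finset (Sym2 (ℤ × ℤ)))) : ℝ :=
  prob (fun _ => p) (edgesIn squareLattice S) E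

/-! #### The one-arm event -/

variable {A A' W : Finset (ℤ × ℤ)} {p : ℝ}

/-- The event that no point of `A` is joined to distance `n` from `x` inside the box of
radius `n` centred at `x`. -/
def isolated (A : Finset (ℤ × ℤ)) (x : ℤ × ℤ) (n : ℤ) : Set (Finset (Sym2 (ℤ × ℤ))) :=
  {ω | restrict ω (box x n) ∈ separated A (box x (n - 1) : Set (ℤ × ℤ))ᶜ}

/-- The probability that no point of `A` is joined to distance `n` from the origin. -/
noncomputable def isolationProb (p : ℝ) (A : Finset (ℤ × ℤ)) (n : ℤ) : ℝ :=
  planarProb p (box 0 n) (separated A (box 0 (n - 1) : Set (ℤ × ℤ))ᶜ)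

lemma planarProb_isolated_map (p : ℝ) (A : Finset (ℤ × ℤ)) (h : box x n ⊆ W) :
    planarProb p W (isolated (A.map (translation x).toEmbedding) x n) = isolationProb p A n := by
  have box_eq : ∀ m, box x m = (box 0 m).map (translation x).toEmbedding := fun m => by
    rw [map_translation_box, add_zero]
  calc _ = planarProb p (box x n) _ := prob_restrict squareLattice _ h _
    _ = isolationProb p A n := by
      rw [box_eq n, box_eq (n - 1), ← image_translation_compl]
      exact prob_separated_map _ _ _ _ _

lemma planarProb_isolated_zero (p : ℝ) (A : Finset (ℤ × ℤ)) (h : box 0 n ⊆ W) :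
    planarProb p W (isolated A 0 n) = isolationProb p A n :=
  prob_restrict squareLattice _ h _

lemma isolated_of_box_subset {ω : Finset (Sym2 (ℤ × ℤ))} {m : ℤ}
    (hω : ω ⊆ edgesIn squareLattice W) (hA : A' ⊆ A) (hxy : box x (m - 1) ⊆ box y (n - 1))
    (h : ω ∈ isolated A x m) : ω ∈ isolated A' y n := by
  rintro a ha ⟨t, ht, hat⟩
  refine h a (hA ha) (ConnTo.restrict_of_adj_mem hω (box_sub_one_subset x m)
    (fun _ hz _ => mem_box_of_adj hz) ?_)
  exact ⟨t, fun htx => ht (hxy htx), hat.mono (restrict_subset _ _)⟩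

lemma monotone_isolationProb (hp : p ∈ Icc (0 : ℝ) 1) (A : Finset (ℤ × ℤ)) :
    Monotone (isolationProb p A) := fun m n hmn => by
  rw [← planarProb_isolated_zero p A (box_subset_box (by simpa) (by simpa) : box 0 m ⊆ box 0 n),
    ← planarProb_isolated_zero p A subset_rfl]
  exact prob_mono (fun _ => hp) fun ω hω => isolated_of_box_subset hω subset_rfl
    (box_subset_box (by simpa) (by simpa))

lemma planarProb_isolated_inter_map_translation (p : ℝ) (A : Finset (ℤ × ℤ)) {K : ℤ}
    (hx : 2 * K < |x.1|) (h0W : box 0 K ⊆ W) (hxW : box x K ⊆ W) :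
    planarProb p W (isolated A 0 K ∩ isolated (A.map (translation x).toEmbedding) x K) =
      isolationProb p A K ^ 2 := by
  have disjoint_boxes : Disjoint (box 0 K : Set (ℤ × ℤ)) (box x K) := by
    refine disjoint_left.2 fun z h h' => ?_
    rw [SetLike.mem_coe, mem_box_zero] at h
    rw [SetLike.mem_coe, mem_box] at h'
    rw [lt_abs] at hx
    omega
  calc _ = planarProb p W (isolated A 0 K) *
        planarProb p W (isolated (A.map (translation x).toEmbedding) x K) :=
        prob_inter_restrict_of_disjoint _ _ disjoint_boxes _ _
    _ = _ := by rw [planarProb_isolated_zero p A h0W, planarProb_isolated_map p A hxW, sq]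

lemma isolationProb_union_map_translation_le (hp : p ∈ Icc (0 : ℝ) 1) (A : Finset (ℤ × ℤ))
    {K : ℤ} (hK : 0 ≤ K) (hKn : K ≤ n) :
    isolationProb p (A ∪ A.map (translation (2 * K + 1, 0)).toEmbedding) n ≤
      isolationProb p A K ^ 2 + (isolationProb p A n - isolationProb p A K) +
        (isolationProb p A (n + 2 * K + 1) - isolationProb p A K) := by
  set x : ℤ × ℤ := (2 * K + 1, 0)
  set W := box 0 (n + 4 * K + 2)
  have hx : |x.1| = 2 * K + 1 := abs_of_nonneg (by simp only [x]; omega)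
  have box_zero : ∀ {m}, m ≤ n → box 0 m ⊆ W := fun _ =>
    box_subset_box (by simp; omega) (by simp; omega)
  have box_x : ∀ {m}, m ≤ n + 2 * K + 1 → box x m ⊆ W := fun _ =>
    box_subset_box (by simp [hx]; omega) (by simp [x]; omega)
  set isolated_x := isolated (A.map (translation x).toEmbedding) x
  have prob_isolated : ∀ {m}, m ≤ n → planarProb p W (isolated A 0 m) = isolationProb p A m :=
    fun hm => planarProb_isolated_zero p A (box_zero hm)
  have prob_isolated_x : ∀ {m}, m ≤ n + 2 * K + 1 →
      planarProb p W (isolated_x m) = isolationProb p A m :=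
    fun hm => planarProb_isolated_map p A (box_x hm)
  have prob_inter : planarProb p W (isolated A 0 K ∩ isolated_x K) = isolationProb p A K ^ 2 :=
    planarProb_isolated_inter_map_translation p A (by omega) (box_zero hKn) (box_x (by omega))
  calc _ = planarProb p W (isolated (A ∪ A.map (translation x).toEmbedding) 0 n) :=
        (planarProb_isolated_zero p _ (box_zero le_rfl)).symm
    _ ≤ planarProb p W (isolated A 0 n ∩ isolated_x (n + 2 * K + 1)) :=
        prob_mono (fun _ => hp) fun ω hω h =>
          ⟨isolated_of_box_subset hω Finset.subset_union_left subset_rfl h,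
            isolated_of_box_subset hω Finset.subset_union_right
              (box_subset_box (by simp [hx]; omega) (by simp [x]; omega)) h⟩
    _ ≤ planarProb p W (isolated A 0 K ∩ isolated_x K) +
          (planarProb p W (isolated A 0 n) - planarProb p W (isolated A 0 K)) +
          (planarProb p W (isolated_x (n + 2 * K + 1)) - planarProb p W (isolated_x K)) :=
        prob_inter_le_add_sub (fun _ => hp)
          (fun ω hω => isolated_of_box_subset hω subset_rfl
            (box_subset_box (by simpa) (by simpa)))
          fun ω hω => isolated_of_box_subset hω subset_rfl
            (box_subset_box (by simp; omega) (by simp; omega))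
    _ = _ := by
        rw [prob_inter, prob_isolated le_rfl, prob_isolated hKn, prob_isolated_x le_rfl,
          prob_isolated_x (by omega)]

lemma isolationProb_mem_Icc (hp : p ∈ Icc (0 : ℝ) 1) (A : Finset (ℤ × ℤ)) (n : ℤ) :
    isolationProb p A n ∈ Icc (0 : ℝ) 1 :=
  ⟨prob_nonneg (fun _ => hp) _ _, prob_le_one (fun _ => hp) _ _⟩

/-- The probability that no point of `A` lies in an infinite cluster, as a limit of finite-volume
probabilities. -/
noncomputable def limIsolationProb (p : ℝ) (A : Finset (ℤ × ℤ)) : ℝ := ⨆ n, isolationProb p A n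

lemma bddAbove_range_isolationProb (hp : p ∈ Icc (0 : ℝ) 1) (A : Finset (ℤ × ℤ)) :
    BddAbove (range (isolationProb p A)) :=
  ⟨1, forall_mem_range.2 fun n => (isolationProb_mem_Icc hp A n).2⟩

lemma limIsolationProb_nonneg (hp : p ∈ Icc (0 : ℝ) 1) (A : Finset (ℤ × ℤ)) :
    0 ≤ limIsolationProb p A :=
  Real.iSup_nonneg fun n => (isolationProb_mem_Icc hp A n).1

/-- Two far away copies of `A` are isolated almost independently. -/
lemma exists_limIsolationProb_le_sq (hp : p ∈ Icc (0 : ℝ) 1) (A : Finset (ℤ × ℤ)) {η : ℝ}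
    (hη : 0 < η) : ∃ B, limIsolationProb p B ≤ limIsolationProb p A ^ 2 + η := by
  have tendsto_lim : Filter.Tendsto (isolationProb p A) Filter.atTop
      (nhds (limIsolationProb p A)) :=
    tendsto_atTop_ciSup (monotone_isolationProb hp A) (bddAbove_range_isolationProb hp A)
  obtain ⟨K, hK, hKη⟩ := ((Filter.eventually_ge_atTop 0).and
    (tendsto_lim.eventually (lt_mem_nhds (sub_lt_self _ (half_pos hη))))).exists
  refine ⟨A ∪ A.map (translation (2 * K + 1, 0)).toEmbedding, ciSup_le fun n => ?_⟩
  have le_lim : ∀ m, isolationProb p A m ≤ limIsolationProb p A :=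
    le_ciSup (bddAbove_range_isolationProb hp A)
  calc _ ≤ _ := monotone_isolationProb hp _ (le_max_left n K)
    _ ≤ _ := isolationProb_union_map_translation_le hp A hK (le_max_right n K)
    _ ≤ limIsolationProb p A ^ 2 + (limIsolationProb p A - isolationProb p A K) +
          (limIsolationProb p A - isolationProb p A K) := by
      gcongr
      exacts [(isolationProb_mem_Icc hp A K).1, le_lim K, le_lim _, le_lim _]
    _ ≤ _ := by linarith

/-- The infimum `β` of the isolation probabilities satisfies `β ≤ β²`, hence vanishes as soon as
`β < 1`. -/
lemma exists_limIsolationProb_lt (hp : p ∈ Icc (0 : ℝ) 1) (A : Finset (ℤ × ℤ))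
    (hA : limIsolationProb p A < 1) {ε : ℝ} (hε : 0 < ε) : ∃ B, limIsolationProb p B < ε := by
  refine exists_lt_of_ciInf_lt (lt_of_le_of_lt ?_ hε)
  set β := ⨅ A, limIsolationProb p A
  have bddBelow : BddBelow (range (limIsolationProb p)) :=
    ⟨0, forall_mem_range.2 (limIsolationProb_nonneg hp)⟩
  have β_le_sq : ∀ A, β ≤ limIsolationProb p A ^ 2 := fun A =>
    le_of_forall_pos_le_add fun η hη =>
      let ⟨B, hB⟩ := exists_limIsolationProb_le_sq hp A hη
      (ciInf_le bddBelow B).trans hB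
  have sqrt_β_le : √β ≤ β := le_ciInf fun A =>
    Real.sqrt_le_iff.2 ⟨limIsolationProb_nonneg hp A, β_le_sq A⟩
  have β_lt_one : β < 1 := (ciInf_le bddBelow A).trans_lt hA
  by_contra! β_pos
  exact sqrt_β_le.not_gt (Real.lt_sqrt_self_iff.2 ⟨β_pos.ne', β_lt_one⟩)

lemma exists_isolationProb_box_le (hp : p ∈ Icc (0 : ℝ) 1) {a : ℝ} (ha : a < 1)
    (h : ∀ n, isolationProb p {0} n ≤ a) {ε : ℝ} (hε : 0 < ε) :
    ∃ N, 0 ≤ N ∧ ∀ n, isolationProb p (box 0 N) n ≤ ε := by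
  obtain ⟨A, hA⟩ := exists_limIsolationProb_lt hp {0} ((ciSup_le h).trans_lt ha) hε
  obtain ⟨N, hN, hAN⟩ := exists_subset_box A
  exact ⟨N, hN, fun n => (prob_separated_anti_left (fun _ => hp) _ hAN _).trans
    ((le_ciSup (bddAbove_range_isolationProb hp A) n).trans hA.le)⟩

lemma isolationProb_zero_le {p₀ p₁ : ℝ} (h₀ : 0 ≤ p₀) (h₀₁ : p₀ ≤ p₁) (h₁ : p₁ ≤ 1)
    (hφ : ∀ S, 0 ∈ S → 1 ≤ phi squareLattice (fun _ => p₀) S 0) (n : ℤ) :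
    isolationProb p₁ {0} n ≤ Real.exp (p₀ - p₁) := by
  have hp₁ : p₁ ∈ Icc (0 : ℝ) 1 := ⟨h₀.trans h₀₁, h₁⟩
  refine (monotone_isolationProb hp₁ {0} (le_max_left n 1)).trans ?_
  set m := max n 1
  have zero_mem : (0 : ℤ × ℤ) ∈ box 0 (m - 1) := by simp [mem_box_zero, m]
  have one_sub_exp_le := one_sub_exp_le_prob_connTo (fun _ hz _ => mem_box_of_adj hz)
    (box_sub_one_subset 0 m) zero_mem h₀ h₀₁ h₁ hφ
  have separated_eq : separated {0} (box 0 (m - 1) : Set (ℤ × ℤ))ᶜ =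
      {ω | ConnTo ω 0 (box 0 (m - 1) : Set (ℤ × ℤ))ᶜ}ᶜ := by ext; simp [separated]
  rw [isolationProb, planarProb, separated_eq, prob_compl]
  linarith

/-! #### Reaching a given side -/

lemma prob_separated_left_pow_four_le (hp : p ∈ Icc (0 : ℝ) 1) (N n : ℤ) :
    planarProb p (box 0 n) (separated (box 0 N) {z | z.1 ≤ -n}) ^ 4 ≤
      isolationProb p (box 0 N) n := by
  have map_reflection_box : ∀ m, (box 0 m).map (reflection 0).toEmbedding = box 0 m := fun m => by
    simp [box, map_reflection_rect]
  have map_diagonal_box : ∀ m, (box 0 m).map diagonalReflection.toEmbedding = box 0 m :=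
    fun m => map_diagonalReflection_rect _ _ _ _
  set T : Set (ℤ × ℤ) := {z | z.1 ≤ -n}
  have image_T : (reflection 0).toEmbedding '' T = {z | n ≤ z.1} := by
    refine Set.ext fun z => ⟨?_, fun (h : n ≤ z.1) =>
      ⟨(0 - z.1, z.2), ?_, Prod.ext (sub_sub_cancel 0 z.1) rfl⟩⟩
    · rintro ⟨w, h, rfl⟩
      change w.1 ≤ -n at h
      change n ≤ 0 - w.1
      omega
    · change 0 - z.1 ≤ -n
      omega
  set T' := T ∪ (reflection 0).toEmbedding '' T with T'_def
  have T'_eq : T' = {z | z.1 ≤ -n ∨ n ≤ z.1} := by rw [T'_def, image_T]; rfl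
  have image_T' : diagonalReflection.toEmbedding '' T' = {z | z.2 ≤ -n ∨ n ≤ z.2} := by
    rw [T'_eq]
    exact Set.ext fun z => ⟨fun ⟨_, h, hz⟩ => hz ▸ h, fun h => ⟨z.swap, h, z.swap_swap⟩⟩
  calc _ = (planarProb p (box 0 n) (separated (box 0 N) T) ^ 2) ^ 2 := by ring
    _ ≤ planarProb p (box 0 n) (separated (box 0 N) T') ^ 2 := by
      gcongr
      exact sq_prob_separated_le _ hp (map_reflection_box n) (map_reflection_box N) T
    _ ≤ planarProb p (box 0 n) (separated (box 0 N) (T' ∪ diagonalReflection.toEmbedding '' T')) :=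
      sq_prob_separated_le _ hp (map_diagonal_box n) (map_diagonal_box N) T'
    _ = isolationProb p (box 0 N) n := by
      have union_eq : T' ∪ diagonalReflection.toEmbedding '' T' =
          (box 0 (n - 1) : Set (ℤ × ℤ))ᶜ := by
        rw [image_T', T'_eq]
        ext z
        simp only [mem_union, mem_ofPred_eq, mem_compl_iff, SetLike.mem_coe, mem_box_zero]
        omega
      rw [union_eq, isolationProb]

end SquareLattice

/-! ### Planar duality -/

section Duality

variable {n : ℤ} {ω η : Finset ((ℤ × ℤ) × Bool)} {f : (ℤ × ℤ) × Bool → ℤ}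

/-- The direction of a horizontal (`false`) or vertical (`true`) edge of the square lattice. -/
def direction : Bool → ℤ × ℤ
  | false => (1, 0)
  | true => (0, 1)

/-- The undirected edge with given lower left endpoint and direction. -/
def latticeEdge : (ℤ × ℤ) × Bool ↪ Sym2 (ℤ × ℤ) where
  toFun e := s(e.1, e.1 + direction e.2)
  inj' := by
    rintro ⟨⟨a, b⟩, x⟩ ⟨⟨c, d⟩, y⟩ h
    cases x <;> cases y <;> simp [direction] at h ⊢ <;> omega

lemma squareLattice_adj_iff_exists_direction {x y : ℤ × ℤ} :
    squareLattice.Adj x y ↔ ∃ b, y = x + direction b ∨ x = y + direction b := by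
  simp only [Bool.exists_bool, direction, squareLattice_adj, Prod.ext_iff, Prod.fst_add,
    Prod.snd_add]
  omega

/-- The rectangle `[-n, n + 1] × [-n, n]`, which is isomorphic to its planar dual. -/
noncomputable abbrev dualRect (n : ℤ) : Finset (ℤ × ℤ) := rect (-n) (n + 1) (-n) n

/-- The edges of `dualRect n`, as pairs of a vertex and a direction. -/
noncomputable def dualRectEdges (n : ℤ) : Finset ((ℤ × ℤ) × Bool) :=
  rect (-n) n (-n) n ×ˢ {false} ∪ rect (-n) (n + 1) (-n) (n - 1) ×ˢ {true}

lemma mem_dualRectEdges_false {x : ℤ × ℤ} :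
    (x, false) ∈ dualRectEdges n ↔ (-n ≤ x.1 ∧ x.1 ≤ n) ∧ -n ≤ x.2 ∧ x.2 ≤ n := by
  simp [dualRectEdges, mem_rect]

lemma mem_dualRectEdges_true {x : ℤ × ℤ} :
    (x, true) ∈ dualRectEdges n ↔ (-n ≤ x.1 ∧ x.1 ≤ n + 1) ∧ -n ≤ x.2 ∧ x.2 ≤ n - 1 := by
  simp [dualRectEdges, mem_rect]

lemma mem_dualRectEdges {x : ℤ × ℤ} {b : Bool} :
    (x, b) ∈ dualRectEdges n ↔ x ∈ dualRect n ∧ x + direction b ∈ dualRect n := by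
  cases b <;>
  · simp only [mem_dualRectEdges_false, mem_dualRectEdges_true, mem_rect, direction, Prod.fst_add,
      Prod.snd_add]
    omega

lemma edgesIn_dualRect (n : ℤ) :
    edgesIn squareLattice (dualRect n) = (dualRectEdges n).map latticeEdge := by
  ext e
  induction e with | _ x y
  simp only [mk_mem_edgesIn, squareLattice_adj_iff_exists_direction, Finset.mem_map]
  constructor
  · rintro ⟨⟨hx, hy⟩, b, rfl | rfl⟩
    · exact ⟨(x, b), mem_dualRectEdges.2 ⟨hx, hy⟩, rfl⟩
    · exact ⟨(y, b), mem_dualRectEdges.2 ⟨hy, hx⟩, Sym2.eq_swap⟩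
  · rintro ⟨⟨z, b⟩, h, hz⟩
    obtain ⟨rfl, rfl⟩ | ⟨rfl, rfl⟩ := Sym2.eq_iff.1 hz
    · exact ⟨mem_dualRectEdges.1 h, b, .inl rfl⟩
    · exact ⟨(mem_dualRectEdges.1 h).symm, b, .inr rfl⟩

/-! #### Flows -/

/-- The net flow out of the vertex `x`, when `f e` units flow through `e` in its positive
direction. -/
def divergence (f : (ℤ × ℤ) × Bool → ℤ) (x : ℤ × ℤ) : ℤ :=
  ∑ b, (f (x, b) - f (x - direction b, b))

lemma divergence_add (f g : (ℤ × ℤ) × Bool → ℤ) :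
    divergence (f + g) = divergence f + divergence g := by
  ext x
  simp only [divergence, Pi.add_apply, ← Finset.sum_add_distrib]
  exact Finset.sum_congr rfl fun _ _ => by ring

lemma divergence_single (x : ℤ × ℤ) (b : Bool) (c : ℤ) :
    divergence (Pi.single (x, b) c) = Pi.single x c - Pi.single (x + direction b) c := by
  ext y
  cases b <;> simp [divergence, Pi.single_apply, sub_eq_iff_eq_add]

lemma exists_flow_of_conn {x y : ℤ × ℤ} (h : Conn (η.map latticeEdge) x y) :
    ∃ f : (ℤ × ℤ) × Bool → ℤ, Function.support f ⊆ η ∧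
      divergence f = Pi.single x 1 - Pi.single y 1 := by
  induction h with
  | refl => exact ⟨0, by simp, by ext; simp [divergence]⟩
  | @tail y z _ hyz ih =>
    obtain ⟨f, support_f, div_f⟩ := ih
    have support_add : ∀ e ∈ η, ∀ c : ℤ, Function.support (f + Pi.single e c) ⊆ η :=
      fun e he c => (Function.support_add _ _).trans (union_subset support_f
        (Pi.support_single_subset.trans (singleton_subset_iff.2 he)))
    obtain ⟨⟨w, b⟩, he, hw⟩ := Finset.mem_map.1 hyz
    obtain ⟨rfl, rfl⟩ | ⟨rfl, rfl⟩ := Sym2.eq_iff.1 hw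
    · exact ⟨f + Pi.single (w, b) 1, support_add _ he _, by
        rw [divergence_add, div_f, divergence_single, sub_add_sub_cancel]⟩
    · exact ⟨f + Pi.single (w, b) (-1), support_add _ he _, by
        rw [divergence_add, div_f, divergence_single, Pi.single_neg, Pi.single_neg]
        abel⟩

/-- The potential on dual vertices whose increments are the flow `f` through the dual edges: the
flow to the right across the column of height `x.1 + n` standing on the bottom of `dualRect n`
between the abscissae `x.2` and `x.2 + 1`. -/
noncomputable def potential (n : ℤ) (f : (ℤ × ℤ) × Bool → ℤ) (x : ℤ × ℤ) : ℤ :=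
  ∑ i ∈ Finset.Ico (-n) x.1, f ((x.2, i), false)

lemma sum_Ico_int_add_one {a b : ℤ} (h : a ≤ b) (g : ℤ → ℤ) :
    ∑ i ∈ Finset.Ico a (b + 1), g i = ∑ i ∈ Finset.Ico a b, g i + g b := by
  rw [← Finset.insert_Ico_right_eq_Ico_add_one h, Finset.sum_insert Finset.right_notMem_Ico,
    add_comm]

lemma potential_left (f : (ℤ × ℤ) × Bool → ℤ) (b : ℤ) : potential n f (-n, b) = 0 := by
  simp [potential]

lemma potential_add_one {a : ℤ} (ha : -n ≤ a) (b : ℤ) :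
    potential n f (a + 1, b) = potential n f (a, b) + f ((b, a), false) :=
  sum_Ico_int_add_one ha _

lemma potential_sub_potential (hf : Function.support f ⊆ dualRectEdges n) {a : ℤ} (ha : -n ≤ a)
    (b : ℤ) :
    potential n f (a, b) - potential n f (a, b - 1) =
      ∑ i ∈ Finset.Ico (-n) a, divergence f (b, i) - f ((b, a - 1), true) := by
  induction a, ha using Int.leInduction with
  | base =>
    have bottom : f ((b, -n - 1), true) = 0 := by
      by_contra h
      have := (mem_dualRectEdges_true.1 (hf h)).2.1
      omega
    simp [potential_left, bottom]
  | succ a ha ih =>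
    rw [potential_add_one ha, potential_add_one ha, sum_Ico_int_add_one ha,
      add_sub_add_comm, ih]
    simp [divergence, direction]
    ring

lemma potential_right (hf : Function.support f ⊆ dualRectEdges n) {x y : ℤ × ℤ}
    (hx : x ∈ dualRect n) (hx₁ : x.1 = -n) (hy₁ : y.1 = n + 1)
    (div_f : divergence f = Pi.single x 1 - Pi.single y 1) {b : ℤ} (hb : -n ≤ b) (hbn : b ≤ n) :
    potential n f (n + 1, b) = 1 := by
  rw [mem_rect] at hx
  have sub_eq : ∀ b ≤ n, potential n f (n + 1, b) - potential n f (n + 1, b - 1) =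
      ∑ i ∈ Finset.Ico (-n) (n + 1), if i = x.2 ∧ b = x.1 then 1 else 0 := fun b hb => by
    have top : f ((b, n + 1 - 1), true) = 0 := by
      by_contra h
      have := (mem_dualRectEdges_true.1 (hf h)).2.2
      omega
    rw [potential_sub_potential hf (by omega), top, sub_zero]
    refine Finset.sum_congr rfl fun i _ => ?_
    have : (b, i) ≠ y := by rintro rfl; omega
    rw [div_f, Pi.sub_apply, Pi.single_eq_of_ne this, sub_zero, Pi.single_apply]
    exact if_congr (Prod.ext_iff.trans and_comm) rfl rfl
  induction b, hb using Int.leInduction with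
  | base =>
    have left : potential n f (n + 1, -n - 1) = 0 := Finset.sum_eq_zero fun i _ => by
      by_contra h
      have := (mem_dualRectEdges_false.1 (hf h)).1.1
      omega
    have mem_Ico : x.2 ∈ Finset.Ico (-n) (n + 1) := by rw [Finset.mem_Ico]; omega
    simpa [hx₁, left, mem_Ico] using sub_eq (-n) hbn
  | succ c hc ih =>
    have ne : c + 1 ≠ x.1 := by omega
    simpa [ne, ih (by omega), sub_eq_zero] using sub_eq (c + 1) hbn

/-! #### Crossings of a rectangle and of its dual -/

/-- The edge of the dual rectangle crossing a given edge of `dualRect n`, after identification of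
the dual rectangle with `dualRect n` by a reflection in a diagonal. The vertical edges on the
left and right sides of `dualRect n` have no dual edge, and are fixed. -/
def dualEdge (n : ℤ) : (ℤ × ℤ) × Bool → (ℤ × ℤ) × Bool
  | ((a, b), false) => ((b, a), false)
  | ((a, b), true) =>
    if (-n + 1 ≤ a ∧ a ≤ n) ∧ -n ≤ b ∧ b ≤ n - 1 then ((b + 1, a - 1), true) else ((a, b), true)

lemma dualEdge_involutive (n : ℤ) : Function.Involutive (dualEdge n) := by
  rintro ⟨⟨a, b⟩, _ | _⟩
  · rfl
  · by_cases h : (-n + 1 ≤ a ∧ a ≤ n) ∧ -n ≤ b ∧ b ≤ n - 1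
    · have h' : (-n + 1 ≤ b + 1 ∧ b + 1 ≤ n) ∧ -n ≤ a - 1 ∧ a - 1 ≤ n - 1 := by omega
      simp only [dualEdge, if_pos h, if_pos h', sub_add_cancel, add_sub_cancel_right]
    · simp only [dualEdge, if_neg h]

lemma dualEdge_mem_dualRectEdges {e : (ℤ × ℤ) × Bool} :
    dualEdge n e ∈ dualRectEdges n ↔ e ∈ dualRectEdges n := by
  obtain ⟨⟨a, b⟩, _ | _⟩ := e
  · simp only [dualEdge, mem_dualRectEdges_false]
    omega
  · rw [dualEdge]
    split_ifs
    · simp only [mem_dualRectEdges_true]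
      omega
    · rfl

lemma potential_eq_of_mem (hη : η ⊆ dualRectEdges n) (hω : ω ⊆ dualRectEdges n)
    (disjoint : ∀ e ∈ η, dualEdge n e ∉ ω) (hf : Function.support f ⊆ η) {x y : ℤ × ℤ}
    (hx₁ : x.1 = -n) (hy₁ : y.1 = n + 1) (div_f : divergence f = Pi.single x 1 - Pi.single y 1)
    {e : (ℤ × ℤ) × Bool} (he : e ∈ ω) :
    potential n f (e.1 + direction e.2) = potential n f e.1 := by
  have hfn := hf.trans (Finset.coe_subset.2 hη)
  obtain ⟨⟨a, b⟩, _ | _⟩ := e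
  · have := mem_dualRectEdges_false.1 (hω he)
    have flow_eq : f ((b, a), false) = 0 := by
      by_contra h
      exact disjoint _ (hf h) he
    simpa [direction, flow_eq] using potential_add_one (f := f) this.1.1 b
  · have := mem_dualRectEdges_true.1 (hω he)
    have flow_eq : f ((b + 1, a - 1), true) = 0 := by
      by_contra h
      have := mem_dualRectEdges_true.1 (hfn h)
      refine disjoint _ (hf h) ?_
      rwa [dualEdge, if_pos (by omega), sub_add_cancel, add_sub_cancel_right]
    have div_eq : ∀ i, divergence f (b + 1, i) = 0 := fun i => by
      have hx : (b + 1, i) ≠ x := by rintro rfl; omega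
      have hy : (b + 1, i) ≠ y := by rintro rfl; omega
      rw [div_f, Pi.sub_apply, Pi.single_eq_of_ne hx, Pi.single_eq_of_ne hy, sub_zero]
    simpa [direction, flow_eq, div_eq, sub_eq_zero] using
      potential_sub_potential hfn this.1.1 (b + 1)

/-- The event that the left and right sides of `dualRect n` are joined. -/
def crossing (n : ℤ) : Set (Finset (Sym2 (ℤ × ℤ))) :=
  {ω | ∃ x ∈ dualRect n, x.1 = -n ∧ ConnTo ω x {y | y.1 = n + 1}}

lemma isUpperSet_crossing (n : ℤ) : IsUpperSet (crossing n) :=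
  fun _ _ h ⟨x, hx, hx₁, hxy⟩ => ⟨x, hx, hx₁, hxy.mono h⟩

/-- A path crossing `η` carries a unit flow, whose potential is constant on the components of `ω`
but takes the values `0` on the left and `1` on the right. -/
lemma notMem_crossing_of_dualEdge (hη : η ⊆ dualRectEdges n) (hω : ω ⊆ dualRectEdges n)
    (disjoint : ∀ e ∈ η, dualEdge n e ∉ ω) (hηc : η.map latticeEdge ∈ crossing n) :
    ω.map latticeEdge ∉ crossing n := by
  rintro ⟨u, hu, hu₁, v, hv₁ : v.1 = n + 1, huv⟩
  obtain ⟨x, hx, hx₁, y, hy₁, hxy⟩ := hηc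
  obtain ⟨f, hf, div_f⟩ := exists_flow_of_conn hxy
  have potential_eq : potential n f v = potential n f u := by
    refine huv.mem_of_closed (S := {z | potential n f z = potential n f u})
      (fun z (hz : _ = _) w hzw => ?_) rfl
    obtain ⟨⟨t, b⟩, he, ht⟩ := Finset.mem_map.1 hzw
    have := potential_eq_of_mem hη hω disjoint hf hx₁ hy₁ div_f he
    obtain ⟨rfl, rfl⟩ | ⟨rfl, rfl⟩ := Sym2.eq_iff.1 ht
    · exact this.trans hz
    · exact this.symm.trans hz
  have hv : v ∈ dualRect n := huv.mem_of_subset_edgesIn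
    (edgesIn_dualRect n ▸ Finset.map_subset_map.2 hω) hu
  rw [mem_rect] at hv
  obtain ⟨u₁, u₂⟩ := u
  obtain ⟨v₁, v₂⟩ := v
  subst hu₁ hv₁
  have right_eq :=
    potential_right (hf.trans (Finset.coe_subset.2 hη)) hx hx₁ hy₁ div_f hv.2.1 hv.2.2
  rw [right_eq, potential_left] at potential_eq
  exact one_ne_zero potential_eq

theorem planarProb_crossing_le_half {p : ℝ} (hp : 0 ≤ p) (hp2 : p ≤ 1 / 2) (n : ℤ) :
    planarProb p (dualRect n) (crossing n) ≤ 1 / 2 := by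
  have hp' : ∀ _ : (ℤ × ℤ) × Bool, p ∈ Icc (0 : ℝ) 1 := fun _ => ⟨hp, by linarith⟩
  let σ := (dualEdge_involutive n).toPerm
  have map_σ : (dualRectEdges n).map σ.toEmbedding = dualRectEdges n := by
    ext e
    exact Finset.mem_map_equiv.trans dualEdge_mem_dualRectEdges
  set E := {A : Finset ((ℤ × ℤ) × Bool) | A.map latticeEdge ∈ crossing n}
  have prob_eq : planarProb p (dualRect n) (crossing n) =
      prob (fun _ => p) (dualRectEdges n) E := by
    rw [planarProb, edgesIn_dualRect, prob, expect_map]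
    rfl
  have prob_dual_eq : prob (fun _ => 1 - p) (dualRectEdges n) E =
      prob (fun _ => p) (dualRectEdges n) {A | (dualRectEdges n \ A).map σ.toEmbedding ∈ E} := by
    conv_lhs => rw [← map_σ, prob, expect_map]
    exact (expect_compl (fun _ => p) _ _).symm
  have prob_le : prob (fun _ => p) (dualRectEdges n) E ≤
      prob (fun _ => 1 - p) (dualRectEdges n) E :=
    prob_mono_weight hp' (fun _ => ⟨by linarith, by linarith⟩) (fun _ => by linarith) _
      fun _ _ h => isUpperSet_crossing n (Finset.map_subset_map.2 h)
  have prob_dual_le : prob (fun _ => 1 - p) (dualRectEdges n) E ≤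
      prob (fun _ => p) (dualRectEdges n) Eᶜ := by
    rw [prob_dual_eq]
    refine prob_mono hp' fun A hA h => notMem_crossing_of_dualEdge ?_ hA (fun e he => ?_) h
    · exact (Finset.map_subset_map.2 Finset.sdiff_subset).trans map_σ.subset
    · exact (Finset.mem_sdiff.1 (Finset.mem_map_equiv.1 he)).2
  rw [prob_compl] at prob_dual_le
  linarith

end Duality

/-! ### Disjoint arms and the number of boundary clusters -/

section Clusters

variable {V : Type*} {ω ω' D : Finset (Sym2 V)} {A T : Finset V} {x y : V}

/-- The clusters of `ω` that meet `T`. -/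
def clusters (T : Finset V) (ω : Finset (Sym2 V)) : Set (Set V) :=
  (fun x => {y | Conn ω x y}) '' T

/-- The number of clusters of `ω` that meet `T`. -/
noncomputable def numClusters (T : Finset V) (ω : Finset (Sym2 V)) : ℕ :=
  (clusters T ω).ncard

/-- The event that some two points of `A`, lying in different clusters, are connected to `T` and to
`T'` respectively. -/
def disjointArms (A : Finset V) (T T' : Set V) : Set (Finset (Sym2 V)) :=
  {ω | ∃ a ∈ A, ∃ b ∈ A, ConnTo ω a T ∧ ConnTo ω b T' ∧ ¬ Conn ω a b}

lemma finite_clusters (T : Finset V) (ω : Finset (Sym2 V)) : (clusters T ω).Finite :=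
  T.finite_toSet.image _

lemma numClusters_le_card (T : Finset V) (ω : Finset (Sym2 V)) : numClusters T ω ≤ T.card :=
  (Set.ncard_image_le T.finite_toSet).trans_eq (Set.ncard_coe_finset T)

lemma setOf_conn_eq (h : Conn ω x y) : {z | Conn ω x z} = {z | Conn ω y z} :=
  Set.ext fun _ => ⟨h.symm.trans, h.trans⟩

lemma setOf_conn_eq_of_subset (h : ω ⊆ ω') (x : V) :
    {z | ∃ y ∈ {y | Conn ω x y}, Conn ω' y z} = {z | Conn ω' x z} :=
  Set.ext fun _ => ⟨fun ⟨_, hxy, hyz⟩ => (hxy.mono h).trans hyz, fun hz => ⟨x, .refl ω x, hz⟩⟩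

lemma clusters_eq_image_of_subset (h : ω ⊆ ω') (T : Finset V) :
    clusters T ω' = (fun C => {z | ∃ y ∈ C, Conn ω' y z}) '' clusters T ω := by
  simp only [clusters, Set.image_image, setOf_conn_eq_of_subset h]

lemma antitone_numClusters (T : Finset V) : Antitone (numClusters T) := fun ω ω' h => by
  rw [numClusters, clusters_eq_image_of_subset h T]
  exact Set.ncard_image_le (finite_clusters T ω)

lemma numClusters_lt_of_conn (h : ω ⊆ ω') (hx : x ∈ T) (hy : y ∈ T) (hxy : ¬ Conn ω x y)
    (hxy' : Conn ω' x y) : numClusters T ω' < numClusters T ω := by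
  have subset_image : clusters T ω' ⊆
      (fun C => {z | ∃ y ∈ C, Conn ω' y z}) '' (clusters T ω \ {{z | Conn ω x z}}) := by
    rintro _ ⟨u, hu, rfl⟩
    by_cases hxu : Conn ω x u
    · refine ⟨{z | Conn ω y z}, ⟨⟨y, hy, rfl⟩, fun hC => hxy ?_⟩, ?_⟩
      · exact (hC ▸ Conn.refl ω y : y ∈ {z | Conn ω x z})
      · exact (setOf_conn_eq_of_subset h y).trans
          (setOf_conn_eq (hxy'.symm.trans (hxu.mono h)))
    · exact ⟨{z | Conn ω u z}, ⟨⟨u, hu, rfl⟩, fun hC => hxu (hC ▸ Conn.refl ω u :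
        u ∈ {z | Conn ω x z})⟩, setOf_conn_eq_of_subset h u⟩
  have finite_diff := (finite_clusters T ω).sdiff (t := {{z | Conn ω x z}})
  calc numClusters T ω' ≤ (clusters T ω \ {{z | Conn ω x z}}).ncard :=
        (Set.ncard_le_ncard subset_image (finite_diff.image _)).trans
          (Set.ncard_image_le finite_diff)
    _ < numClusters T ω := Set.ncard_sdiff_singleton_lt_of_mem ⟨x, hx, rfl⟩ (finite_clusters T ω)

variable [DecidableEq V]

lemma numClusters_union_lt_of_mem_disjointArms (hD : ∀ a ∈ A, ∀ b ∈ A, Conn D a b)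
    (h : ω ∈ disjointArms A T T) : numClusters T (ω ∪ D) < numClusters T ω := by
  obtain ⟨a, ha, b, hb, ⟨s, hs, has⟩, ⟨t, ht, hbt⟩, hab⟩ := h
  have hω : ω ⊆ ω ∪ D := Finset.subset_union_left
  refine numClusters_lt_of_conn hω hs ht (fun hst => hab ((has.trans hst).trans hbt.symm)) ?_
  exact ((has.symm.mono hω).trans ((hD a ha b hb).mono Finset.subset_union_right)).trans
    (hbt.mono hω)

lemma prob_disjointArms_le_expect_sub {P : Sym2 V → ℝ} (hP : ∀ e, P e ∈ Icc (0 : ℝ) 1)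
    (F : Finset (Sym2 V)) (hD : ∀ a ∈ A, ∀ b ∈ A, Conn D a b) :
    prob P F (disjointArms A T T) ≤
      expect P F (fun ω => (numClusters T ω : ℝ) - numClusters T (ω ∪ D)) := by
  refine expect_mono hP fun ω _ => Set.indicator_apply_le' (fun h => ?_) fun _ => ?_
  · have : (numClusters T (ω ∪ D) : ℝ) + 1 ≤ numClusters T ω := by
      exact_mod_cast numClusters_union_lt_of_mem_disjointArms hD h
    simpa only [Pi.one_apply] using le_sub_iff_add_le'.2 this
  · exact sub_nonneg.2 (Nat.cast_le.2 (antitone_numClusters T Finset.subset_union_left))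

end Clusters

section PlanarClusters

variable {p : ℝ} {N n : ℤ}

/-! #### Two disjoint arms -/

lemma box_subset_dualRect (n : ℤ) : box 0 n ⊆ dualRect n := fun x hx => by
  rw [mem_box_zero] at hx
  rw [mem_rect]
  lia

lemma planarProb_dualRect_separated_left_le (hp : p ∈ Icc (0 : ℝ) 1) (N n : ℤ) :
    planarProb p (dualRect n) (separated (box 0 N) {z | z.1 ≤ -n}) ≤
      planarProb p (box 0 n) (separated (box 0 N) {z | z.1 ≤ -n}) := by
  rw [planarProb, planarProb, ← prob_restrict squareLattice _ (box_subset_dualRect n)]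
  exact prob_mono (fun _ => hp) fun ω _ h => isLowerSet_separated _ _ (restrict_subset ω _) h

lemma image_reflection_left (n : ℤ) :
    reflection 1 '' {z | z.1 ≤ -n} = {z | n + 1 ≤ z.1} := by
  ext z
  refine ⟨?_, fun hz => ⟨(1 - z.1, z.2), ?_, ?_⟩⟩
  · rintro ⟨y, hy, rfl⟩
    rw [Set.mem_ofPred_eq] at hy ⊢
    change n + 1 ≤ 1 - y.1
    lia
  · rw [Set.mem_ofPred_eq] at hz ⊢
    lia
  · exact Prod.ext (sub_sub_cancel 1 z.1) rfl

lemma planarProb_dualRect_separated_right_le (hp : p ∈ Icc (0 : ℝ) 1) (N n : ℤ) :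
    planarProb p (dualRect n) (separated (box 0 (N + 1)) {z | n + 1 ≤ z.1}) ≤
      planarProb p (dualRect n) (separated (box 0 N) {z | z.1 ≤ -n}) := by
  have map_box_subset : (box 0 N).map (reflection 1).toEmbedding ⊆ box 0 (N + 1) := by
    intro z hz
    obtain ⟨y, hy, rfl⟩ := Finset.mem_map.1 hz
    rw [mem_box_zero] at hy ⊢
    rw [reflection_apply]
    lia
  have map_dualRect : (dualRect n).map (reflection 1).toEmbedding = dualRect n := by
    rw [map_reflection_rect, sub_neg_eq_add, add_comm 1 n, sub_add_cancel_right]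
  have key := prob_separated_map (reflection 1) (fun _ => p) (dualRect n) (box 0 N) {z | z.1 ≤ -n}
  rw [map_dualRect, image_reflection_left] at key
  exact (prob_separated_anti_left (fun _ => hp) _ map_box_subset _).trans_eq key

lemma mem_crossing_of_conn {ω : Finset (Sym2 (ℤ × ℤ))} (hω : ω ⊆ edgesIn squareLattice (dualRect n))
    {x y z : ℤ × ℤ} (hx : x ∈ dualRect n) (hxy : Conn ω x y) (hy : y.1 ≤ -n) (hxz : Conn ω x z)
    (hz : n + 1 ≤ z.1) : ω ∈ crossing n := by
  have hy' := hxy.mem_of_subset_edgesIn hω hx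
  have hz' := hxz.mem_of_subset_edgesIn hω hx
  exact ⟨y, hy', hy.antisymm (mem_rect.1 hy').1.1, z, (mem_rect.1 hz').1.2.antisymm hz,
    hxy.symm.trans hxz⟩

lemma mem_crossing_of_notMem_disjointArms {ω : Finset (Sym2 (ℤ × ℤ))}
    (hω : ω ⊆ edgesIn squareLattice (dualRect n)) {A : Finset (ℤ × ℤ)} (hA : A ⊆ dualRect n)
    (hleft : ω ∉ separated A {z | z.1 ≤ -n}) (hright : ω ∉ separated A {z | n + 1 ≤ z.1})
    (h : ω ∉ disjointArms A {z | z.1 ≤ -n} {z | n + 1 ≤ z.1}) : ω ∈ crossing n := by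
  simp only [separated, Set.mem_ofPred_eq, not_forall, not_not] at hleft hright
  obtain ⟨a, ha, y, hy, hay⟩ := hleft
  obtain ⟨b, hb, z, hz, hbz⟩ := hright
  have hab : Conn ω a b := by
    by_contra hab
    exact h ⟨a, ha, b, hb, ⟨y, hy, hay⟩, ⟨z, hz, hbz⟩, hab⟩
  exact mem_crossing_of_conn hω (hA ha) hay hy (hab.trans hbz) hz

lemma one_fourth_le_planarProb_dualRect_disjointArms (h₀ : 0 ≤ p) (hp : p ≤ 1 / 2) (hn : N < n)
    (h : planarProb p (box 0 n) (separated (box 0 N) {z | z.1 ≤ -n}) ≤ 1 / 8) :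
    1 / 4 ≤ planarProb p (dualRect n)
      (disjointArms (box 0 (N + 1)) {z | z.1 ≤ -n} {z | n + 1 ≤ z.1}) := by
  have hp' : p ∈ Icc (0 : ℝ) 1 := ⟨h₀, by linarith⟩
  have box_subset : box 0 (N + 1) ⊆ dualRect n :=
    (box_subset_box (by simpa using hn) (by simpa using hn)).trans (box_subset_dualRect n)
  set arms := disjointArms (box 0 (N + 1)) {z : ℤ × ℤ | z.1 ≤ -n} {z | n + 1 ≤ z.1}
  let left := separated (box 0 (N + 1)) {z : ℤ × ℤ | z.1 ≤ -n}
  let right := separated (box 0 (N + 1)) {z : ℤ × ℤ | n + 1 ≤ z.1}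
  have compl_le : planarProb p (dualRect n) armsᶜ ≤
      ∑ i, planarProb p (dualRect n) (![left, right, crossing n] i) := by
    refine prob_le_sum (fun _ => hp') fun ω hω harms => ?_
    by_cases hleft : ω ∈ left
    · exact ⟨0, Finset.mem_univ _, hleft⟩
    by_cases hright : ω ∈ right
    · exact ⟨1, Finset.mem_univ _, hright⟩
    exact ⟨2, Finset.mem_univ _,
      mem_crossing_of_notMem_disjointArms hω box_subset hleft hright harms⟩
  rw [planarProb, prob_compl, Fin.sum_univ_three] at compl_le
  have prob_sep := (planarProb_dualRect_separated_left_le hp' N n).trans h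
  have prob_left : planarProb p (dualRect n) left ≤ 1 / 8 :=
    (prob_separated_anti_left (fun _ => hp') _
      (box_subset_box (by simp) (by simp)) _).trans prob_sep
  have prob_right : planarProb p (dualRect n) right ≤ 1 / 8 :=
    (planarProb_dualRect_separated_right_le hp' N n).trans prob_sep
  have prob_crossing := planarProb_crossing_le_half h₀ hp n
  simp only [Matrix.cons_val] at compl_le
  linarith

/-- The inner boundary of the box of radius `n`. -/
noncomputable def sphere (n : ℤ) : Finset (ℤ × ℤ) := box 0 n \ box 0 (n - 1)

lemma card_box_zero (hn : 0 ≤ n) : ((box 0 n).card : ℤ) = (2 * n + 1) ^ 2 := by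
  have card_Icc : ((Finset.Icc (-n) n).card : ℤ) = 2 * n + 1 := by
    rw [Int.card_Icc, Int.toNat_of_nonneg (by lia)]
    ring
  simp only [box, rect, Prod.fst_zero, Prod.snd_zero, zero_sub, zero_add, Finset.card_product,
    Nat.cast_mul, card_Icc, sq]

lemma card_sphere (hn : 1 ≤ n) : ((sphere n).card : ℤ) = 8 * n := by
  have card_add : ((sphere n).card : ℤ) + (box 0 (n - 1)).card = (box 0 n).card :=
    mod_cast Finset.card_sdiff_add_card_eq_card (box_sub_one_subset 0 n)
  rw [card_box_zero (by lia), card_box_zero (by lia)] at card_add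
  linarith

lemma connTo_restrict_sphere {ω : Finset (Sym2 (ℤ × ℤ))} {W : Finset (ℤ × ℤ)}
    (hω : ω ⊆ edgesIn squareLattice W) {x : ℤ × ℤ} (hx : x ∈ box 0 n)
    (h : ConnTo ω x (box 0 (n - 1) : Set (ℤ × ℤ))ᶜ) :
    ConnTo (restrict ω (box 0 n)) x (sphere n) := by
  obtain ⟨y, hy, hxy⟩ := h.restrict_of_adj_mem hω (box_sub_one_subset 0 n) fun _ hy _ =>
    mem_box_of_adj hy
  exact ⟨y, Finset.mem_coe.2 (Finset.mem_sdiff.2 ⟨hxy.mem_of_restrict hx, hy⟩), hxy⟩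

/-- The rectangle is centred at `x`, and is large enough that its left and right sides lie outside
`box 0 n`. -/
lemma planarProb_dualRect_disjointArms_le (hp : p ∈ Icc (0 : ℝ) 1) {x : ℤ × ℤ} {m : ℤ}
    (hx : box x m ⊆ box 0 n) (hx₁ : |x.1| ≤ n) (hx₂ : |x.2| ≤ n) :
    planarProb p (dualRect (2 * n))
        (disjointArms (box 0 m) {z | z.1 ≤ -(2 * n)} {z | 2 * n + 1 ≤ z.1}) ≤
      planarProb p (box 0 n) (disjointArms (box x m) (sphere n) (sphere n)) := by
  rw [abs_le] at hx₁ hx₂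
  have box_subset : box 0 n ⊆ (dualRect (2 * n)).map (translation x).toEmbedding := by
    intro z hz
    rw [mem_box_zero] at hz
    rw [mem_map_translation, mem_rect, Prod.fst_sub, Prod.snd_sub]
    lia
  rw [planarProb, planarProb, ← prob_restrict squareLattice _ box_subset, prob_edgesIn_map]
  refine prob_mono (fun _ => hp) fun ω hω => ?_
  rintro ⟨a, ha, b, hb, ⟨y, hy, hay⟩, ⟨z, hz, hbz⟩, hab⟩
  set ψ := (translation x).toEmbedding
  have map_subset : ω.map ψ.sym2Map ⊆ edgesIn squareLattice ((dualRect (2 * n)).map ψ) := by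
    rw [edgesIn_map]
    exact Finset.map_subset_map.2 hω
  have map_mem {c : ℤ × ℤ} (hc : c ∈ box 0 m) : ψ c ∈ box x m := by
    rw [← add_zero x, ← map_translation_box]
    exact Finset.mem_map_of_mem _ hc
  have connTo_sphere {c u : ℤ × ℤ} (hc : c ∈ box 0 m) (hu : ψ u ∉ box 0 (n - 1))
      (hcu : Conn ω c u) : ConnTo (restrict (ω.map ψ.sym2Map) (box 0 n)) (ψ c) (sphere n) :=
    connTo_restrict_sphere map_subset (hx (map_mem hc)) ⟨ψ u, hu, conn_map_iff.2 hcu⟩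
  have hψ_apply (u : ℤ × ℤ) : (ψ u).1 = x.1 + u.1 := rfl
  refine ⟨ψ a, map_mem ha, ψ b, map_mem hb, connTo_sphere ha (fun h => ?_) hay,
    connTo_sphere hb (fun h => ?_) hbz,
    fun h => hab (conn_map_iff.1 (h.mono (restrict_subset _ _)))⟩
  all_goals
    rw [mem_box_zero, hψ_apply] at h
    rw [Set.mem_ofPred_eq] at hy hz
    lia

/-! #### Counting clusters in a grid of boxes -/

lemma conn_of_forall_conn_succ {V : Type*} {ω : Finset (Sym2 V)} {f : ℤ → V} {a b : ℤ}
    (hf : ∀ s, a ≤ s → s < b → Conn ω (f s) (f (s + 1))) {t : ℤ} (ha : a ≤ t) (hb : t ≤ b) :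
    Conn ω (f a) (f t) := by
  induction t, ha using Int.leInduction with
  | base => exact .refl ω _
  | succ s hs ih => exact (ih (by lia)).trans (hf s hs (by lia))

lemma conn_edgesIn_rect {a b c d : ℤ} {x y : ℤ × ℤ} (hx : x ∈ rect a b c d)
    (hy : y ∈ rect a b c d) : Conn (edgesIn squareLattice (rect a b c d)) x y := by
  have conn_corner {z : ℤ × ℤ} (hz : z ∈ rect a b c d) :
      Conn (edgesIn squareLattice (rect a b c d)) (a, c) z := by
    obtain ⟨⟨ha, hb⟩, hc, hd⟩ := mem_rect.1 hz
    refine (conn_of_forall_conn_succ (f := (·, c)) (fun s hs hsb => .single ?_) ha hb).trans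
      (conn_of_forall_conn_succ (f := (z.1, ·)) (fun s hs hsd => .single ?_) hc hd)
    all_goals
      simp only [mk_mem_edgesIn, mem_rect, squareLattice_adj]
      lia
  exact (conn_corner hx).symm.trans (conn_corner hy)

lemma disjoint_edgesIn {V : Type*} (G : SimpleGraph V) {S T : Finset V} (h : Disjoint S T) :
    Disjoint (edgesIn G S) (edgesIn G T) := by
  refine Finset.disjoint_left.2 fun e => Sym2.ind (fun x y hS hT => ?_) e
  exact Finset.disjoint_left.1 h (mk_mem_edgesIn.1 hS).1.1 (mk_mem_edgesIn.1 hT).1.1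

/-- Disjoint boxes of radius `N + 1` whose centres form a square grid. -/
noncomputable def gridBox (N : ℤ) (i : ℕ × ℕ) : Finset (ℤ × ℤ) :=
  box ((2 * N + 3) * i.1, (2 * N + 3) * i.2) (N + 1)

lemma disjoint_gridBox (hN : 0 ≤ N) {i j : ℕ × ℕ} (hij : i ≠ j) :
    Disjoint (gridBox N i) (gridBox N j) := by
  have le_of_close {s t u : ℤ} (hs : (2 * N + 3) * s - (N + 1) ≤ u)
      (ht : u ≤ (2 * N + 3) * t + (N + 1)) : s ≤ t := by
    by_contra! hts
    nlinarith
  refine Finset.disjoint_left.2 fun z hi hj => hij ?_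
  rw [gridBox, mem_box] at hi hj
  refine Prod.ext (Nat.cast_injective (R := ℤ) ?_) (Nat.cast_injective (R := ℤ) ?_)
  · exact (le_of_close hi.1.1 hj.1.2).antisymm (le_of_close hj.1.1 hi.1.2)
  · exact (le_of_close hi.2.1 hj.2.2).antisymm (le_of_close hj.2.1 hi.2.2)

lemma card_edgesIn_gridBox (N : ℤ) (i : ℕ × ℕ) :
    (edgesIn squareLattice (gridBox N i)).card = (edgesIn squareLattice (box 0 (N + 1))).card := by
  rw [gridBox, ← add_zero (_, _), ← map_translation_box, edgesIn_map, Finset.card_map]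

lemma abs_grid_le (hN : 0 ≤ N) {J t : ℕ} (ht : t ∈ Finset.range J) :
    |(2 * N + 3) * t| + (N + 1) ≤ (2 * N + 3) * (J + 1) := by
  have : (t : ℤ) ≤ J := by exact_mod_cast (Finset.mem_range.1 ht).le
  rw [abs_of_nonneg (by positivity)]
  nlinarith

/-- Merging the two arms around one grid box costs a cluster, so each of the `J ^ 2` boxes
contributes a fixed amount to the derivative. -/
lemma sum_expect_discreteDeriv_numClusters_le (h₀ : 0 ≤ p) (hp : p ≤ 1 / 2) (hN : 0 ≤ N)
    (h : ∀ n, planarProb p (box 0 n) (separated (box 0 N) {z | z.1 ≤ -n}) ≤ 1 / 8) (J : ℕ)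
    (hn : n = (2 * N + 3) * (J + 1)) :
    ∑ e ∈ edgesIn squareLattice (box 0 n), expect (fun _ => p) (edgesIn squareLattice (box 0 n))
        (discreteDeriv e fun ω => (numClusters (sphere n) ω : ℝ)) ≤
      -(J ^ 2 * (p ^ (edgesIn squareLattice (box 0 (N + 1))).card / 4)) := by
  have hp' : p ∈ Icc (0 : ℝ) 1 := ⟨h₀, by linarith⟩
  have abs_le {t : ℕ} (ht : t ∈ Finset.range J) : |(2 * N + 3) * t| + (N + 1) ≤ n :=
    hn ▸ abs_grid_le hN ht
  have subset {i : ℕ × ℕ} (hi : i ∈ Finset.range J ×ˢ Finset.range J) :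
      gridBox N i ⊆ box 0 n := by
    obtain ⟨hi₁, hi₂⟩ := Finset.mem_product.1 hi
    exact box_subset_box (by simpa using abs_le hi₁) (by simpa using abs_le hi₂)
  have antitone : Antitone fun ω => (numClusters (sphere n) ω : ℝ) :=
    fun _ _ hω => Nat.cast_le.2 (antitone_numClusters _ hω)
  refine (sum_expect_discreteDeriv_le_of_pairwiseDisjoint hp'
    (fun i hi => edgesIn_mono squareLattice (subset hi))
    (fun i _ j _ hij => disjoint_edgesIn squareLattice (disjoint_gridBox hN hij)) antitone).trans ?_
  have le_drop {i : ℕ × ℕ} (hi : i ∈ Finset.range J ×ˢ Finset.range J) :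
      1 / 4 ≤ expect (fun _ => p) (edgesIn squareLattice (box 0 n)) (fun ω =>
        (numClusters (sphere n) ω : ℝ) -
          numClusters (sphere n) (ω ∪ edgesIn squareLattice (gridBox N i))) := by
    obtain ⟨hi₁, hi₂⟩ := Finset.mem_product.1 hi
    calc 1 / 4 ≤ _ := one_fourth_le_planarProb_dualRect_disjointArms h₀ hp
          (by nlinarith : N < 2 * n) (h _)
      _ ≤ _ := planarProb_dualRect_disjointArms_le hp' (subset hi)
          (by linarith [abs_le hi₁]) (by linarith [abs_le hi₂])
      _ ≤ _ := prob_disjointArms_le_expect_sub (fun _ => hp') _ fun a ha b hb =>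
          conn_edgesIn_rect ha hb
  calc _ ≤ ∑ _i ∈ Finset.range J ×ˢ Finset.range J,
        -(p ^ (edgesIn squareLattice (box 0 (N + 1))).card * (1 / 4)) :=
        Finset.sum_le_sum fun i hi => by
          rw [card_edgesIn_gridBox]
          exact neg_le_neg (mul_le_mul_of_nonneg_left (le_drop hi) (pow_nonneg h₀ _))
    _ = _ := by
        rw [Finset.sum_const, Finset.card_product, Finset.card_range, nsmul_eq_mul]
        push_cast
        ring

lemma sub_mul_sq_le_of_prob_separated_le {p₁ : ℝ} (h₁ : 0 ≤ p₁) (h₁' : p₁ ≤ 1 / 2) (hN : 0 ≤ N)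
    (h : ∀ p, p₁ ≤ p → p ≤ 1 / 2 → ∀ n,
      planarProb p (box 0 n) (separated (box 0 N) {z | z.1 ≤ -n}) ≤ 1 / 8) (J : ℕ) :
    (1 / 2 - p₁) * (J ^ 2 * (p₁ ^ (edgesIn squareLattice (box 0 (N + 1))).card / 4)) ≤
      8 * ((2 * N + 3) * (J + 1)) := by
  obtain ⟨n, hn⟩ : ∃ n : ℤ, n = (2 * N + 3) * (J + 1) := ⟨_, rfl⟩
  have one_le : 1 ≤ n := by nlinarith
  set f : ℝ → ℝ := fun p => expect (fun _ => p) (edgesIn squareLattice (box 0 n))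
    fun ω => (numClusters (sphere n) ω : ℝ)
  have deriv_f := hasDerivAt_expect (edgesIn squareLattice (box 0 n))
    fun ω => (numClusters (sphere n) ω : ℝ)
  have sub_le := Convex.image_sub_le_mul_sub_of_deriv_le (f := f) (convex_Icc p₁ (1 / 2))
    (C := -(J ^ 2 * (p₁ ^ (edgesIn squareLattice (box 0 (N + 1))).card / 4)))
    (fun p _ => (deriv_f p).continuousAt.continuousWithinAt)
    (fun p _ => (deriv_f p).differentiableAt.differentiableWithinAt)
    (fun p hp => by
      obtain ⟨hp₁, hp₂⟩ := interior_subset hp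
      rw [(deriv_f p).deriv]
      refine (sum_expect_discreteDeriv_numClusters_le (h₁.trans hp₁) hp₂ hN (h p hp₁ hp₂) J
        hn).trans ?_
      gcongr)
    p₁ ⟨le_rfl, h₁'⟩ (1 / 2) ⟨h₁', le_rfl⟩ h₁'
  have f_le : f p₁ ≤ 8 * n := by
    refine (expect_mono (fun _ => ⟨h₁, by linarith⟩) fun ω _ =>
      Nat.cast_le.2 (numClusters_le_card (sphere n) ω)).trans_eq ?_
    rw [expect_const]
    exact_mod_cast card_sphere one_le
  have f_nonneg : 0 ≤ f (1 / 2) :=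
    expect_nonneg (fun _ => ⟨by norm_num, by norm_num⟩) fun ω _ => Nat.cast_nonneg _
  have : (n : ℝ) = (2 * N + 3) * (J + 1) := by exact_mod_cast hn
  linarith

lemma exists_nat_linear_lt_quadratic {a b : ℝ} (ha : 0 ≤ a) (hb : 0 < b) :
    ∃ J : ℕ, a * (J + 1) < b * J ^ 2 := by
  obtain ⟨J, hJ⟩ := exists_nat_gt (2 * a / b + 1)
  have one_lt : (1 : ℝ) < J := lt_of_le_of_lt (le_add_of_nonneg_left (by positivity)) hJ
  have lt_mul : 2 * a < b * J := by
    rw [mul_comm b, ← div_lt_iff₀ hb]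
    linarith
  exact ⟨J, by nlinarith⟩

theorem exists_phi_squareLattice_lt_one {p₀ : ℝ} (h₀ : 0 ≤ p₀) (hp : p₀ < 1 / 2) :
    ∃ S, 0 ∈ S ∧ phi squareLattice (fun _ => p₀) S 0 < 1 := by
  by_contra! hφ
  obtain ⟨p₁, h₀₁, h₁⟩ := exists_between hp
  have h₁' : p₁ ∈ Icc (0 : ℝ) 1 := ⟨by linarith, by linarith⟩
  obtain ⟨N, hN, isolation_le⟩ := exists_isolationProb_box_le h₁'
    (Real.exp_lt_one_iff.2 (sub_neg.2 h₀₁)) (isolationProb_zero_le h₀ h₀₁.le h₁'.2 hφ)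
    (by norm_num : (0 : ℝ) < (1 / 8) ^ 4)
  have separated_le (p : ℝ) (hp₁ : p₁ ≤ p) (hp₂ : p ≤ 1 / 2) (n : ℤ) :
      planarProb p (box 0 n) (separated (box 0 N) {z | z.1 ≤ -n}) ≤ 1 / 8 := by
    have hp' : p ∈ Icc (0 : ℝ) 1 := ⟨h₁'.1.trans hp₁, by linarith⟩
    refine le_of_pow_le_pow_left₀ four_ne_zero (by norm_num)
      ((prob_separated_left_pow_four_le hp' N n).trans (le_trans ?_ (isolation_le n)))
    exact prob_separated_anti_weight (fun _ => h₁') (fun _ => hp') (fun _ => hp₁) _ _ _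
  have pos : 0 < (1 / 2 - p₁) * (p₁ ^ (edgesIn squareLattice (box 0 (N + 1))).card / 4) := by
    have : 0 < p₁ := h₀.trans_lt h₀₁
    have : 0 < 1 / 2 - p₁ := sub_pos.2 h₁
    positivity
  have : (0 : ℝ) ≤ N := by exact_mod_cast hN
  obtain ⟨J, hJ⟩ := exists_nat_linear_lt_quadratic (a := 8 * (2 * N + 3)) (by positivity) pos
  have := sub_mul_sq_le_of_prob_separated_le h₁'.1 h₁.le hN separated_le J
  linarith

end PlanarClusters

/-! ### Percolation on the slab -/

section Slab

variable {k : ℕ} {p q : ℝ} {x y : Vtx}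

/-- The projection of `ℤ³` onto its first two coordinates. -/
def proj (v : Vtx) : ℤ × ℤ := (v.1, v.2.1)

/-- The slab `S^k`, as a graph on `ℤ³`. -/
def slabGraph (k : ℕ) : SimpleGraph Vtx where
  Adj x y := (InSlab k x ∧ InSlab k y) ∧
    ((x.2.2 = y.2.2 ∧ squareLattice.Adj (proj x) (proj y)) ∨
      (proj x = proj y ∧ (y.2.2 = x.2.2 + 1 ∨ x.2.2 = y.2.2 + 1)))
  symm := ⟨fun _ _ ⟨h, h'⟩ => ⟨h.symm, h'.imp (And.imp Eq.symm SimpleGraph.Adj.symm)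
    (And.imp Eq.symm Or.symm)⟩⟩
  loopless := ⟨fun x ⟨_, h⟩ => h.elim (fun h => h.2.ne rfl) (fun h => by omega)⟩

/-- The subgraph of the horizontal edges of `S^k`, a disjoint union of `k + 1` square lattices. -/
def horizontalGraph (k : ℕ) : SimpleGraph Vtx where
  Adj x y := (InSlab k x ∧ InSlab k y) ∧ x.2.2 = y.2.2 ∧ squareLattice.Adj (proj x) (proj y)
  symm := ⟨fun _ _ ⟨h, h'⟩ => ⟨h.symm, h'.imp Eq.symm SimpleGraph.Adj.symm⟩⟩
  loopless := ⟨fun _ h => h.2.2.ne rfl⟩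

lemma horizontalGraph_le (k : ℕ) : horizontalGraph k ≤ slabGraph k :=
  fun _ _ h => ⟨h.1, Or.inl h.2⟩

/-- The part of the slab `S^k` above `S`. -/
noncomputable def cylinder (k : ℕ) (S : Finset (ℤ × ℤ)) : Finset Vtx :=
  (S ×ˢ Finset.Icc (0 : ℤ) k).map (Equiv.prodAssoc ℤ ℤ ℤ).toEmbedding

lemma mem_cylinder {S : Finset (ℤ × ℤ)} {v : Vtx} :
    v ∈ cylinder k S ↔ proj v ∈ S ∧ InSlab k v := by
  rw [cylinder, Finset.mem_map_equiv, Finset.mem_product, Finset.mem_Icc]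
  rfl

lemma cylinder_subset_cylinder {S T : Finset (ℤ × ℤ)} (h : S ⊆ T) (k : ℕ) :
    cylinder k S ⊆ cylinder k T := fun _ hv =>
  mem_cylinder.2 ⟨h (mem_cylinder.1 hv).1, (mem_cylinder.1 hv).2⟩

lemma proj_mem_box_of_adj {z : ℤ × ℤ} {n : ℤ} (hx : proj x ∈ box z (n - 1))
    (h : (slabGraph k).Adj x y) : proj y ∈ box z n := by
  obtain ⟨-, ⟨-, h⟩ | ⟨h, -⟩⟩ := h
  · exact mem_box_of_adj hx h
  · exact h ▸ box_sub_one_subset z n hx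

noncomputable instance : (slabGraph k).LocallyFinite := fun x =>
  ((cylinder k (box (proj x) 1)).finite_toSet.subset fun _ h => mem_cylinder.2
    ⟨proj_mem_box_of_adj (n := 1) (by simp [mem_box]) h, h.1.2⟩).fintype

noncomputable instance : (horizontalGraph k).LocallyFinite := fun x =>
  (((slabGraph k).neighborSet x).toFinite.subset
    fun _ h => horizontalGraph_le k h).fintype

open Classical in
/-- The opening probabilities of anisotropic percolation on the slab: `q` on vertical edges and `p`
on horizontal ones. -/
noncomputable def edgeWeight (p q : ℝ) : Sym2 Vtx → ℝ :=
  Sym2.lift ⟨fun x y => if proj x = proj y then q else p, fun x y => by simp only [eq_comm]⟩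

lemma edgeWeight_of_proj_eq (h : proj x = proj y) : edgeWeight p q s(x, y) = q := if_pos h

lemma edgeWeight_of_proj_ne (h : proj x ≠ proj y) : edgeWeight p q s(x, y) = p := if_neg h

lemma edgeWeight_mem_Icc (hp : p ∈ Icc (0 : ℝ) 1) (hq : q ∈ Icc (0 : ℝ) 1) (e : Sym2 Vtx) :
    edgeWeight p q e ∈ Icc (0 : ℝ) 1 := by
  induction e using Sym2.inductionOn with
  | hf x y =>
    by_cases h : proj x = proj y
    · rwa [edgeWeight_of_proj_eq h]
    · rwa [edgeWeight_of_proj_ne h]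

lemma continuous_edgeWeight (p : ℝ) (e : Sym2 Vtx) : Continuous fun q => edgeWeight p q e := by
  induction e using Sym2.inductionOn with
  | hf x y =>
    by_cases h : proj x = proj y
    · simp only [edgeWeight_of_proj_eq h, continuous_id']
    · simp only [edgeWeight_of_proj_ne h, continuous_const]

/-! #### Comparison with the square lattice -/

/-- The horizontal layer of `S^k` at height `j`. -/
def layer (k : ℕ) (j : Fin (k + 1)) : squareLattice ↪g horizontalGraph k where
  toFun x := (x.1, x.2, j)
  inj' _ _ h := congrArg proj h
  map_rel_iff' {x y} := by
    have inSlab (z : ℤ × ℤ) : InSlab k (z.1, z.2, (j : ℤ)) := ⟨by positivity, by simp; omega⟩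
    exact ⟨fun h => h.2.2, fun h => ⟨⟨inSlab x, inSlab y⟩, rfl, h⟩⟩

lemma layer_apply (j : Fin (k + 1)) (x : ℤ × ℤ) : layer k j x = (x.1, x.2, (j : ℤ)) := rfl

lemma proj_layer (j : Fin (k + 1)) (x : ℤ × ℤ) : proj (layer k j x) = x := rfl

lemma exists_layer_eq {v : Vtx} (hv : InSlab k v) : ∃ j, layer k j (proj v) = v := by
  refine ⟨⟨v.2.2.toNat, ?_⟩, ?_⟩
  · have := hv.2
    omega
  · have : (v.2.2.toNat : ℤ) = v.2.2 := Int.toNat_of_nonneg hv.1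
    rw [layer_apply, this]
    rfl

lemma layer_mem_cylinder (j : Fin (k + 1)) {S : Finset (ℤ × ℤ)} {x : ℤ × ℤ} :
    layer k j x ∈ cylinder k S ↔ x ∈ S := by
  rw [mem_cylinder, proj_layer]
  exact and_iff_left ⟨by simp [layer_apply], by simp [layer_apply]; omega⟩

lemma phi_slabGraph_zero (p : ℝ) {S : Finset (ℤ × ℤ)} (hS : 0 ∈ S) (j : Fin (k + 1)) :
    phi (slabGraph k) (edgeWeight p 0) (cylinder k S) (layer k j 0) =
      phi squareLattice (fun _ => p) S 0 := by
  have weight_zero : ∀ x y, (slabGraph k).Adj x y → ¬ (horizontalGraph k).Adj x y →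
      edgeWeight p 0 s(x, y) = 0 := by
    rintro x y ⟨hxy, h | h⟩ hH
    · exact absurd ⟨hxy, h⟩ hH
    · exact edgeWeight_of_proj_eq h.1
  have adj_mem_range : ∀ x y, (horizontalGraph k).Adj (layer k j x) y → y ∈ range (layer k j) :=
    fun x y h => ⟨proj y, Prod.ext rfl (Prod.ext rfl h.2.1)⟩
  rw [phi_eq_of_le (horizontalGraph_le k) weight_zero,
    phi_eq_of_adj_mem_range _ adj_mem_range (fun _ => layer_mem_cylinder j) _ hS]
  refine phi_congr_weight (fun e he => ?_) S 0
  induction e using Sym2.inductionOn with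
  | hf x y => exact edgeWeight_of_proj_ne (SimpleGraph.mem_edgeSet _ |>.1 he).ne

lemma exists_phi_slabGraph_le (hp₀ : 0 ≤ p) (hp : p < 1 / 2) (k : ℕ) :
    ∃ S : Finset (ℤ × ℤ), 0 ∈ S ∧ ∃ c : ℝ, 0 ≤ c ∧ c < 1 ∧ ∃ q : ℝ, 0 < q ∧ q ≤ 1 ∧
      ∀ j, phi (slabGraph k) (edgeWeight p q) (cylinder k S) (layer k j 0) ≤ c := by
  obtain ⟨S, hS, hlt⟩ := exists_phi_squareLattice_lt_one hp₀ hp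
  obtain ⟨c, hSc, hc⟩ := exists_between hlt
  have hc₀ : 0 ≤ c := (phi_nonneg (fun _ => ⟨hp₀, by linarith⟩) S 0).trans hSc.le
  have phi_lt (j : Fin (k + 1)) : ∀ᶠ q in nhds (0 : ℝ),
      phi (slabGraph k) (edgeWeight p q) (cylinder k S) (layer k j 0) < c :=
    (continuous_phi (continuous_edgeWeight p) _ _).continuousAt.eventually_lt_const
      ((phi_slabGraph_zero p hS j).trans_lt hSc)
  obtain ⟨q, ⟨hφ, hq⟩, hq₀⟩ := (((Filter.eventually_all.2 phi_lt).and
    (eventually_le_nhds zero_lt_one)).filter_mono nhdsWithin_le_nhds).and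
      (eventually_mem_nhdsWithin (s := Ioi 0)) |>.exists
  exact ⟨S, hS, c, hc₀, hc, q, hq₀, hq, fun j => (hφ j).le⟩

/-! #### Exponential decay in the slab -/

/-- Horizontal translation of the slab. -/
def slabTranslation (k : ℕ) (x : ℤ × ℤ) : slabGraph k ↪g slabGraph k where
  toEmbedding := addLeftEmbedding (x.1, x.2, 0)
  map_rel_iff' := by
    simp [slabGraph, proj, squareLattice_adj, InSlab, add_assoc]

lemma proj_slabTranslation (x : ℤ × ℤ) (v : Vtx) : proj (slabTranslation k x v) = x + proj v := rfl

lemma phi_map_slabTranslation (p q : ℝ) (x : ℤ × ℤ) {S : Finset Vtx} {o : Vtx} (ho : o ∈ S) :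
    phi (slabGraph k) (edgeWeight p q) (S.map (slabTranslation k x).toEmbedding)
      (slabTranslation k x o) = phi (slabGraph k) (edgeWeight p q) S o := by
  have weight_invariant :
      edgeWeight p q ∘ (slabTranslation k x).toEmbedding.sym2Map = edgeWeight p q := by
    ext e
    induction e using Sym2.inductionOn with
    | hf u v => exact if_congr (add_right_inj (b := proj u) (c := proj v) x) rfl rfl
  rw [phi_eq_of_adj_mem_range (slabTranslation k x)
    (fun _ y _ => (AddGroup.addLeft_bijective (x.1, x.2, 0)).surjective y)
    (fun _ => Finset.mem_map' _) _ ho, weight_invariant]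

lemma exists_subset_phi_slabGraph_le {S : Finset (ℤ × ℤ)} (hS : 0 ∈ S) {r : ℤ} (hSr : S ⊆ box 0 r)
    {c : ℝ} (hφ : ∀ j, phi (slabGraph k) (edgeWeight p q) (cylinder k S) (layer k j 0) ≤ c)
    {v : Vtx} (hv : InSlab k v) :
    ∃ S' ⊆ cylinder k (box (proj v) r), v ∈ S' ∧ phi (slabGraph k) (edgeWeight p q) S' v ≤ c := by
  obtain ⟨j, hj⟩ := exists_layer_eq hv
  have translate_layer : slabTranslation k (proj v) (layer k j 0) = v := by
    rw [← hj]; simp [slabTranslation, layer_apply, proj]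
  have layer_mem : layer k j 0 ∈ cylinder k S := (layer_mem_cylinder j).2 hS
  refine ⟨(cylinder k S).map (slabTranslation k (proj v)).toEmbedding, fun w hw => ?_,
    Finset.mem_map.2 ⟨_, layer_mem, translate_layer⟩, ?_⟩
  · obtain ⟨u, hu, rfl⟩ := Finset.mem_map.1 hw
    obtain ⟨huS, hu_slab⟩ := mem_cylinder.1 hu
    have hur := mem_box_zero.1 (hSr huS)
    refine mem_cylinder.2 ⟨mem_box.2 ?_, ?_⟩
    · simp only [RelEmbedding.coe_toEmbedding, proj_slabTranslation, Prod.fst_add, Prod.snd_add]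
      omega
    · simpa [slabTranslation, InSlab] using hu_slab
  · exact (congrArg _ translate_layer.symm).trans_le
      ((phi_map_slabTranslation p q (proj v) layer_mem).trans_le (hφ j))

lemma prob_connTo_compl_cylinder_le_pow (hp : p ∈ Icc (0 : ℝ) 1) (hq : q ∈ Icc (0 : ℝ) 1)
    {S : Finset (ℤ × ℤ)} (hS : 0 ∈ S) {r : ℤ} (hr : 0 ≤ r) (hSr : S ⊆ box 0 r) {c : ℝ} (hc : 0 ≤ c)
    (hφ : ∀ j, phi (slabGraph k) (edgeWeight p q) (cylinder k S) (layer k j 0) ≤ c) (m : ℕ) :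
    prob (edgeWeight p q) (edgesIn (slabGraph k) (cylinder k (box 0 (m * (r + 1) + 1))))
      {ω | ConnTo ω 0 (cylinder k (box 0 (m * (r + 1))) : Set Vtx)ᶜ} ≤ c ^ m := by
  set n : ℤ := m * (r + 1)
  refine prob_connTo_le_pow (edgeWeight_mem_Icc hp hq) hc
    (D := fun i => cylinder k (box 0 (n - i * (r + 1)))) ?_ m ?_
  · intro i o ho
    obtain ⟨ho_box, ho_slab⟩ := mem_cylinder.1 ho
    obtain ⟨S', hS', hoS', hφS'⟩ := exists_subset_phi_slabGraph_le hS hSr hφ ho_slab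
    have inner : ∀ v ∈ S', proj v ∈ box 0 (n - i * (r + 1) - 1) := fun v hv => by
      have hvo := mem_box.1 (mem_cylinder.1 (hS' hv)).1
      rw [mem_box_zero] at ho_box ⊢
      push_cast at ho_box
      lia
    have : 0 ≤ i * (r + 1) := by positivity
    have box_mono : box 0 (n - i * (r + 1) - 1) ⊆ box 0 n :=
      box_subset_box (by simp; lia) (by simp; lia)
    have subset : S' ⊆ cylinder k (box 0 n) := fun v hv =>
      mem_cylinder.2 ⟨box_mono (inner v hv), (mem_cylinder.1 (hS' hv)).2⟩
    refine ⟨S', subset.trans (cylinder_subset_cylinder (box_subset_box (by simp) (by simp)) k),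
      hoS', disjoint_compl_left_iff_subset.2 subset, hφS', fun z hz => ?_⟩
    obtain ⟨hz₁, -, hadj⟩ := mem_boundary.1 hz
    exact mem_cylinder.2 ⟨proj_mem_box_of_adj (inner _ hz₁) hadj, hadj.1.2⟩
  · exact mem_cylinder.2 ⟨by simp [n, mem_box, proj], by simp [InSlab]⟩

lemma exists_forall_exists_prob_connTo_le (hp₀ : 0 ≤ p) (hp : p < 1 / 2) (k : ℕ) :
    ∃ q : ℝ, 0 < q ∧ q ≤ 1 ∧ ∀ ε > 0, ∃ n : ℤ,
      prob (edgeWeight p q) (edgesIn (slabGraph k) (cylinder k (box 0 (n + 1))))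
        {ω | ConnTo ω 0 (cylinder k (box 0 n) : Set Vtx)ᶜ} ≤ ε := by
  obtain ⟨S, hS, c, hc₀, hc₁, q, hq₀, hq₁, hφ⟩ := exists_phi_slabGraph_le hp₀ hp k
  obtain ⟨r, hr, hSr⟩ := exists_subset_box S
  refine ⟨q, hq₀, hq₁, fun ε hε => ?_⟩
  obtain ⟨m, hm⟩ := exists_pow_lt_of_lt_one hε hc₁
  exact ⟨m * (r + 1), (prob_connTo_compl_cylinder_le_pow ⟨hp₀, by linarith⟩
    ⟨hq₀.le, hq₁⟩ hS hr hSr hc₀ hφ m).trans hm.le⟩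

end Slab

/-! ### The product Bernoulli measure -/

section Digits

/-- The uniform distribution on `[0, 1)`. -/
noncomputable def unitUniform : Measure ℝ := volume.restrict (Ico 0 1)

instance : IsProbabilityMeasure unitUniform := ⟨by simp [unitUniform]⟩

lemma unitUniform_congr {A B : Set ℝ} (h : ∀ x ∈ Ico (0 : ℝ) 1, x ∈ A ↔ x ∈ B) :
    unitUniform A = unitUniform B :=
  measure_congr <| ae_restrict_of_forall_mem measurableSet_Ico fun x hx => propext (h x hx)

lemma unitUniform_Iio {r : ℝ} (hr : r ≤ 1) : unitUniform (Iio r) = ENNReal.ofReal r := by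
  have inter_eq : Iio r ∩ Ico 0 1 = Ico 0 r := by
    ext x
    exact ⟨fun h => ⟨h.2.1, h.1⟩, fun h => ⟨h.2, h.1, h.2.trans_le hr⟩⟩
  rw [unitUniform, Measure.restrict_apply measurableSet_Iio, inter_eq, Real.volume_Ico, sub_zero]

/-- The distribution of a fair coin. -/
noncomputable def fairCoin : Measure Bool := ∑ b, (2⁻¹ : ℝ≥0∞) • Measure.dirac b

lemma fairCoin_apply (s : Set Bool) : fairCoin s = ∑ b, 2⁻¹ * s.indicator 1 b := by
  simp [fairCoin]

instance : IsProbabilityMeasure fairCoin :=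
  ⟨by simpa [fairCoin_apply] using ENNReal.mul_inv_cancel two_ne_zero ENNReal.ofNat_ne_top⟩

/-- The map inserting `b` before the binary digits of a point of `[0, 1)`. -/
noncomputable def prependDigit (b : Bool) (x : ℝ) : ℝ := (x + b.toNat) / 2

lemma measurable_binDigit (n : ℕ) : Measurable (binDigit n) :=
  (measurable_of_countable fun z : ℤ => decide (z % 2 = 1)).comp
    (show Measurable fun x : ℝ => ⌊x * 2 ^ (n + 1)⌋ by fun_prop)

lemma binDigit_zero_prependDigit (b : Bool) {x : ℝ} (hx : x ∈ Ico (0 : ℝ) 1) :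
    binDigit 0 (prependDigit b x) = b := by
  have floor_eq : ⌊prependDigit b x * 2 ^ (0 + 1)⌋ = b.toNat := by
    rw [prependDigit, zero_add, pow_one, div_mul_cancel₀ _ two_ne_zero, Int.floor_add_natCast,
      Int.floor_eq_zero_iff.2 hx, zero_add]
  rw [binDigit, floor_eq]
  cases b <;> rfl

lemma binDigit_succ_prependDigit (b : Bool) (n : ℕ) (x : ℝ) :
    binDigit (n + 1) (prependDigit b x) = binDigit n x := by
  have mul_eq : prependDigit b x * 2 ^ (n + 1 + 1) =
      x * 2 ^ (n + 1) + ((2 * (2 ^ n * b.toNat) : ℤ) : ℝ) := by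
    rw [prependDigit]
    push_cast
    ring
  rw [binDigit, mul_eq, Int.floor_add_intCast, Int.add_mul_emod_self_left, binDigit]

lemma unitUniform_preimage_prependDigit (b : Bool) (A : Set ℝ) :
    unitUniform (prependDigit b ⁻¹' A) =
      2 * volume (A ∩ Ico ((b.toNat : ℝ) / 2) ((b.toNat + 1) / 2)) := by
  have preimage_eq : prependDigit b ⁻¹' A ∩ Ico 0 1 =
      (· + (b.toNat : ℝ)) ⁻¹' (((2⁻¹ : ℝ) * ·) ⁻¹'
        (A ∩ Ico ((b.toNat : ℝ) / 2) ((b.toNat + 1) / 2))) := by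
    ext x
    simp only [prependDigit, mem_inter_iff, mem_preimage, mem_Ico, inv_mul_eq_div,
      div_le_div_iff_of_pos_right (zero_lt_two' ℝ), div_lt_div_iff_of_pos_right (zero_lt_two' ℝ),
      le_add_iff_nonneg_left, add_comm (b.toNat : ℝ) 1, add_lt_add_iff_right]
  rw [unitUniform, Measure.restrict_apply' measurableSet_Ico, preimage_eq,
    measure_preimage_add_right, Real.volume_preimage_mul_left (by simp)]
  simp

lemma unitUniform_eq_sum_prependDigit (A : Set ℝ) :
    unitUniform A = ∑ b, 2⁻¹ * unitUniform (prependDigit b ⁻¹' A) := by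
  have Ico_diff : Ico (0 : ℝ) 1 \ Ico 0 (1 / 2) = Ico (1 / 2) 1 := by
    ext x
    simp only [mem_sdiff, mem_Ico]
    grind
  have Ico_inter : Ico (0 : ℝ) 1 ∩ Ico 0 (1 / 2) = Ico 0 (1 / 2) :=
    inter_eq_right.2 (Ico_subset_Ico_right (by norm_num))
  rw [unitUniform, Measure.restrict_apply' measurableSet_Ico,
    ← measure_inter_add_sdiff _ (measurableSet_Ico (a := (0 : ℝ)) (b := 1 / 2)), inter_assoc,
    inter_sdiff_assoc, Ico_diff, Ico_inter, ← unitUniform]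
  simp only [unitUniform_preimage_prependDigit, ← mul_assoc,
    ENNReal.inv_mul_cancel two_ne_zero ENNReal.ofNat_ne_top, one_mul, Fintype.sum_bool]
  rw [add_comm]
  norm_num

lemma unitUniform_preimage_prependDigit_cylinder (b : Bool) (N : ℕ) (t : ℕ → Set Bool) :
    unitUniform (prependDigit b ⁻¹' {x | ∀ i < N + 1, binDigit i x ∈ t i}) =
      (t 0).indicator 1 b * unitUniform {x | ∀ i < N, binDigit i x ∈ t (i + 1)} := by
  have mem_iff : ∀ x ∈ Ico (0 : ℝ) 1,
      (∀ i < N + 1, binDigit i (prependDigit b x) ∈ t i) ↔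
        b ∈ t 0 ∧ ∀ i < N, binDigit i x ∈ t (i + 1) := fun x hx => by
    simp only [Nat.forall_lt_succ_left, binDigit_zero_prependDigit b hx, binDigit_succ_prependDigit]
  by_cases hb : b ∈ t 0
  · rw [indicator_of_mem hb, Pi.one_apply, one_mul]
    exact unitUniform_congr fun x hx => (mem_iff x hx).trans (and_iff_right hb)
  · rw [indicator_of_notMem hb, zero_mul, ← measure_empty (μ := unitUniform)]
    exact unitUniform_congr fun x hx => (mem_iff x hx).trans (iff_of_false (fun h => hb h.1) id)

lemma unitUniform_cylinder (N : ℕ) (t : ℕ → Set Bool) :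
    unitUniform {x | ∀ i < N, binDigit i x ∈ t i} = ∏ i ∈ Finset.range N, fairCoin (t i) := by
  induction N generalizing t with
  | zero => simp
  | succ N ih =>
    rw [unitUniform_eq_sum_prependDigit, Finset.prod_range_succ', ← ih fun i => t (i + 1),
      fairCoin_apply, Finset.mul_sum]
    refine Finset.sum_congr rfl fun b _ => ?_
    rw [unitUniform_preimage_prependDigit_cylinder]
    ring

lemma map_binDigit_unitUniform :
    unitUniform.map (fun x n => binDigit n x) = Measure.infinitePi fun _ : ℕ => fairCoin := by
  classical
  refine Measure.eq_infinitePi _ fun s t ht => ?_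
  rw [Measure.map_apply (measurable_pi_lambda _ measurable_binDigit)
    (.pi s.countable_toSet fun i _ => ht i)]
  obtain ⟨N, hN⟩ := s.exists_nat_subset_range
  set t' : ℕ → Set Bool := fun i => if i ∈ s then t i else univ
  have preimage_eq : (fun x n => binDigit n x) ⁻¹' (s : Set ℕ).pi t =
      {x | ∀ i < N, binDigit i x ∈ t' i} := by
    ext x
    simp only [mem_preimage, Set.mem_pi, SetLike.mem_coe, mem_ofPred_eq, t', ← Finset.mem_range]
    refine ⟨fun h i _ => ?_, fun h i hi => by simpa [hi] using h i (hN hi)⟩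
    split_ifs with hi
    exacts [h i hi, trivial]
  rw [preimage_eq, unitUniform_cylinder, ← Finset.prod_subset hN fun i _ hi => by
    simp only [t', hi, if_false, measure_univ]]
  exact Finset.prod_congr rfl fun i hi => by simp [t', hi]

/-- The real number in `[0, 1]` with the given sequence of binary digits. -/
noncomputable def ofBits (b : ℕ → Bool) : ℝ := Real.ofDigits fun n => finTwoEquiv.symm (b n)

lemma measurable_ofBits : Measurable ofBits :=
  (Real.continuous_ofDigits.comp (continuous_pi fun n =>
    continuous_of_discreteTopology.comp (continuous_apply n))).measurable

lemma unifSample_eq_ofBits (i : ℕ) (x : ℝ) :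
    unifSample i x = ofBits fun n => binDigit (Nat.pair i n) x := by
  refine tsum_congr fun n => ?_
  cases h : binDigit (Nat.pair i n) x <;> simp [Real.ofDigitsTerm, finTwoEquiv, h]

lemma ofBits_binDigit {x : ℝ} (hx : x ∈ Ico (0 : ℝ) 1) : ofBits (fun n => binDigit n x) = x := by
  have digit_eq (n : ℕ) : finTwoEquiv.symm (binDigit n x) = Real.digits x 2 n := by
    have := hx.1
    rw [binDigit, Real.digits, Nat.cast_ofNat, ← Int.natCast_floor_eq_floor (by positivity),
      Equiv.symm_apply_eq]
    generalize ⌊x * 2 ^ (n + 1)⌋₊ = m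
    rcases Nat.mod_two_eq_zero_or_one m with h | h
    · rw [show Fin.ofNat 2 m = 0 from Fin.ext h]
      exact decide_eq_false (by omega)
    · rw [show Fin.ofNat 2 m = 1 from Fin.ext h]
      exact decide_eq_true (by omega)
  simp only [ofBits, digit_eq]
  exact Real.ofDigits_digits one_lt_two hx

lemma map_ofBits : (Measure.infinitePi fun _ : ℕ => fairCoin).map ofBits = unitUniform := by
  rw [← map_binDigit_unitUniform,
    Measure.map_map measurable_ofBits (measurable_pi_lambda _ measurable_binDigit)]
  refine (Measure.map_congr (g := id) ?_).trans Measure.map_id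
  exact ae_restrict_of_forall_mem measurableSet_Ico fun x hx => ofBits_binDigit hx

/-- The distribution of a coin that is `true` with probability `r`, obtained by comparing `r` with
the uniform sample whose binary digits are given by fair coins. -/
noncomputable def coin (r : ℝ) : Measure Bool :=
  (Measure.infinitePi fun _ : ℕ => fairCoin).map fun b => decide (ofBits b < r)

lemma measurable_decide_ofBits_lt (r : ℝ) : Measurable fun b => decide (ofBits b < r) :=
  measurable_to_bool <| by
    simpa [preimage, decide_eq_true_iff] using measurable_ofBits measurableSet_Iio

instance (r : ℝ) : IsProbabilityMeasure (coin r) :=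
  Measure.isProbabilityMeasure_map (measurable_decide_ofBits_lt r).aemeasurable

lemma coin_singleton_true {r : ℝ} (hr : r ≤ 1) : coin r {true} = ENNReal.ofReal r := by
  rw [coin, Measure.map_apply (measurable_decide_ofBits_lt r) .of_discrete, ← unitUniform_Iio hr,
    ← map_ofBits, Measure.map_apply measurable_ofBits measurableSet_Iio]
  congr 1
  ext b
  simp

lemma coin_singleton_false {r : ℝ} (hr : r ∈ Icc (0 : ℝ) 1) :
    coin r {false} = ENNReal.ofReal (1 - r) := by
  have compl_true : ({false} : Set Bool) = {true}ᶜ := by ext b; cases b <;> simp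
  rw [compl_true, prob_compl_eq_one_sub .of_discrete, coin_singleton_true hr.2,
    ENNReal.ofReal_sub _ hr.1, ENNReal.ofReal_one]

end Digits

section BernoulliProduct

variable {ι : Type*} [Encodable ι] {P : ι → ℝ}

lemma bernoulliProduct_eq_infinitePi (P : ι → ℝ) :
    bernoulliProduct P = Measure.infinitePi fun i => coin (P i) := by
  have pair_injective :
      Function.Injective fun z : ι × ℕ => Nat.pair (Encodable.encode z.1) z.2 :=
    fun z w h => Prod.ext (Encodable.encode_injective (Nat.pair_eq_pair.1 h).1)
      (Nat.pair_eq_pair.1 h).2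
  have measurable_compare :
      Measurable fun (b : ι → ℕ → Bool) i => decide (ofBits (b i) < P i) :=
    measurable_pi_lambda _ fun i =>
      (measurable_decide_ofBits_lt (P i)).comp (measurable_pi_apply i)
  have measurable_regroup : Measurable fun (b : ℕ → Bool) (z : ι × ℕ) =>
      b (Nat.pair (Encodable.encode z.1) z.2) := by fun_prop
  have measurable_curry := (MeasurableEquiv.curry ι ℕ Bool).measurable
  have measurable_digits := measurable_pi_lambda _ measurable_binDigit
  simp only [coin]
  rw [← Measure.infinitePi_map_pi _ fun i => measurable_decide_ofBits_lt (P i),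
    ← Measure.infinitePi_map_curry fun (_ : ι) (_ : ℕ) => fairCoin,
    ← Measure.map_infinitePi_infinitePi_of_inj (P := fun _ : ℕ => fairCoin) pair_injective,
    ← map_binDigit_unitUniform, Measure.map_map measurable_regroup measurable_digits,
    Measure.map_map measurable_curry (measurable_regroup.comp measurable_digits),
    Measure.map_map measurable_compare
      (measurable_curry.comp (measurable_regroup.comp measurable_digits)), bernoulliProduct]
  simp only [unifSample_eq_ofBits]
  rfl

variable [DecidableEq ι]

lemma bernoulliProduct_forall_mem_iff (hP : ∀ e, P e ∈ Icc (0 : ℝ) 1) {F A : Finset ι}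
    (hA : A ⊆ F) :
    bernoulliProduct P {ω | ∀ e ∈ F, ω e = true ↔ e ∈ A} =
      ENNReal.ofReal ((∏ e ∈ A, P e) * ∏ e ∈ F \ A, (1 - P e)) := by
  have eq_pi : {ω : ι → Bool | ∀ e ∈ F, ω e = true ↔ e ∈ A} =
      (F : Set ι).pi fun e => {decide (e ∈ A)} := by
    ext ω
    simp only [mem_ofPred_eq, Set.mem_pi, SetLike.mem_coe, mem_singleton_iff]
    exact forall₂_congr fun e _ => by by_cases h : e ∈ A <;> simp [h]
  rw [eq_pi, bernoulliProduct_eq_infinitePi, Measure.infinitePi_pi _ fun _ _ => .of_discrete,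
    ENNReal.ofReal_mul (Finset.prod_nonneg fun e _ => (hP e).1),
    ENNReal.ofReal_prod_of_nonneg fun e _ => (hP e).1,
    ENNReal.ofReal_prod_of_nonneg fun e _ => sub_nonneg.2 (hP e).2, ← Finset.prod_sdiff hA,
    mul_comm]
  congr 1
  · exact Finset.prod_congr rfl fun e he => by rw [decide_eq_true he, coin_singleton_true (hP e).2]
  · exact Finset.prod_congr rfl fun e he => by
      rw [decide_eq_false (Finset.mem_sdiff.1 he).2, coin_singleton_false (hP e)]

lemma bernoulliProduct_filter_mem_le (hP : ∀ e, P e ∈ Icc (0 : ℝ) 1) (F : Finset ι)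
    (E : Set (Finset ι)) :
    bernoulliProduct P {ω | F.filter (ω · = true) ∈ E} ≤ ENNReal.ofReal (prob P F E) := by
  classical
  have subset_iUnion : {ω : ι → Bool | F.filter (ω · = true) ∈ E} ⊆
      ⋃ A ∈ F.powerset.filter (· ∈ E), {ω | ∀ e ∈ F, ω e = true ↔ e ∈ A} := fun ω hω =>
    mem_biUnion (Finset.mem_filter.2 ⟨Finset.mem_powerset.2 (Finset.filter_subset _ _), hω⟩)
      fun e he => by simp [he]
  have weight_nonneg (A : Finset ι) : 0 ≤ (∏ e ∈ A, P e) * ∏ e ∈ F \ A, (1 - P e) :=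
    mul_nonneg (Finset.prod_nonneg fun e _ => (hP e).1)
      (Finset.prod_nonneg fun e _ => sub_nonneg.2 (hP e).2)
  calc _ ≤ ∑ A ∈ F.powerset.filter (· ∈ E),
        bernoulliProduct P {ω | ∀ e ∈ F, ω e = true ↔ e ∈ A} :=
        (measure_mono subset_iUnion).trans (measure_biUnion_finset_le _ _)
    _ = ∑ A ∈ F.powerset.filter (· ∈ E),
        ENNReal.ofReal ((∏ e ∈ A, P e) * ∏ e ∈ F \ A, (1 - P e)) :=
        Finset.sum_congr rfl fun A hA => bernoulliProduct_forall_mem_iff hP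
          (Finset.mem_powerset.1 (Finset.mem_filter.1 hA).1)
    _ = ENNReal.ofReal (prob P F E) := by
        rw [← ENNReal.ofReal_sum_of_nonneg fun A _ => weight_nonneg A, prob, expect_apply,
          Finset.sum_filter]
        congr 1
        refine Finset.sum_congr rfl fun A _ => ?_
        by_cases hA : A ∈ E <;> simp [hA]

end BernoulliProduct

/-! ### Positivity of the critical value -/

section Transfer

variable {k : ℕ} {p q : ℝ} {ω : Config} {x y : Vtx}

lemma proj_add_dvec_eq_iff (v : Vtx) (i : Fin 3) : proj v = proj (v + dvec i) ↔ i = 2 := by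
  fin_cases i <;> simp [proj, dvec]

lemma dvec_injective : Function.Injective dvec := by
  decide

lemma dvec_add_dvec_ne_zero (i j : Fin 3) : dvec i + dvec j ≠ 0 := by
  decide +revert

/-- The unordered pair of the endpoints of a bond. -/
def bond : EdgeIdx ↪ Sym2 Vtx where
  toFun e := s(e.1, e.1 + dvec e.2)
  inj' := by
    rintro ⟨v, i⟩ ⟨w, j⟩ h
    obtain ⟨rfl, h⟩ | ⟨h, h'⟩ := Sym2.eq_iff.1 h
    · exact Prod.ext rfl (dvec_injective (add_left_cancel h))
    · refine (dvec_add_dvec_ne_zero j i (add_left_cancel (a := w) ?_)).elim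
      rw [add_zero, ← add_assoc, ← h, h']

lemma edgeWeight_bond (p q : ℝ) (e : EdgeIdx) :
    edgeWeight p q (bond e) = if e.2 = 2 then q else p := by
  classical
  exact if_congr (proj_add_dvec_eq_iff e.1 e.2) rfl rfl

lemma slabGraph_adj_add_dvec {v : Vtx} {i : Fin 3} :
    (slabGraph k).Adj v (v + dvec i) ↔ IsEdge k (v, i) := by
  refine and_iff_left ?_
  fin_cases i <;> simp [dvec, proj, squareLattice_adj]

lemma exists_bond_eq (h : (slabGraph k).Adj x y) : ∃ e, bond e = s(x, y) := by
  obtain ⟨i, rfl | rfl⟩ : ∃ i, y = x + dvec i ∨ x = y + dvec i := by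
    simp only [Fin.exists_fin_succ, Prod.ext_iff, dvec, Prod.fst_add, Prod.snd_add]
    obtain ⟨-, ⟨hz, h⟩ | ⟨h, hz⟩⟩ := h
    · rw [squareLattice_adj] at h
      simp only [proj] at h
      simp
      omega
    · obtain ⟨h₁, h₂⟩ := Prod.ext_iff.1 h
      simp only [proj] at h₁ h₂
      simp
      omega
  · exact ⟨(x, i), rfl⟩
  · exact ⟨(y, i), Sym2.eq_swap⟩

lemma openAdj_iff :
    OpenAdj k ω x y ↔ (slabGraph k).Adj x y ∧ ∃ e, bond e = s(x, y) ∧ ω e = true := by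
  constructor
  · rintro ⟨i, ⟨rfl, he, hω⟩ | ⟨rfl, he, hω⟩⟩
    · exact ⟨slabGraph_adj_add_dvec.2 he, _, rfl, hω⟩
    · exact ⟨(slabGraph_adj_add_dvec.2 he).symm, _, Sym2.eq_swap, hω⟩
  · rintro ⟨hxy, ⟨v, i⟩, hvi, hω⟩
    obtain ⟨rfl, rfl⟩ | ⟨rfl, rfl⟩ := Sym2.eq_iff.1 hvi
    · exact ⟨i, Or.inl ⟨rfl, slabGraph_adj_add_dvec.1 hxy, hω⟩⟩
    · exact ⟨i, Or.inr ⟨rfl, slabGraph_adj_add_dvec.1 hxy.symm, hω⟩⟩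

lemma exists_map_bond_eq_edgesIn (k : ℕ) (W : Finset Vtx) :
    ∃ F : Finset EdgeIdx, F.map bond = edgesIn (slabGraph k) W := by
  refine ⟨(edgesIn (slabGraph k) W).preimage bond bond.injective.injOn, ?_⟩
  ext e
  simp only [Finset.mem_map, Finset.mem_preimage]
  refine ⟨fun ⟨_, h, he⟩ => he ▸ h, fun he => ?_⟩
  induction e using Sym2.inductionOn with
  | hf x y =>
    obtain ⟨e, hexy⟩ := exists_bond_eq (mk_mem_edgesIn.1 he).2
    exact ⟨e, hexy ▸ he, hexy⟩

lemma connTo_compl_of_infinite_cluster {W W' : Finset Vtx} {F : Finset EdgeIdx}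
    (hWW' : W ⊆ W') (hadj : ∀ x ∈ W, ∀ y, (slabGraph k).Adj x y → y ∈ W')
    (hF : F.map bond = edgesIn (slabGraph k) W') (hω : (cluster k ω 0).Infinite) :
    ConnTo ((F.filter (ω · = true)).map bond) 0 (W : Set Vtx)ᶜ := by
  by_contra not_connTo
  have mem_of_conn : ∀ x, Conn ((F.filter (ω · = true)).map bond) 0 x → x ∈ W := fun x hx =>
    not_not.1 fun hxW => not_connTo ⟨x, hxW, hx⟩
  refine hω (W.finite_toSet.subset fun x hx => mem_of_conn x ?_)
  induction hx with
  | refl => exact Conn.refl _ _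
  | @tail x y _ hxy hx =>
    obtain ⟨hadj_xy, e, he, heω⟩ := openAdj_iff.1 hxy
    have heF : bond e ∈ F.map bond := by
      rw [hF, he, mk_mem_edgesIn]
      exact ⟨⟨hWW' (mem_of_conn x hx), hadj x (mem_of_conn x hx) y hadj_xy⟩, hadj_xy⟩
    refine hx.trans (Conn.single (he ▸ Finset.mem_map_of_mem bond ?_))
    exact Finset.mem_filter.2 ⟨(Finset.mem_map' bond).1 heF, heω⟩

lemma theta_le_prob_connTo_compl (hp : p ∈ Icc (0 : ℝ) 1) (hq : q ∈ Icc (0 : ℝ) 1)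
    {W W' : Finset Vtx} (hWW' : W ⊆ W')
    (hadj : ∀ x ∈ W, ∀ y, (slabGraph k).Adj x y → y ∈ W') :
    theta k p q ≤ ENNReal.ofReal (prob (edgeWeight p q) (edgesIn (slabGraph k) W')
      {ω | ConnTo ω 0 (W : Set Vtx)ᶜ}) := by
  classical
  obtain ⟨F, hF⟩ := exists_map_bond_eq_edgesIn k W'
  rw [← hF, prob, expect_map]
  have weight_eq : edgeWeight p q ∘ bond = fun e => if e.2 = 2 then q else p :=
    funext (edgeWeight_bond p q)
  rw [theta, slabMeasure, ← weight_eq]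
  refine (measure_mono fun ω hω => ?_).trans
    (bernoulliProduct_filter_mem_le (fun e => edgeWeight_mem_Icc hp hq (bond e)) F
      {A | ConnTo (A.map bond) 0 (W : Set Vtx)ᶜ})
  exact connTo_compl_of_infinite_cluster hWW' hadj hF hω

end Transfer

lemma exists_theta_eq_zero (k : ℕ) {p : ℝ} (hp₀ : 0 ≤ p) (hp : p < 1 / 2) :
    ∃ q : ℝ, 0 < q ∧ q ≤ 1 ∧ theta k p q = 0 := by
  obtain ⟨q, hq₀, hq₁, small⟩ := exists_forall_exists_prob_connTo_le hp₀ hp k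
  refine ⟨q, hq₀, hq₁, nonpos_iff_eq_zero.1 (ENNReal.le_of_forall_pos_le_add fun ε hε _ => ?_)⟩
  obtain ⟨n, hn⟩ := small ε hε
  rw [zero_add, ← ENNReal.ofReal_coe_nnreal]
  refine (theta_le_prob_connTo_compl ⟨hp₀, by linarith⟩ ⟨hq₀.le, hq₁⟩
    (cylinder_subset_cylinder (box_subset_box (by simp) (by simp)) k) fun x hx y hxy => ?_).trans
    (ENNReal.ofReal_le_ofReal hn)
  rw [← add_sub_cancel_right n 1] at hx
  exact mem_cylinder.2 ⟨proj_mem_box_of_adj (mem_cylinder.1 hx).1 hxy, hxy.1.2⟩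

lemma pCrit_nonneg (k : ℕ) : 0 ≤ pCrit k :=
  sub_nonneg.2 (Real.rpow_le_one (by norm_num) (by norm_num) (by positivity))

theorem qc_pos_general (k : ℕ) {p : ℝ} (hp₀ : 0 ≤ p) (hp : p < 1 / 2) : 0 < qc k p := by
  obtain ⟨q, hq₀, hq₁, theta_eq_zero⟩ := exists_theta_eq_zero k hp₀ hp
  exact hq₀.trans_le (le_csSup ⟨1, fun r hr => hr.1.2⟩ ⟨⟨hq₀.le, hq₁⟩, theta_eq_zero⟩)

/-- For every `p ∈ [p_k, 1/2)`, the critical value `q_c(p)` is strictly positive. -/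
theorem qc_pos (k : ℕ) (p : ℝ) (hp : p ∈ Set.Ico (pCrit k) (1 / 2)) :
    0 < qc k p :=
  qc_pos_general k ((pCrit_nonneg k).trans hp.1) hp.2

end AnisoSlab
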